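/- arXiv:2411.07000 — 3 statements merged into one kernel-verified Lean document; each statement's English description precedes it below -/
import Mathlib

section
/- Let G be a finite simple connected graph of order n ≥ 3 with maximum degree Δ(G). If G is not isomorphic to any of the four graphs C₄, K₄, C₆, K₃,₃, then the distinguishing chromatic number of the middle graph of G satisfies χ_D(M(G)) = Δ(G) + 1. -/
open SimpleGraph

/-- The middle graph `M(G)`: vertices are `V(G) ⊕ E(G)`; two edges are adjacent
iff they are distinct and share an endpoint; a vertex and an edge are adjacent
iff the vertex is incident to the edge. -/
def middleGraph {V : Type*} (G : SimpleGraph V) : SimpleGraph (V ⊕ G.edgeSet) :=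
  SimpleGraph.fromRel fun x y =>
    match x, y with
    | Sum.inr e, Sum.inr f => e ≠ f ∧ ∃ v, v ∈ (e : Sym2 V) ∧ v ∈ (f : Sym2 V)
    | Sum.inl v, Sum.inr e => v ∈ (e : Sym2 V)
    | _, _ => False

/-- The subdivision graph `S(G)`: vertices are `V(G) ⊕ E(G)`; `v ∈ V(G)` and
`e ∈ E(G)` are adjacent iff `v` is incident to `e`. -/
def subdivisionGraph {V : Type*} (G : SimpleGraph V) : SimpleGraph (V ⊕ G.edgeSet) :=
  SimpleGraph.fromRel fun x y =>
    match x, y with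
    | Sum.inl v, Sum.inr e => v ∈ (e : Sym2 V)
    | _, _ => False

/-- The endline graph `G⁺`: to each vertex `v` of `G` (coded `Sum.inl v`) we attach a new
pendant vertex (coded `Sum.inr v`) via a new (endline) edge. -/
def endlineGraph {V : Type*} (G : SimpleGraph V) : SimpleGraph (V ⊕ V) :=
  SimpleGraph.fromRel fun x y =>
    match x, y with
    | Sum.inl u, Sum.inl v => G.Adj u v
    | Sum.inl v, Sum.inr u => v = u
    | _, _ => False

/-- A vertex coloring is distinguishing if the only automorphism preserving it is the identity. -/
def IsDistinguishingVertexColoring {V α : Type*} (G : SimpleGraph V) (c : V → α) : Prop :=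
  ∀ φ : G ≃g G, (∀ v, c (φ v) = c v) → ∀ v, φ v = v

/-- A proper vertex coloring assigns different colors to adjacent vertices. -/
def IsProperVertexColoring {V α : Type*} (G : SimpleGraph V) (c : V → α) : Prop :=
  ∀ u v, G.Adj u v → c u ≠ c v

/-- The distinguishing number `D(G)`. -/
noncomputable def distinguishingNumber {V : Type*} (G : SimpleGraph V) : ℕ :=
  sInf {r | ∃ c : V → Fin r, IsDistinguishingVertexColoring G c}

/-- The distinguishing chromatic number `χ_D(G)`. -/
noncomputable def distinguishingChromaticNumber {V : Type*} (G : SimpleGraph V) : ℕ :=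
  sInf {r | ∃ c : V → Fin r,
    IsProperVertexColoring G c ∧ IsDistinguishingVertexColoring G c}

/-- An edge coloring is distinguishing if the only automorphism preserving it is the identity. -/
def IsDistinguishingEdgeColoring {V α : Type*} (G : SimpleGraph V) (c : G.edgeSet → α) : Prop :=
  ∀ φ : G ≃g G, (∀ e, c (φ.mapEdgeSet e) = c e) → ∀ v, φ v = v

/-- A proper edge coloring assigns different colors to distinct edges sharing an endpoint. -/
def IsProperEdgeColoring {V α : Type*} (G : SimpleGraph V) (c : G.edgeSet → α) : Prop :=
  ∀ e f : G.edgeSet, e ≠ f → (∃ v, v ∈ (e : Sym2 V) ∧ v ∈ (f : Sym2 V)) → c e ≠ c f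

/-- The distinguishing index `D'(G)`. -/
noncomputable def distinguishingIndex {V : Type*} (G : SimpleGraph V) : ℕ :=
  sInf {r | ∃ c : G.edgeSet → Fin r, IsDistinguishingEdgeColoring G c}

/-- The distinguishing chromatic index `χ'_D(G)`. -/
noncomputable def distinguishingChromaticIndex {V : Type*} (G : SimpleGraph V) : ℕ :=
  sInf {r | ∃ c : G.edgeSet → Fin r,
    IsProperEdgeColoring G c ∧ IsDistinguishingEdgeColoring G c}

/-- The total distinguishing number `D''(G)`: the least `d` such that there is a (not
necessarily proper) coloring of vertices and edges with `d` colors preserved only by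
the identity automorphism. -/
noncomputable def totalDistinguishingNumber {V : Type*} (G : SimpleGraph V) : ℕ :=
  sInf {d | ∃ (cV : V → Fin d) (cE : G.edgeSet → Fin d),
    ∀ φ : G ≃g G,
      ((∀ v, cV (φ v) = cV v) ∧ (∀ e, cE (φ.mapEdgeSet e) = cE e)) → ∀ v, φ v = v}


namespace DMG

open Classical in
noncomputable def dg {V : Type*} [Fintype V] (H : SimpleGraph V) (v : V) : ℕ :=
  (Finset.univ.filter (fun w => H.Adj v w)).card

def EC {V α : Type*} (H : SimpleGraph V) (C : V → V → α) : Prop :=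
  (∀ u v, H.Adj u v → C u v = C v u) ∧
    ∀ u v w, H.Adj u v → H.Adj u w → C u v = C u w → v = w

def Miss {V α : Type*} (H : SimpleGraph V) (C : V → V → α) (v : V) (a : α) : Prop :=
  ∀ w, H.Adj v w → C v w ≠ a

section basic
variable {V α : Type*} [Fintype V] [Fintype α] {H : SimpleGraph V} {C : V → V → α}

open Classical in
theorem image_card (hC : EC H C) (v : V) :
    ((Finset.univ.filter (fun w => H.Adj v w)).image (C v)).card = dg H v := by
  rw [dg, Finset.card_image_of_injOn]
  intro a ha b hb hab
  simp at ha hb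
  exact hC.2 v a b ha hb hab

open Classical in
theorem miss_iff (v : V) (a : α) :
    Miss H C v a ↔ a ∉ ((Finset.univ.filter (fun w => H.Adj v w)).image (C v)) := by
  simp [Miss]

open Classical in
theorem miss_card (hC : EC H C) (v : V) :
    (Finset.univ.filter (fun a => Miss H C v a)).card + dg H v = Fintype.card α := by
  have h := Finset.card_compl ((Finset.univ.filter (fun w => H.Adj v w)).image (C v))
  have h2 : (Finset.univ.filter (fun a => Miss H C v a)) =
      ((Finset.univ.filter (fun w => H.Adj v w)).image (C v))ᶜ := by
    ext a; rw [Finset.mem_filter, Finset.mem_compl, miss_iff]; simp only [Finset.mem_univ, true_and]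
  have h3 := Finset.card_le_univ ((Finset.univ.filter (fun w => H.Adj v w)).image (C v))
  rw [h2, h]
  rw [image_card hC] at h3 ⊢
  omega

theorem exists_miss (hC : EC H C) (v : V) (h : dg H v < Fintype.card α) :
    ∃ a, Miss H C v a := by
  classical
  have := miss_card hC v
  have h2 : 0 < (Finset.univ.filter (fun a => Miss H C v a)).card := by
    convert (by omega : 0 < Fintype.card α - dg H v) using 1
    rw [← this]; simp; 
  obtain ⟨a, ha⟩ := Finset.card_pos.1 h2
  exact ⟨a, by simpa using ha⟩

theorem exists_two_miss (hC : EC H C) (v : V) (h : dg H v + 1 < Fintype.card α) :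
    ∃ a b, a ≠ b ∧ Miss H C v a ∧ Miss H C v b := by
  classical
  have := miss_card hC v
  obtain ⟨a, ha, b, hb, hab⟩ := Finset.one_lt_card.1
    (show 1 < (Finset.univ.filter (fun a => Miss H C v a)).card by
      have := miss_card hC v
      convert (by omega : 1 < Fintype.card α - dg H v) using 1
      rw [← this]; simp)
  exact ⟨a, b, hab, by simpa using ha, by simpa using hb⟩

theorem miss_unique (hC : EC H C) (v : V) (h : dg H v + 1 = Fintype.card α) {a b : α}
    (ha : Miss H C v a) (hb : Miss H C v b) : a = b := by
  classical
  have := miss_card hC v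
  have h1 : (Finset.univ.filter (fun a => Miss H C v a)).card ≤ 1 := by
    have h2 : (Finset.univ.filter (fun a => Miss H C v a)).card = Fintype.card α - dg H v := by
      rw [← this]; simp
    omega
  exact Finset.card_le_one.1 h1 a (by simpa using ha) b (by simpa using hb)

theorem full (hC : EC H C) (v : V) (h : dg H v = Fintype.card α) (a : α) :
    ∃ w, H.Adj v w ∧ C v w = a := by
  classical
  by_contra hc
  have hm : Miss H C v a := fun w hw h' => hc ⟨w, hw, h'⟩
  have := miss_card hC v
  have h2 : (Finset.univ.filter (fun a => Miss H C v a)).card = Fintype.card α - dg H v := by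
      rw [← this]; simp
  rw [h, Nat.sub_self, Finset.card_eq_zero] at h2
  have : a ∈ (Finset.univ.filter (fun a => Miss H C v a)) := by simpa using hm
  rw [h2] at this; simp at this

end basic

section kempe
variable {V α : Type*} {H : SimpleGraph V} {C : V → V → α}

open Classical in
noncomputable def ks (C : V → V → α) (a b : α) (S : Set V) (u v : V) : α :=
  if u ∈ S then Equiv.swap a b (C u v) else C u v

theorem ks_EC (hC : EC H C) (a b : α) (S : Set V)
    (hS : ∀ u v, H.Adj u v → (C u v = a ∨ C u v = b) → u ∈ S → v ∈ S) :
    EC H (ks C a b S) := by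
  classical
  constructor
  · intro u v h
    have e := hC.1 u v h
    have h1 := hS u v h
    have h2 := hS v u h.symm
    rw [← e] at h2
    unfold ks
    rw [← e]
    by_cases hu : u ∈ S <;> by_cases hv : v ∈ S <;> simp only [hu, hv, if_true, if_false]
    · rw [Equiv.swap_apply_of_ne_of_ne] <;> intro h' <;> exact hv (h1 (by simp [h']) hu)
    · rw [Equiv.swap_apply_of_ne_of_ne] <;> intro h' <;> exact hu (h2 (by simp [h']) hv)
  · intro u v w h1 h2 h3
    apply hC.2 u v w h1 h2
    unfold ks at h3
    split_ifs at h3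
    · exact (Equiv.swap a b).injective h3
    · exact h3

open Classical in
theorem ks_miss_in (a b : α) (S : Set V) {v : V} (hv : v ∈ S) (c : α) :
    Miss H (ks C a b S) v c ↔ Miss H C v (Equiv.swap a b c) := by
  have : ∀ w, ks C a b S v w = c ↔ C v w = Equiv.swap a b c := by
    intro w
    simp only [ks, hv, if_true]
    rw [← Equiv.eq_symm_apply, Equiv.symm_swap]
  simp only [Miss, ne_eq, this]

theorem ks_miss_out (a b : α) (S : Set V) {v : V} (hv : v ∉ S) (c : α) :
    Miss H (ks C a b S) v c ↔ Miss H C v c := by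
  simp [Miss, ks, hv]

def kg (H : SimpleGraph V) (C : V → V → α) (hC : EC H C) (a b : α) : SimpleGraph V where
  Adj u v := H.Adj u v ∧ (C u v = a ∨ C u v = b)
  symm := ⟨fun u v h => ⟨h.1.symm, by rw [← hC.1 u v h.1]; exact h.2⟩⟩
  loopless := ⟨fun u h => H.loopless.irrefl u h.1⟩

theorem three_ends [Fintype V] (K : SimpleGraph V) (h2 : ∀ v, dg K v ≤ 2) (p q r : V)
    (hpq : p ≠ q) (hpr : p ≠ r) (hqr : q ≠ r) (dp : dg K p ≤ 1) (dq : dg K q ≤ 1)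
    (dr : dg K r ≤ 1) (h1 : K.Reachable p q) (h3 : K.Reachable p r) : False := by
  classical
  let c := K.connectedComponentMk p
  have hcon : c.toSimpleGraph.Connected := c.connected_toSimpleGraph
  have hE := hcon.card_vert_le_card_edgeSet_add_one
  have hs := c.toSimpleGraph.sum_degrees_eq_twice_card_edges
  have hdeg : ∀ v : c, c.toSimpleGraph.degree v ≤ dg K v := by
    intro v
    rw [dg, ← SimpleGraph.card_neighborFinset_eq_degree]
    apply Finset.card_le_card_of_injOn (fun x : c => (x : V))
    · intro x hx
      simp at hx ⊢
      exact hx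
    · intro x _ y _ h
      exact Subtype.ext h
  have hq : q ∈ c := by
    show K.connectedComponentMk q = c
    exact (SimpleGraph.ConnectedComponent.sound h1).symm
  have hr : r ∈ c := by
    show K.connectedComponentMk r = c
    exact (SimpleGraph.ConnectedComponent.sound h3).symm
  have hp : p ∈ c := rfl
  let P : c := ⟨p, hp⟩
  let Q : c := ⟨q, hq⟩
  let R : c := ⟨r, hr⟩
  have hle : ∑ v : c, (c.toSimpleGraph.degree v + (if v = P then 1 else 0) +
      (if v = Q then 1 else 0) + (if v = R then 1 else 0)) ≤ ∑ v : c, 2 := by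
    apply Finset.sum_le_sum
    intro v _
    have := hdeg v
    have := h2 v
    by_cases hP : v = P
    · have : v ≠ Q := by rw [hP]; intro h; exact hpq (congrArg Subtype.val h)
      have : v ≠ R := by rw [hP]; intro h; exact hpr (congrArg Subtype.val h)
      have : dg K v = dg K p := by rw [hP]
      rw [if_pos hP, if_neg ‹v ≠ Q›, if_neg ‹v ≠ R›]; omega
    · by_cases hQ : v = Q
      · have : v ≠ R := by rw [hQ]; intro h; exact hqr (congrArg Subtype.val h)
        have : dg K v = dg K q := by rw [hQ]
        rw [if_neg hP, if_pos hQ, if_neg ‹v ≠ R›]; omega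
      · by_cases hR : v = R
        · have : dg K v = dg K r := by rw [hR]
          rw [if_neg hP, if_neg hQ, if_pos hR]; omega
        · rw [if_neg hP, if_neg hQ, if_neg hR]; omega
  simp only [Finset.sum_add_distrib, hs] at hle
  simp at hle
  simp only [Nat.card_eq_fintype_card, ← SimpleGraph.edgeFinset_card] at hE
  omega
end kempe
end DMG

namespace DMG
section fan
variable {V α : Type*} {H H0 : SimpleGraph V} {C : V → V → α} {x y : V}

theorem star (hH0 : ∀ u v, H0.Adj u v ↔ H.Adj u v ∧ ¬((u = x ∧ v = y) ∨ (u = y ∧ v = x)))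
    (hC : EC H0 C) (Z : Set V) (hZ : ∀ z ∈ Z, H.Adj x z) (hy : y ∈ Z) (g : V → α)
    (hg : ∀ z ∈ Z, Miss H0 C z (g z)) (ginj : Set.InjOn g Z)
    (hd : ∀ z ∈ Z, ∀ w, H0.Adj x w → w ∉ Z → g z ≠ C x w) :
    ∃ C' : V → V → α, EC H C' := by
  classical
  have hx : x ∉ Z := fun h => (hZ x h).ne rfl
  refine ⟨fun u v => if u = x ∧ v ∈ Z then g v else if v = x ∧ u ∈ Z then g u else C u v, ?_, ?_⟩
  · intro u v huv
    by_cases h1 : u = x ∧ v ∈ Z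
    · have h2 : ¬ (v = x ∧ u ∈ Z) := by rintro ⟨rfl, -⟩; exact hx h1.2
      simp only [if_pos h1, if_neg h2]
    · by_cases h2 : v = x ∧ u ∈ Z
      · simp only [if_neg h1, if_pos h2]
      · simp only [if_neg h1, if_neg h2]
        apply hC.1
        rw [hH0]
        refine ⟨huv, ?_⟩
        rintro (⟨rfl, rfl⟩ | ⟨rfl, rfl⟩)
        · exact h1 ⟨rfl, hy⟩
        · exact h2 ⟨rfl, hy⟩
  · intro u v w huv huw h
    have key : ∀ v, H.Adj x v → v ∉ Z → H0.Adj x v := by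
      intro v hv hvZ
      rw [hH0]
      refine ⟨hv, ?_⟩
      rintro (⟨-, rfl⟩ | ⟨rfl, rfl⟩)
      · exact hvZ hy
      · exact hx hy
    by_cases hu : u = x
    · subst hu
      simp only [true_and, hx, and_false, if_false] at h
      by_cases hv : v ∈ Z <;> by_cases hw : w ∈ Z <;> simp only [hv, hw, if_true, if_false] at h
      · exact ginj hv hw h
      · exact absurd h (hd v hv w (key w huw hw) hw)
      · exact absurd h.symm (hd w hw v (key v huv hv) hv)
      · exact hC.2 u v w (key v huv hv) (key w huw hw) h
    · simp only [hu, false_and, if_false] at h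
      have key2 : ∀ v, H.Adj u v → ¬ (v = x ∧ u ∈ Z) → H0.Adj u v := by
        intro v hv hn
        rw [hH0]
        refine ⟨hv, ?_⟩
        rintro (⟨rfl, -⟩ | ⟨rfl, rfl⟩)
        · exact hu rfl
        · exact hn ⟨rfl, hy⟩
      by_cases hv : v = x ∧ u ∈ Z <;> by_cases hw : w = x ∧ u ∈ Z
      · rw [hv.1, hw.1]
      · rw [if_pos hv, if_neg hw] at h
        exact absurd h.symm (hg u hv.2 w (key2 w huw hw))
      · rw [if_neg hv, if_pos hw] at h
        exact absurd h (hg u hw.2 v (key2 v huv hv))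
      · rw [if_neg hv, if_neg hw] at h
        exact hC.2 u v w (key2 v huv hv) (key2 w huw hw) h

theorem fanShift (hH0 : ∀ u v, H0.Adj u v ↔ H.Adj u v ∧ ¬((u = x ∧ v = y) ∨ (u = y ∧ v = x)))
    (hxy : H.Adj x y) (hC : EC H0 C) (f : V → α) (s : ℕ → V) (p : ℕ) (s0 : s 0 = y)
    (sinj : ∀ i j, i ≤ p → j ≤ p → s i = s j → i = j)
    (hadj : ∀ i < p, H0.Adj x (s (i+1)))
    (hcol : ∀ i < p, C x (s (i+1)) = f (s i))
    (hmiss : ∀ i < p, Miss H0 C (s i) (f (s i)))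
    (γ : α) (h1 : Miss H0 C (s p) γ) (h2 : Miss H0 C x γ) : ∃ C' : V → V → α, EC H C' := by
  classical
  let g : V → α := fun z => if z = s p then γ else f z
  have gp : g (s p) = γ := by simp [g]
  have gl : ∀ i < p, g (s i) = f (s i) := by
    intro i hi
    simp only [g]
    rw [if_neg]
    intro h
    have := sinj i p hi.le le_rfl h
    omega
  have gne : ∀ i < p, f (s i) ≠ γ := by
    intro i hi h
    exact h2 _ (hadj i hi) ((hcol i hi).trans h)
  apply star hH0 hC {z | ∃ i ≤ p, s i = z} _ ⟨0, Nat.zero_le _, s0⟩ g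
  · rintro z ⟨i, hi, rfl⟩
    rcases hi.lt_or_eq with h | rfl
    · rw [gl i h]; exact hmiss i h
    · rw [gp]; exact h1
  · rintro _ ⟨i, hi, rfl⟩ _ ⟨j, hj, rfl⟩ h
    rcases hi.lt_or_eq with hi' | rfl <;> rcases hj.lt_or_eq with hj' | rfl
    · rw [gl i hi', gl j hj', ← hcol i hi', ← hcol j hj'] at h
      have := sinj _ _ (by omega) (by omega) (hC.2 _ _ _ (hadj i hi') (hadj j hj') h)
      have : i = j := by omega
      rw [this]
    · rw [gl i hi', gp] at h
      exact absurd h (gne i hi')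
    · rw [gl j hj', gp] at h
      exact absurd h.symm (gne j hj')
    · rfl
  · rintro _ ⟨i, hi, rfl⟩ w hw hwZ h
    rcases hi.lt_or_eq with hi' | rfl
    · rw [gl i hi', ← hcol i hi'] at h
      exact hwZ ⟨i+1, hi', hC.2 _ _ _ (hadj i hi') hw h⟩
    · rw [gp] at h
      exact h2 w hw h.symm
  · rintro z ⟨i, hi, rfl⟩
    cases i with
    | zero => rw [s0]; exact hxy
    | succ i => exact ((hH0 _ _).1 (hadj i hi)).1

theorem fanSwap (hH0 : ∀ u v, H0.Adj u v ↔ H.Adj u v ∧ ¬((u = x ∧ v = y) ∨ (u = y ∧ v = x)))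
    (hxy : H.Adj x y) (hC : EC H0 C) (f : V → α) (s : ℕ → V) (p : ℕ) (s0 : s 0 = y)
    (sinj : ∀ i j, i ≤ p → j ≤ p → s i = s j → i = j)
    (hadj : ∀ i < p, H0.Adj x (s (i+1)))
    (hcol : ∀ i < p, C x (s (i+1)) = f (s i))
    (hmiss : ∀ i ≤ p, Miss H0 C (s i) (f (s i)))
    (a : α) (h2 : Miss H0 C x a)
    (hr : ¬ (kg H0 C hC a (f (s p))).Reachable (s p) x)
    (hb : ∀ i < p, (kg H0 C hC a (f (s p))).Reachable (s p) (s i) → f (s i) ≠ f (s p)) :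
    ∃ C' : V → V → α, EC H C' := by
  classical
  let S : Set V := {v | (kg H0 C hC a (f (s p))).Reachable (s p) v}
  have hx : x ∉ S := hr
  have hC' : EC H0 (ks C a (f (s p)) S) := by
    apply ks_EC hC
    intro u v h1 h2 h3
    exact SimpleGraph.Reachable.trans h3 (SimpleGraph.Adj.reachable ⟨h1, h2⟩)
  have kx : ∀ w, ks C a (f (s p)) S x w = C x w := by intro w; simp only [ks, hx, if_false]
  refine fanShift hH0 hxy hC' f s p s0 sinj hadj ?_ ?_ a ?_ ?_
  · intro i hi; rw [kx]; exact hcol i hi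
  · intro i hi
    by_cases h : s i ∈ S
    · rw [ks_miss_in _ _ _ h, Equiv.swap_apply_of_ne_of_ne]
      · exact hmiss i hi.le
      · rw [← hcol i hi]; exact h2 _ (hadj i hi)
      · exact hb i hi h
    · rw [ks_miss_out _ _ _ h]; exact hmiss i hi.le
  · rw [ks_miss_in]
    · rw [Equiv.swap_apply_left]; exact hmiss p le_rfl
    · exact SimpleGraph.Reachable.refl _
  · rw [ks_miss_out _ _ _ hx]; exact h2

theorem kg_dg_le [Fintype V] (hC : EC H0 C) (a b : α) (v : V) : dg (kg H0 C hC a b) v ≤ 2 := by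
  classical
  have : dg (kg H0 C hC a b) v ≤ ({a, b} : Finset α).card := by
    unfold dg
    apply Finset.card_le_card_of_injOn (C v)
    · intro w hw
      simp only [Finset.coe_filter, Finset.mem_univ, true_and, Set.mem_ofPred_eq] at hw
      simpa using hw.2
    · intro u hu w hw h
      simp only [Finset.coe_filter, Finset.mem_univ, true_and, Set.mem_ofPred_eq] at hu hw
      exact hC.2 v u w hu.1 hw.1 h
  exact this.trans Finset.card_le_two

theorem kg_dg_le_one [Fintype V] (hC : EC H0 C) (a b : α) (v : V)
    (h : Miss H0 C v a ∨ Miss H0 C v b) : dg (kg H0 C hC a b) v ≤ 1 := by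
  classical
  unfold dg
  rw [Finset.card_le_one]
  intro u hu w hw
  simp only [Finset.mem_filter, Finset.mem_univ, true_and] at hu hw
  apply hC.2 v u w hu.1 hw.1
  rcases h with h | h
  · rw [hu.2.resolve_left (h u hu.1), hw.2.resolve_left (h w hw.1)]
  · rw [hu.2.resolve_right (h u hu.1), hw.2.resolve_right (h w hw.1)]

theorem fan [Fintype V]
    (hH0 : ∀ u v, H0.Adj u v ↔ H.Adj u v ∧ ¬((u = x ∧ v = y) ∨ (u = y ∧ v = x)))
    (hxy : H.Adj x y) (hC : EC H0 C) (hx : ∃ a, Miss H0 C x a)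
    (hz : ∀ z, H.Adj x z → ∃ a, Miss H0 C z a) : ∃ C' : V → V → α, EC H C' := by
  classical
  obtain ⟨a, ha⟩ := hx
  have hf : ∀ z, ∃ b, H.Adj x z → Miss H0 C z b := by
    intro z
    by_cases h : H.Adj x z
    · obtain ⟨b, hb⟩ := hz z h; exact ⟨b, fun _ => hb⟩
    · exact ⟨a, fun h' => absurd h' h⟩
  choose f hf using hf
  have hn : ∀ z, ∃ w, ¬ Miss H0 C x (f z) → H0.Adj x w ∧ C x w = f z := by
    intro z
    by_cases h : Miss H0 C x (f z)
    · exact ⟨z, fun h' => absurd h h'⟩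
    · unfold Miss at h
      push Not at h
      obtain ⟨w, hw⟩ := h
      exact ⟨w, fun _ => hw⟩
  choose nx hnx using hn
  let s : ℕ → V := fun n => nx^[n] y
  have s0 : s 0 = y := rfl
  have ss : ∀ n, s (n+1) = nx (s n) := fun n => Function.iterate_succ_apply' nx n y
  have sadd : ∀ i j k, s i = s j → s (i + k) = s (j + k) := by
    intro i j k h
    induction k with
    | zero => exact h
    | succ k ih => rw [← add_assoc, ← add_assoc, ss, ss, ih]
  by_cases hcase : ∃ p, Miss H0 C x (f (s p))
  · have hp := Nat.find_spec hcase
    have hmin : ∀ i < Nat.find hcase, ¬ Miss H0 C x (f (s i)) := fun i hi => Nat.find_min hcase hi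
    generalize Nat.find hcase = p at hp hmin
    have hadj : ∀ i < p, H0.Adj x (s (i+1)) := by
      intro i hi; rw [ss]; exact (hnx _ (hmin i hi)).1
    have hH : ∀ i ≤ p, H.Adj x (s i) := by
      intro i hi
      cases i with
      | zero => exact hxy
      | succ i => exact ((hH0 _ _).1 (hadj i hi)).1
    have key : ∀ i j, i < j → j ≤ p → s i ≠ s j := by
      intro i j hij hj h
      have := sadd i j (p - j) h
      rw [Nat.add_sub_cancel' hj] at this
      apply hmin (i + (p - j)) (by omega)
      rw [this]; exact hp
    apply fanShift hH0 hxy hC f s p s0 _ hadj _ _ (f (s p)) (hf _ (hH p le_rfl)) hp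
    · intro i j hi hj h
      rcases lt_trichotomy i j with h' | h' | h'
      · exact absurd h (key i j h' hj)
      · exact h'
      · exact absurd h.symm (key j i h' hi)
    · intro i hi; rw [ss]; exact (hnx _ (hmin i hi)).2
    · intro i hi; exact hf _ (hH i hi.le)
  · push Not at hcase
    have hadj : ∀ i, H0.Adj x (s (i+1)) := by
      intro i; rw [ss]; exact (hnx _ (hcase i)).1
    have hcol : ∀ i, C x (s (i+1)) = f (s i) := by
      intro i; rw [ss]; exact (hnx _ (hcase i)).2
    have hH : ∀ i, H.Adj x (s i) := by
      intro i
      cases i with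
      | zero => exact hxy
      | succ i => exact ((hH0 _ _).1 (hadj i)).1
    have hex : ∃ j, ∃ i < j, s i = s j := by
      obtain ⟨i, j, hij, h⟩ := Finite.exists_ne_map_eq_of_infinite s
      rcases lt_or_gt_of_ne hij with h' | h'
      · exact ⟨j, i, h', h⟩
      · exact ⟨i, j, h', h.symm⟩
    obtain ⟨i, hij, hsij⟩ := Nat.find_spec hex
    have hmin : ∀ j < Nat.find hex, ¬ ∃ i < j, s i = s j := fun i hi => Nat.find_min hex hi
    generalize Nat.find hex = j at hij hsij hmin
    have sinj : ∀ k l, k < j → l < j → s k = s l → k = l := by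
      intro k l hk hl h
      rcases lt_trichotomy k l with h' | h' | h'
      · exact absurd ⟨k, h', h⟩ (hmin l hl)
      · exact h'
      · exact absurd ⟨l, h', h.symm⟩ (hmin k hk)
    obtain ⟨j, rfl⟩ : ∃ j', j = j' + 1 := ⟨j - 1, by omega⟩
    cases i with
    | zero =>
      have := hadj j
      rw [← hsij, s0, hH0] at this
      exact absurd (Or.inl ⟨rfl, rfl⟩) this.2
    | succ i =>
      have hβ : f (s i) = f (s j) := by rw [← hcol, ← hcol, hsij]
      have hne : s i ≠ s j := by
        intro h
        have := sinj i j (by omega) (by omega) h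
        omega
      have hk := kg_dg_le hC a (f (s j))
      have hxi := (hH i).ne
      have hxj := (hH j).ne
      by_cases hr : (kg H0 C hC a (f (s j))).Reachable x (s i)
      · have hr2 : ¬ (kg H0 C hC a (f (s j))).Reachable x (s j) := by
          intro h
          exact three_ends _ hk x (s i) (s j) hxi hxj hne
            (kg_dg_le_one hC _ _ _ (Or.inl ha))
            (kg_dg_le_one hC _ _ _ (Or.inr (by rw [← hβ]; exact hf _ (hH i))))
            (kg_dg_le_one hC _ _ _ (Or.inr (hf _ (hH j)))) hr h
        apply fanSwap hH0 hxy hC f s j s0 _ (fun k _ => hadj k) (fun k _ => hcol k)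
          (fun k _ => hf _ (hH k)) a ha (fun h => hr2 h.symm)
        · intro k hk hrk h
          have h1 : s (k+1) = s (i+1) := by
            apply hC.2 x _ _ (hadj k) (hadj i)
            rw [hcol, hcol, h, hβ]
          have := sinj _ _ (by omega) (by omega) h1
          have hki : k = i := by omega
          subst hki
          exact hr2 (hr.trans hrk.symm)
        · intro k l hk hl; exact sinj k l (by omega) (by omega)
      · rw [← hβ] at hr
        apply fanSwap hH0 hxy hC f s i s0 _ (fun k _ => hadj k) (fun k _ => hcol k)
          (fun k _ => hf _ (hH k)) a ha (fun h => hr h.symm)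
        · intro k hk hrk h
          have h1 : s (k+1) = s (i+1) := by
            apply hC.2 x _ _ (hadj k) (hadj i)
            rw [hcol, hcol, h]
          have := sinj _ _ (by omega) (by omega) h1
          omega
        · intro k l hk hl; exact sinj k l (by omega) (by omega)
end fan
end DMG

namespace DMG
section fournier
variable {V : Type*} [Fintype V]

theorem dg_mono {H K : SimpleGraph V} (h : H ≤ K) (v : V) : dg H v ≤ dg K v := by
  classical
  unfold dg
  apply Finset.card_le_card
  intro w hw
  simp only [Finset.mem_filter, Finset.mem_univ, true_and] at hw ⊢
  exact h hw

theorem dg_lt {H K : SimpleGraph V} (h : H ≤ K) {v w : V} (h1 : K.Adj v w) (h2 : ¬ H.Adj v w) :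
    dg H v < dg K v := by
  classical
  unfold dg
  apply Finset.card_lt_card
  refine Finset.ssubset_iff_subset_ne.2 ⟨?_, ?_⟩
  · intro w hw
    simp only [Finset.mem_filter, Finset.mem_univ, true_and] at hw ⊢
    exact h hw
  · intro he
    have : w ∈ Finset.univ.filter (fun w => K.Adj v w) := by simpa using h1
    rw [← he] at this
    simp at this
    exact h2 this

def remE (H : SimpleGraph V) (x y : V) : SimpleGraph V where
  Adj u v := H.Adj u v ∧ ¬((u = x ∧ v = y) ∨ (u = y ∧ v = x))
  symm := ⟨fun u v h => ⟨h.1.symm, by tauto⟩⟩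
  loopless := ⟨fun u h => H.loopless.irrefl u h.1⟩

theorem fournier (H : SimpleGraph V) (k : ℕ) (hk0 : 0 < k) (U : Set V) (x : V)
    (hk : ∀ v, dg H v ≤ k) (hU : ∀ v, v ∉ U → dg H v < k)
    (hx : ∀ u v, H.Adj u v → u ∈ U → v ∈ U → u = x ∨ v = x) (H1 : SimpleGraph V) (h1 : H1 ≤ H) :
    ∃ C : V → V → Fin k, EC H1 C := by
  induction H1 using WellFoundedLT.induction with
  | ind H1 ih =>
  have main : ∀ w z, H1.Adj w z → (∀ z', H1.Adj w z' → z' ≠ z → z' ∉ U) →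
      ∃ C : V → V → Fin k, EC H1 C := by
    intro w z hwz hz
    have hle : remE H1 w z ≤ H1 := fun u v h => h.1
    have hn : ¬ (remE H1 w z).Adj w z := fun h => h.2 (Or.inl ⟨rfl, rfl⟩)
    have hlt : remE H1 w z < H1 := lt_of_le_not_ge hle (fun h => hn (h hwz))
    obtain ⟨C, hC⟩ := ih _ hlt (hle.trans h1)
    refine fan (H0 := remE H1 w z) (fun u v => Iff.rfl) hwz hC ?_ ?_
    · apply exists_miss hC
      rw [Fintype.card_fin]
      exact (dg_lt hle hwz hn).trans_le ((dg_mono h1 w).trans (hk w))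
    · intro z' hz'
      apply exists_miss hC
      rw [Fintype.card_fin]
      by_cases h : z' = z
      · subst h
        exact (dg_lt hle hwz.symm (fun h => hn h.symm)).trans_le ((dg_mono h1 z').trans (hk z'))
      · exact ((dg_mono hle z').trans (dg_mono h1 z')).trans_lt (hU z' (hz z' hz' h))
  by_cases c1 : ∃ u v, H1.Adj u v ∧ u ∈ U ∧ v ∈ U
  · obtain ⟨u, v, huv, hu, hv⟩ := c1
    have key : ∀ w, H1.Adj w x → w ∈ U → ∃ C : V → V → Fin k, EC H1 C := by
      intro w hwx hw
      apply main w x hwx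
      intro z' hz' hne hzU
      rcases hx _ _ (h1 hz') hw hzU with h | h
      · exact hwx.ne h
      · exact hne h
    rcases hx _ _ (h1 huv) hu hv with rfl | rfl
    · exact key v huv.symm hv
    · exact key u huv hu
  · by_cases c2 : ∃ u v, H1.Adj u v ∧ u ∈ U
    · obtain ⟨u, v, huv, hu⟩ := c2
      exact main u v huv (fun z' hz' _ hU' => c1 ⟨u, z', hz', hu, hU'⟩)
    · by_cases c3 : ∃ u v, H1.Adj u v
      · obtain ⟨u, v, huv⟩ := c3
        exact main u v huv (fun z' hz' _ hU' => c2 ⟨z', u, hz'.symm, hU'⟩)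
      · refine ⟨fun _ _ => ⟨0, hk0⟩, fun u v h => absurd ⟨u, v, h⟩ c3, fun u v w h => absurd ⟨u, v, h⟩ c3⟩

theorem vizing (H : SimpleGraph V) (k : ℕ) (hk : ∀ v, dg H v ≤ k) [Nonempty V] :
    ∃ C : V → V → Fin (k+1), EC H C :=
  fournier H (k+1) (Nat.succ_pos _) ∅ (Classical.arbitrary V) (fun v => (hk v).trans (Nat.le_succ _))
    (fun v _ => Nat.lt_succ_of_le (hk v)) (fun u v _ h => absurd h (Set.notMem_empty _)) H le_rfl

end fournier

def Win {V : Type*} (G : SimpleGraph V) (D : ℕ) : Prop :=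
  ∃ (α : Type) (_ : Fintype α) (C : V → V → α) (m : V → α), Fintype.card α = D + 1 ∧ EC G C ∧
    (∀ v, Miss G C v (m v)) ∧ ∃ x, ∀ φ : G ≃g G,
      (∀ u v, G.Adj u v → C (φ u) (φ v) = C u v) → (∀ v, m (φ v) = m v) → φ x = x

section rigid
variable {V α : Type*} {G : SimpleGraph V} {C : V → V → α}

theorem agree (hG : G.Connected) (hC : EC G C) (φ ψ : V → V)
    (hφ : ∀ u v, G.Adj u v → G.Adj (φ u) (φ v) ∧ C (φ u) (φ v) = C u v)
    (hψ : ∀ u v, G.Adj u v → G.Adj (ψ u) (ψ v) ∧ C (ψ u) (ψ v) = C u v)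
    (x : V) (h : φ x = ψ x) (v : V) : φ v = ψ v := by
  obtain ⟨p⟩ := hG.preconnected x v
  induction p with
  | nil => exact h
  | @cons u w z huw p ih =>
    apply ih
    have h1 := hφ _ _ huw
    have h2 := hψ _ _ huw
    rw [← h] at h2
    exact hC.2 _ _ _ h1.1 h2.1 (h1.2.trans h2.2.symm)

theorem rigid (hG : G.Connected) (hC : EC G C) (φ : G ≃g G)
    (hφ : ∀ u v, G.Adj u v → C (φ u) (φ v) = C u v) (x : V) (h : φ x = x) (v : V) : φ v = v :=
  agree hG hC φ id (fun u v huv => ⟨φ.map_adj_iff.2 huv, hφ u v huv⟩) (fun u v huv => ⟨huv, rfl⟩) x h v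

end rigid

section nonreg
variable {V : Type*} [Fintype V] {G : SimpleGraph V}

theorem nonregular (D : ℕ) (hD : ∀ v, dg G v ≤ D) (w : V) (hw : dg G w < D) : Win G D := by
  classical
  haveI : Nonempty V := ⟨w⟩
  obtain ⟨C, hC⟩ := vizing G D hD
  obtain ⟨a, b, hab, ha, hb⟩ := exists_two_miss hC w (by rw [Fintype.card_fin]; omega)
  have hm : ∀ v, ∃ c, Miss G C v c ∧ (v ≠ w → Miss G C v b → c = b) ∧ (v = w → c = a) := by
    intro v
    by_cases hv : v = w
    · exact ⟨a, hv ▸ ha, fun h => absurd hv h, fun _ => rfl⟩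
    · by_cases hvb : Miss G C v b
      · exact ⟨b, hvb, fun _ _ => rfl, fun h => absurd h hv⟩
      · obtain ⟨c, hc⟩ := exists_miss hC v (by rw [Fintype.card_fin]; exact Nat.lt_succ_of_le (hD v))
        exact ⟨c, hc, fun _ h => absurd h hvb, fun h => absurd h hv⟩
  choose m hm1 hm2 hm3 using hm
  refine ⟨Fin (D+1), inferInstance, C, m, Fintype.card_fin _, hC, hm1, w, ?_⟩
  intro φ h1 h2
  by_contra hne
  have h3 : Miss G C (φ w) b := by
    intro z hz h
    obtain ⟨z, rfl⟩ := φ.surjective z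
    have := φ.map_adj_iff.1 hz
    rw [h1 _ _ this] at h
    exact hb z this h
  have := hm2 _ hne h3
  rw [h2, hm3 w rfl] at this
  exact hab this
end nonreg
end DMG

namespace DMG
section middle
variable {V : Type*} {G : SimpleGraph V}

theorem mg_vv (u v : V) : ¬ (middleGraph G).Adj (Sum.inl u) (Sum.inl v) := by
  simp [middleGraph]

theorem mg_ve (v : V) (e : G.edgeSet) :
    (middleGraph G).Adj (Sum.inl v) (Sum.inr e) ↔ v ∈ (e : Sym2 V) := by
  simp [middleGraph]

theorem mg_ee (e f : G.edgeSet) :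
    (middleGraph G).Adj (Sum.inr e) (Sum.inr f) ↔
      e ≠ f ∧ ∃ v, v ∈ (e : Sym2 V) ∧ v ∈ (f : Sym2 V) := by
  simp only [middleGraph, SimpleGraph.fromRel_adj]
  constructor
  · rintro ⟨-, h | ⟨h, v, h1, h2⟩⟩
    · exact h
    · exact ⟨h.symm, v, h2, h1⟩
  · rintro ⟨h, h'⟩
    exact ⟨fun h'' => h (Sum.inr_injective h''), Or.inl ⟨h, h'⟩⟩

theorem edge_rep (e : G.edgeSet) : ∃ u v, ∃ h : G.Adj u v, e = ⟨s(u,v), h⟩ := by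
  obtain ⟨e, he⟩ := e
  induction e with
  | h u v => exact ⟨u, v, he, rfl⟩

theorem simplicial_iso (φ : middleGraph G ≃g middleGraph G) (v : V) : ∃ w, φ (Sum.inl v) = Sum.inl w := by
  rcases hφ : φ (Sum.inl v) with w | e
  · exact ⟨w, rfl⟩
  · exfalso
    obtain ⟨a, b, hab, rfl⟩ := edge_rep e
    have key : ∀ z, (middleGraph G).Adj (φ (Sum.inl v)) (Sum.inl z) →
        ∃ f : G.edgeSet, φ (Sum.inr f) = Sum.inl z ∧ v ∈ (f : Sym2 V) := by
      intro z hz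
      obtain ⟨q, hq⟩ := φ.surjective (Sum.inl z)
      rw [← hq, φ.map_adj_iff] at hz
      rcases q with q | f
      · exact absurd hz (mg_vv _ _)
      · exact ⟨f, hq, (mg_ve _ _).1 hz⟩
    have h1 : (middleGraph G).Adj (φ (Sum.inl v)) (Sum.inl a) := by
      rw [hφ]; exact ((mg_ve _ _).2 (by simp)).symm
    have h2 : (middleGraph G).Adj (φ (Sum.inl v)) (Sum.inl b) := by
      rw [hφ]; exact ((mg_ve _ _).2 (by simp)).symm
    obtain ⟨f, hf, hvf⟩ := key a h1
    obtain ⟨g, hg, hvg⟩ := key b h2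
    have hfg : f ≠ g := by
      rintro rfl
      rw [hf] at hg
      exact hab.ne (Sum.inl_injective hg)
    have := φ.map_adj_iff.2 ((mg_ee f g).2 ⟨hfg, v, hvf, hvg⟩)
    rw [hf, hg] at this
    exact mg_vv _ _ this

theorem edge_iso (φ : middleGraph G ≃g middleGraph G) (f : V → V)
    (hf : ∀ v, φ (Sum.inl v) = Sum.inl (f v)) (finj : Function.Injective f)
    (u v : V) (h : G.Adj u v) :
    ∃ h' : G.Adj (f u) (f v), φ (Sum.inr ⟨s(u,v), h⟩) = Sum.inr ⟨s(f u, f v), h'⟩ := by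
  have h1 := φ.map_adj_iff.2 ((mg_ve u ⟨s(u,v), h⟩).2 (by simp))
  have h2 := φ.map_adj_iff.2 ((mg_ve v ⟨s(u,v), h⟩).2 (by simp))
  rw [hf] at h1 h2
  rcases hφ : φ (Sum.inr ⟨s(u,v), h⟩) with w | e
  · rw [hφ] at h1; exact absurd h1 (mg_vv _ _)
  · rw [hφ, mg_ve] at h1 h2
    have : (e : Sym2 V) = s(f u, f v) :=
      (Sym2.mem_and_mem_iff (fun h' => h.ne (finj h'))).1 ⟨h1, h2⟩
    have h' : G.Adj (f u) (f v) := by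
      have := this ▸ e.2
      exact this
    exact ⟨h', by congr 1; exact Subtype.ext this⟩

noncomputable def ce {α : Type*} (C : V → V → α) (e : Sym2 V) : α := C (Quot.out e).1 (Quot.out e).2

theorem ce_eq {α : Type*} {C : V → V → α} (hC : EC G C) (u v : V) (h : G.Adj u v) :
    ce C s(u,v) = C u v := by
  have h1 : s((Quot.out s(u,v)).1, (Quot.out s(u,v)).2) = s(u,v) := Quot.out_eq s(u,v)
  unfold ce
  rw [Sym2.eq_iff] at h1
  rcases h1 with ⟨h1, h2⟩ | ⟨h1, h2⟩
  · rw [h1, h2]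
  · rw [h1, h2]; exact (hC.1 u v h).symm

theorem win_col {D : ℕ} (hG : G.Connected) (hw : Win G D) :
    ∃ c : V ⊕ G.edgeSet → Fin (D+1), IsProperVertexColoring (middleGraph G) c ∧
      IsDistinguishingVertexColoring (middleGraph G) c := by
  obtain ⟨α, _, C, m, hα, hC, hm, x, hx⟩ := hw
  let E : α ≃ Fin (D+1) := Fintype.equivFinOfCardEq hα
  have ceq : ∀ (e : G.edgeSet) (v : V), v ∈ (e : Sym2 V) → ∃ w, (e : Sym2 V) = s(v,w) ∧ G.Adj v w ∧ ce C e = C v w := by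
    intro e v hv
    obtain ⟨w, hw⟩ := Sym2.mem_iff_exists.1 hv
    have : G.Adj v w := by
      have := e.2
      rw [hw] at this; exact this
    exact ⟨w, hw, this, by rw [hw, ce_eq hC _ _ this]⟩
  refine ⟨fun z => E (Sum.elim m (fun e : G.edgeSet => ce C e) z), ?_, ?_⟩
  · have ve : ∀ v e, (middleGraph G).Adj (Sum.inl v) (Sum.inr e) → m v ≠ ce C e := by
      intro v e h he
      obtain ⟨w, -, h1, h2⟩ := ceq e v ((mg_ve _ _).1 h)
      exact hm v w h1 (h2.symm.trans he.symm)
    rintro (u | e) (v | f) h hc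
    · exact mg_vv _ _ h
    · exact ve _ _ h (E.injective hc)
    · exact ve _ _ h.symm (E.injective hc).symm
    · obtain ⟨hne, v, h1, h2⟩ := (mg_ee _ _).1 h
      have hc : ce C e = ce C f := E.injective hc
      obtain ⟨w, e1, e2, e3⟩ := ceq e v h1
      obtain ⟨z, f1, f2, f3⟩ := ceq f v h2
      have := hC.2 v w z e2 f2 (by rw [← e3, ← f3, hc])
      apply hne
      apply Subtype.ext
      rw [e1, f1, this]
  · intro φ hφ
    have hφ' : ∀ z, Sum.elim m (fun e : G.edgeSet => ce C e) (φ z) = Sum.elim m (fun e : G.edgeSet => ce C e) z :=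
      fun z => E.injective (hφ z)
    choose f hf using simplicial_iso φ
    choose g hg using simplicial_iso φ.symm
    have fg : ∀ v, f (g v) = v := by
      intro v
      apply Sum.inl_injective (β := G.edgeSet)
      rw [← hf, ← hg, φ.apply_symm_apply]
    have gf : ∀ v, g (f v) = v := by
      intro v
      apply Sum.inl_injective (β := G.edgeSet)
      rw [← hg, ← hf, φ.symm_apply_apply]
    have finj : Function.Injective f := Function.LeftInverse.injective gf
    have ginj : Function.Injective g := Function.LeftInverse.injective fg
    let ψ : G ≃g G := ⟨⟨f, g, gf, fg⟩, by
      intro a b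
      constructor
      · intro h
        obtain ⟨h', -⟩ := edge_iso φ.symm g hg ginj _ _ h
        simpa [gf] using h'
      · intro h
        exact (edge_iso φ f hf finj a b h).1⟩
    have hψ : ∀ v, ψ v = f v := fun v => rfl
    have h1 : ∀ u v, G.Adj u v → C (ψ u) (ψ v) = C u v := by
      intro u v h
      obtain ⟨h', he⟩ := edge_iso φ f hf finj u v h
      have := hφ' (Sum.inr ⟨s(u,v), h⟩)
      rw [he] at this
      simp only [Sum.elim_inr] at this
      rw [ce_eq hC _ _ h, ce_eq hC _ _ h'] at this
      exact this
    have h2 : ∀ v, m (ψ v) = m v := by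
      intro v
      have := hφ' (Sum.inl v)
      rw [hf] at this
      exact this
    have hid : ∀ v, f v = v := rigid hG hC ψ h1 x (hx ψ h1 h2)
    rintro (v | e)
    · rw [hf, hid]
    · obtain ⟨a, b, hab, rfl⟩ := edge_rep e
      obtain ⟨h', he⟩ := edge_iso φ f hf finj a b hab
      rw [he]
      simp only [hid]

theorem lower [Fintype V] [DecidableRel G.Adj] [Nonempty V] (r : ℕ)
    (c : V ⊕ G.edgeSet → Fin r) (hc : IsProperVertexColoring (middleGraph G) c) :
    G.maxDegree + 1 ≤ r := by
  classical
  obtain ⟨v, hv⟩ := G.exists_maximal_degree_vertex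
  rw [hv, ← G.card_neighborSet_eq_degree, ← Fintype.card_option, ← Fintype.card_fin r]
  let F : Option (G.neighborSet v) → V ⊕ G.edgeSet := fun o =>
    match o with
    | none => Sum.inl v
    | some w => Sum.inr ⟨s(v, w), w.2⟩
  have hF : ∀ a b, a ≠ b → (middleGraph G).Adj (F a) (F b) := by
    rintro (_ | a) (_ | b) hab
    · exact absurd rfl hab
    · exact (mg_ve _ _).2 (by simp)
    · exact ((mg_ve _ _).2 (by simp)).symm
    · refine (mg_ee _ _).2 ⟨?_, v, by simp, by simp⟩
      intro h
      apply hab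
      have := congrArg Subtype.val h
      simp only [Sym2.congr_right] at this
      rw [Subtype.ext this]
  apply Fintype.card_le_of_injective (fun o => c (F o))
  intro a b h
  by_contra hab
  exact hc _ _ (hF a b hab) h

theorem win_final [Fintype V] [DecidableRel G.Adj] (hG : G.Connected) (hw : Win G G.maxDegree) :
    distinguishingChromaticNumber (middleGraph G) = G.maxDegree + 1 := by
  haveI := hG.nonempty
  have hmem := win_col hG hw
  apply le_antisymm
  · exact Nat.sInf_le hmem
  · refine le_csInf (s := {r | ∃ c : V ⊕ G.edgeSet → Fin r, IsProperVertexColoring (middleGraph G) c ∧ IsDistinguishingVertexColoring (middleGraph G) c}) ⟨_, hmem⟩ ?_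
    rintro r ⟨c, hc, -⟩
    exact lower r c hc
end middle
end DMG

namespace DMG
section class1
variable {V : Type*} {α : Type} {G : SimpleGraph V} {C : V → V → α} {n : α → V → V}

structure NS (G : SimpleGraph V) (C : V → V → α) (n : α → V → V) : Prop where
  conn : G.Connected
  ec : EC G C
  adj : ∀ a v, G.Adj v (n a v)
  col : ∀ a v, C v (n a v) = a

theorem NS.tot (h : NS G C n) {u v : V} (huv : G.Adj u v) : v = n (C u v) u :=
  h.ec.2 u _ _ huv (h.adj _ _) (h.col _ _).symm

theorem NS.inv (h : NS G C n) (a : α) (v : V) : n a (n a v) = v := by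
  have h1 := (h.adj a v).symm
  have := h.tot h1
  rw [← h.ec.1 _ _ h1.symm, h.col] at this
  exact this.symm

theorem NS.ne (h : NS G C n) (a : α) (v : V) : n a v ≠ v := (h.adj a v).ne'

theorem NS.inj (h : NS G C n) {a b : α} {v : V} (h' : n a v = n b v) : a = b := by
  rw [← h.col a v, h', h.col]

theorem NS.comm_eq (h : NS G C n) (φ ψ : V → V) (hφ : ∀ c v, φ (n c v) = n c (φ v))
    (hψ : ∀ c v, ψ (n c v) = n c (ψ v)) (x : V) (hx : φ x = ψ x) (v : V) : φ v = ψ v := by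
  apply agree h.conn h.ec φ ψ _ _ x hx
  · intro u v huv
    rw [h.tot huv, hφ, h.col, h.col]
    exact ⟨h.adj _ _, rfl⟩
  · intro u v huv
    rw [h.tot huv, hψ, h.col, h.col]
    exact ⟨h.adj _ _, rfl⟩

theorem NS.closed (h : NS G C n) (S : Set V) (x : V) (hx : x ∈ S)
    (hS : ∀ c v, v ∈ S → n c v ∈ S) (v : V) : v ∈ S := by
  obtain ⟨p⟩ := h.conn.preconnected x v
  induction p with
  | nil => exact hx
  | @cons u w z huw p ih =>
    apply ih
    rw [h.tot huw]
    exact hS _ _ hx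

theorem NS.iso (h : NS G C n) {W : Type} (K : SimpleGraph W) (w : W → V) (A : α → W → W)
    (i0 : W) (hn : ∀ c i, n c (w i) = w (A c i)) (hw : Function.Injective w)
    (hK : ∀ i j, K.Adj i j ↔ ∃ c, j = A c i) : Nonempty (G ≃g K) := by
  have hs : Function.Surjective w := by
    intro v
    apply h.closed (Set.range w) (w i0) ⟨i0, rfl⟩
    rintro c _ ⟨i, rfl⟩
    exact ⟨A c i, (hn c i).symm⟩
  refine ⟨SimpleGraph.Iso.symm ⟨Equiv.ofBijective w ⟨hw, hs⟩, ?_⟩⟩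
  intro i j
  change G.Adj (w i) (w j) ↔ K.Adj i j
  rw [hK]
  constructor
  · intro hij
    refine ⟨C (w i) (w j), hw ?_⟩
    rw [← hn]; exact h.tot hij
  · rintro ⟨c, rfl⟩
    rw [← hn]; exact h.adj _ _

variable [Fintype α]
theorem NS.two (H : NS G C n) (hw : ¬ Win G (Fintype.card α)) {a b : α} (hab : a ≠ b) (u h : V)
    (h1 : h ≠ u) (h2 : h ≠ n a u) (h3 : h ≠ n b u) (h4 : h ≠ n b (n a u)) :
    ∃ φ : V → V, (∀ c v, φ (n c v) = n c (φ v)) ∧ φ u = n a u ∧ φ h = n b h := by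
  classical
  have h3' : n b h ≠ u := fun h' => h3 (by rw [← h', H.inv])
  have h4' : n b h ≠ n a u := fun h' => h4 (by rw [← h', H.inv])
  have nu := H.ne a u
  have nh := H.ne b h
  let P : V → V → Prop := fun p q => ((p = u ∨ p = n a u) ∧ q = n a p) ∨ ((p = h ∨ p = n b h) ∧ q = n b p)
  let C' : V → V → Option α := fun p q => if P p q then none else some (C p q)
  let m : V → Option α := fun p => if p = u ∨ p = n a u then some a else if p = h ∨ p = n b h then some b else none
  have Psymm : ∀ p q, P p q → P q p := by
    rintro p q (⟨rfl | rfl, rfl⟩ | ⟨rfl | rfl, rfl⟩) <;> simp [P, H.inv]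
  have hEC : EC G C' := by
    constructor
    · intro p q hpq
      simp only [C', H.ec.1 p q hpq]
      by_cases hP : P p q
      · rw [if_pos hP, if_pos (Psymm _ _ hP)]
      · rw [if_neg hP, if_neg (fun h => hP (Psymm _ _ h))]
    · intro p q r hpq hpr hc
      simp only [C'] at hc
      split_ifs at hc with c1 c2 c2
      · rcases c1 with ⟨c1, rfl⟩ | ⟨c1, rfl⟩ <;> rcases c2 with ⟨c2, rfl⟩ | ⟨c2, rfl⟩
        · rfl
        · exfalso; rcases c1 with rfl | rfl <;> rcases c2 with c2 | c2 <;> grind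
        · exfalso; rcases c1 with rfl | rfl <;> rcases c2 with c2 | c2 <;> grind
        · rfl
      · exact H.ec.2 p q r hpq hpr (Option.some_injective _ hc)
  have hm : ∀ v, Miss G C' v (m v) := by
    intro v w hvw hc
    have hw := H.tot hvw
    simp only [C', m] at hc
    by_cases c1 : P v w
    · rw [if_pos c1] at hc
      rcases c1 with c1 | c1
      · rw [if_pos c1.1] at hc; simp at hc
      · rw [if_pos c1.1] at hc; split_ifs at hc
    · rw [if_neg c1] at hc
      split_ifs at hc with c2 c3
      · have := Option.some_injective _ hc
        rw [this] at hw
        exact c1 (Or.inl ⟨c2, hw⟩)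
      · have := Option.some_injective _ hc
        rw [this] at hw
        exact c1 (Or.inr ⟨c3, hw⟩)
  have key : ¬ ∃ x, ∀ φ : G ≃g G,
      (∀ u v, G.Adj u v → C' (φ u) (φ v) = C' u v) → (∀ v, m (φ v) = m v) → φ x = x := by
    intro hx
    exact hw ⟨Option α, inferInstance, C', m, Fintype.card_option, hEC, hm, hx⟩
  push Not at key
  obtain ⟨φ, hφC, hφm, hne⟩ := key u
  have ma : ∀ p, m p = some a → p = u ∨ p = n a u := by
    intro p hp
    simp only [m] at hp
    split_ifs at hp with c1 c2
    · exact c1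
    · exact absurd (Option.some_injective _ hp).symm hab
  have mb : ∀ p, m p = some b → p = h ∨ p = n b h := by
    intro p hp
    simp only [m] at hp
    split_ifs at hp with c1 c2
    · exact absurd (Option.some_injective _ hp) hab
    · exact c2
  have ma' : ∀ p, (p = u ∨ p = n a u) → m p = some a := by
    intro p hp
    simp only [m]
    rw [if_pos hp]
  have mb' : ∀ p, (p = h ∨ p = n b h) → m p = some b := by
    intro p hp
    simp only [m]
    rw [if_neg, if_pos hp]
    rintro (rfl | rfl) <;> rcases hp with hp | hp
    · exact h1 hp.symm
    · exact h3' hp.symm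
    · exact h2 hp.symm
    · exact h4' hp.symm
  have comm : ∀ c v, φ (n c v) = n c (φ v) := by
    intro c v
    have hadj := H.adj c v
    have hadj' : G.Adj (φ v) (φ (n c v)) := φ.map_adj_iff.2 hadj
    have h5 := hφC _ _ hadj
    by_cases hP : P v (n c v)
    · rcases hP with ⟨q1, q2⟩ | ⟨q1, q2⟩
      · have q3 := ma _ ((hφm v).trans (ma' _ q1))
        have q4 : n c v = u ∨ n c v = n a u := by
          rw [q2]; rcases q1 with rfl | rfl
          · right; rfl
          · left; rw [H.inv]
        have q5 := ma _ ((hφm _).trans (ma' _ q4))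
        have : c = a := H.inj q2
        subst this
        have := hadj'.ne
        rcases q3 with q3 | q3 <;> rcases q5 with q5 | q5 <;> rw [q3, q5] at this ⊢
        · exact absurd rfl this
        · rw [H.inv]
        · exact absurd rfl this
      · have q3 := mb _ ((hφm v).trans (mb' _ q1))
        have q4 : n c v = h ∨ n c v = n b h := by
          rw [q2]; rcases q1 with rfl | rfl
          · right; rfl
          · left; rw [H.inv]
        have q5 := mb _ ((hφm _).trans (mb' _ q4))
        have : c = b := H.inj q2
        subst this
        have := hadj'.ne
        rcases q3 with q3 | q3 <;> rcases q5 with q5 | q5 <;> rw [q3, q5] at this ⊢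
        · exact absurd rfl this
        · rw [H.inv]
        · exact absurd rfl this
    · simp only [C', if_neg hP] at h5
      split_ifs at h5 with h6
      have := Option.some_injective _ h5
      rw [H.col] at this
      rw [H.tot hadj', this]
  refine ⟨φ, comm, (ma _ ((hφm u).trans (ma' _ (Or.inl rfl)))).resolve_left hne, ?_⟩
  refine (mb _ ((hφm h).trans (mb' _ (Or.inl rfl)))).resolve_left ?_
  intro hh
  exact hne (H.comm_eq φ id comm (fun _ _ => rfl) h hh u)

theorem NS.c4 (H : NS G C n) {a b : α} (hab : a ≠ b) (hα : ∀ c, c = a ∨ c = b) (h : V)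
    (hc : n a (n b h) = n b (n a h)) : Nonempty (G ≃g cycleGraph 4) := by
  classical
  have e1 := H.inv; have e2 := H.ne
  have e3 : ∀ v, n a v ≠ n b v := fun v h' => hab (H.inj h')
  refine H.iso (cycleGraph 4) ![h, n a h, n b (n a h), n b h]
    (fun c => if c = a then ![1,0,3,2] else ![3,2,1,0]) 0 ?_ ?_ ?_
  · intro c i
    rcases hα c with rfl | rfl
    · rw [if_pos rfl]
      fin_cases i <;> simp <;> grind
    · rw [if_neg hab.symm]
      fin_cases i <;> simp <;> grind
  · intro i j hij
    fin_cases i <;> fin_cases j <;> simp at hij ⊢ <;> grind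
  · have : ∀ i j : Fin 4, (cycleGraph 4).Adj i j ↔ (j = ![1,0,3,2] i ∨ j = ![3,2,1,0] i) := by
      decide
    intro i j
    rw [this]
    constructor
    · rintro (h | h)
      · exact ⟨a, by rw [if_pos rfl]; exact h⟩
      · exact ⟨b, by rw [if_neg hab.symm]; exact h⟩
    · rintro ⟨c, h⟩
      split_ifs at h
      · exact Or.inl h
      · exact Or.inr h

theorem NS.deg2 (H : NS G C n) (hw : ¬ Win G (Fintype.card α)) {a b : α} (hab : a ≠ b)
    (hα : ∀ c, c = a ∨ c = b) :
    Nonempty (G ≃g cycleGraph 4) ∨ Nonempty (G ≃g cycleGraph 6) := by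
  classical
  by_cases hc : ∃ h, n a (n b h) = n b (n a h)
  · obtain ⟨h, hc⟩ := hc
    exact Or.inl (H.c4 hab hα h hc)
  right
  push Not at hc
  have e1 := H.inv; have e2 := H.ne
  have e3 : ∀ v, n a v ≠ n b v := fun v h' => hab (H.inj h')
  obtain ⟨u⟩ := H.conn.nonempty
  have all : ∀ h, h = u ∨ h = n a u ∨ h = n b u ∨ h = n b (n a u) ∨ n a h = u ∨ n a h = n a u ∨
      n a h = n b u ∨ n a h = n b (n a u) := by
    intro h
    by_contra hcon
    push Not at hcon
    obtain ⟨g1, g2, g3, g4, g5, g6, g7, g8⟩ := hcon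
    obtain ⟨φ, p1, p2, p3⟩ := H.two hw hab u h g1 g2 g3 g4
    obtain ⟨ψ, q1, q2, q3⟩ := H.two hw hab u (n a h) g5 g6 g7 g8
    have := H.comm_eq φ ψ p1 q1 u (by rw [p2, q2]) (n a h)
    rw [p1, p3, q3] at this
    exact hc h this
  have x1 : n a (n b u) ≠ n b (n a u) := hc u
  have x2 : n b (n a (n b (n a u))) = n a (n b u) := by
    have := all (n b (n a (n b (n a u))))
    have i1 : ∀ c v w, n c v = n c w → v = w := fun c v w h => by rw [← e1 c v, h, e1]
    have r1 := e1 a; have r2 := e1 b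
    have s1 := e2 a; have s2 := e2 b
    have t1 := i1 a; have t2 := i1 b
    grind
  refine H.iso (cycleGraph 6) ![u, n a u, n b (n a u), n a (n b (n a u)), n a (n b u), n b u]
    (fun c => if c = a then ![1,0,3,2,5,4] else ![5,2,1,4,3,0]) 0 ?_ ?_ ?_
  · intro c i
    rcases hα c with rfl | rfl
    · rw [if_pos rfl]
      fin_cases i <;> simp <;> grind
    · rw [if_neg hab.symm]
      fin_cases i <;> simp <;> grind
  · intro i j hij
    fin_cases i <;> fin_cases j <;> simp at hij ⊢ <;> grind
  · have : ∀ i j : Fin 6, (cycleGraph 6).Adj i j ↔ (j = ![1,0,3,2,5,4] i ∨ j = ![5,2,1,4,3,0] i) := by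
      decide
    intro i j
    rw [this]
    constructor
    · rintro (h | h)
      · exact ⟨a, by rw [if_pos rfl]; exact h⟩
      · exact ⟨b, by rw [if_neg hab.symm]; exact h⟩
    · rintro ⟨c, h⟩
      split_ifs at h
      · exact Or.inl h
      · exact Or.inr h


theorem NS.k4 (H : NS G C n) {a b c : α} (hab : a ≠ b) (hac : a ≠ c) (hbc : b ≠ c) (u : V)
    (all : ∀ h, h = u ∨ h = n a u ∨ h = n b u ∨ h = n c u)
    (h1 : n b (n a u) = n c u) (h2 : n c (n a u) = n b u) :
    Nonempty (G ≃g (⊤ : SimpleGraph (Fin 4))) := by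
  classical
  have e1 := H.inv; have e2 := H.ne
  have e3 : ∀ v, n a v ≠ n b v := fun v h' => hab (H.inj h')
  have e4 : ∀ v, n a v ≠ n c v := fun v h' => hac (H.inj h')
  have e5 : ∀ v, n b v ≠ n c v := fun v h' => hbc (H.inj h')
  have x : n a (n b u) = n c u := by
    have := all (n a (n b u))
    grind
  have A1 := H.adj a u
  have A2 := H.adj b u
  have A3 := H.adj c u
  have A4 := H.adj b (n a u); rw [h1] at A4
  have A5 := H.adj c (n a u); rw [h2] at A5
  have A6 := H.adj a (n b u); rw [x] at A6
  have hadj : ∀ x y, x ≠ y → G.Adj x y := by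
    intro x y hxy
    rcases all x with rfl | rfl | rfl | rfl <;> rcases all y with rfl | rfl | rfl | rfl <;>
      first
      | exact absurd rfl hxy
      | assumption
      | (apply SimpleGraph.Adj.symm; assumption)
  let w : Fin 4 → V := ![u, n a u, n b u, n c u]
  have wi : Function.Injective w := by
    intro i j hij
    fin_cases i <;> fin_cases j <;> simp [w] at hij ⊢ <;> grind
  have ws : Function.Surjective w := by
    intro v
    rcases all v with rfl | rfl | rfl | rfl
    · exact ⟨0, rfl⟩
    · exact ⟨1, rfl⟩
    · exact ⟨2, rfl⟩
    · exact ⟨3, rfl⟩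
  refine ⟨SimpleGraph.Iso.symm ⟨Equiv.ofBijective w ⟨wi, ws⟩, ?_⟩⟩
  intro i j
  change G.Adj (w i) (w j) ↔ (⊤ : SimpleGraph (Fin 4)).Adj i j
  rw [SimpleGraph.top_adj]
  exact ⟨fun h h' => h.ne (by rw [h']), fun h => hadj _ _ (fun h' => h (wi h'))⟩

theorem NS.k33 (H : NS G C n) {a b c : α} (hab : a ≠ b) (hac : a ≠ c) (hbc : b ≠ c)
    (hα : ∀ e, e = a ∨ e = b ∨ e = c) (u : V)
    (x1 : n b (n a u) = n c (n b u)) (x2 : n b (n a u) = n a (n c u))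
    (y1 : n c (n a u) = n b (n c u)) (y2 : n c (n a u) = n a (n b u))
    (z1 : n b (n a u) ≠ n c u) (z2 : n c (n a u) ≠ n b u)
    (z3 : n c (n b u) ≠ n a u) (z4 : n b (n c u) ≠ n a u) :
    Nonempty (G ≃g completeBipartiteGraph (Fin 3) (Fin 3)) := by
  classical
  have e1 := H.inv; have e2 := H.ne
  have e3 : ∀ v, n a v ≠ n b v := fun v h' => hab (H.inj h')
  have e4 : ∀ v, n a v ≠ n c v := fun v h' => hac (H.inj h')
  have e5 : ∀ v, n b v ≠ n c v := fun v h' => hbc (H.inj h')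
  let L : Fin 3 → V := ![u, n b (n a u), n c (n a u)]
  let R : Fin 3 → V := ![n a u, n b u, n c u]
  let A1 : Fin 3 ⊕ Fin 3 → Fin 3 ⊕ Fin 3 :=
    Sum.elim ![Sum.inr 0, Sum.inr 2, Sum.inr 1] ![Sum.inl 0, Sum.inl 2, Sum.inl 1]
  let A2 : Fin 3 ⊕ Fin 3 → Fin 3 ⊕ Fin 3 :=
    Sum.elim ![Sum.inr 1, Sum.inr 0, Sum.inr 2] ![Sum.inl 1, Sum.inl 0, Sum.inl 2]
  let A3 : Fin 3 ⊕ Fin 3 → Fin 3 ⊕ Fin 3 :=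
    Sum.elim ![Sum.inr 2, Sum.inr 1, Sum.inr 0] ![Sum.inl 2, Sum.inl 1, Sum.inl 0]
  refine H.iso (completeBipartiteGraph (Fin 3) (Fin 3)) (Sum.elim L R)
    (fun e => if e = a then A1 else if e = b then A2 else A3) (Sum.inl 0) ?_ ?_ ?_
  · intro e i
    rcases hα e with rfl | rfl | rfl
    · rw [if_pos rfl]
      rcases i with i | i <;> fin_cases i <;> simp [L, R, A1] <;> grind
    · rw [if_neg hab.symm, if_pos rfl]
      rcases i with i | i <;> fin_cases i <;> simp [L, R, A2] <;> grind
    · rw [if_neg hac.symm, if_neg hbc.symm]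
      rcases i with i | i <;> fin_cases i <;> simp [L, R, A3] <;> grind
  · rintro (i | i) (j | j) hij <;> fin_cases i <;> fin_cases j <;> simp [L, R] at hij ⊢ <;> grind
  · have : ∀ i j : Fin 3 ⊕ Fin 3, (completeBipartiteGraph (Fin 3) (Fin 3)).Adj i j ↔
        (j = A1 i ∨ j = A2 i ∨ j = A3 i) := by
      simp only [completeBipartiteGraph_adj]
      decide
    intro i j
    rw [this]
    constructor
    · rintro (h | h | h)
      · exact ⟨a, by rw [if_pos rfl]; exact h⟩
      · exact ⟨b, by rw [if_neg hab.symm, if_pos rfl]; exact h⟩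
      · exact ⟨c, by rw [if_neg hac.symm, if_neg hbc.symm]; exact h⟩
    · rintro ⟨e, h⟩
      split_ifs at h
      · exact Or.inl h
      · exact Or.inr (Or.inl h)
      · exact Or.inr (Or.inr h)

theorem NS.deg3 (H : NS G C n) (hw : ¬ Win G (Fintype.card α)) {a b c : α} (hab : a ≠ b)
    (hac : a ≠ c) (hbc : b ≠ c) :
    Nonempty (G ≃g (⊤ : SimpleGraph (Fin 4))) ∨
      Nonempty (G ≃g completeBipartiteGraph (Fin 3) (Fin 3)) := by
  classical
  have e1 := H.inv; have e2 := H.ne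
  have e3 : ∀ {a b}, a ≠ b → ∀ v, n a v ≠ n b v := fun hab v h' => hab (H.inj h')
  have all : ∀ {a b c : α}, a ≠ b → a ≠ c → b ≠ c → ∀ u h, h = u ∨ h = n a u ∨ h = n b u ∨ h = n c u ∨
      h = n b (n a u) ∨ h = n c (n a u) := by
    intro a b c hab hac hbc u h
    by_contra hcon
    push Not at hcon
    obtain ⟨g1, g2, g3, g4, g5, g6⟩ := hcon
    obtain ⟨φ, p1, p2, p3⟩ := H.two hw hab u h g1 g2 g3 g5
    obtain ⟨ψ, q1, q2, q3⟩ := H.two hw hac u h g1 g2 g4 g6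
    have := H.comm_eq φ ψ p1 q1 u (by rw [p2, q2]) h
    rw [p3, q3] at this
    exact hbc (H.inj this)
  by_cases hA : ∃ (a b c : α) (_ : a ≠ b) (_ : a ≠ c) (_ : b ≠ c) (u : V), n b (n a u) = n c u
  · left
    obtain ⟨a, b, c, hab, hac, hbc, u, h1⟩ := hA
    have ab := e3 hab; have ac := e3 hac; have bc := e3 hbc
    have h2 : n c (n a u) = n b u := by
      have := all hab hac hbc u (n c (n b u))
      grind
    apply H.k4 hab hac hbc u _ h1 h2
    intro h
    have := all hab hac hbc u h
    grind
  · right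
    push Not at hA
    have star : ∀ {a b c : α}, a ≠ b → a ≠ c → b ≠ c → ∀ u, n c (n a u) = n b (n c u) := by
      intro a b c hab hac hbc u
      obtain ⟨φ, p1, p2, p3⟩ := H.two hw hab u (n c u) (e2 _ _) (e3 hac.symm u) (e3 hbc.symm u)
        (hA a b c hab hac hbc u).symm
      rw [← p3, p1, p2]
    have hα : ∀ e, e = a ∨ e = b ∨ e = c := by
      intro e
      by_contra hcon
      push Not at hcon
      obtain ⟨u⟩ := H.conn.nonempty
      have s1 := star hab hac hbc u
      have s2 := star hcon.1.symm hac hcon.2.2 u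
      rw [s1] at s2
      exact hcon.2.1 (H.inj s2).symm
    obtain ⟨u⟩ := H.conn.nonempty
    refine H.k33 hab hac hbc hα u ?_ ?_ ?_ ?_ (hA _ _ _ hab hac hbc u) (hA _ _ _ hac hab hbc.symm u)
      (hA _ _ _ hbc hab.symm hac.symm u) (hA _ _ _ hbc.symm hac.symm hab.symm u)
    · exact star hac hab hbc.symm u
    · exact (star hbc.symm hac.symm hab.symm u).symm
    · exact star hab hac hbc u
    · exact (star hbc hab.symm hac.symm u).symm

theorem class1 [Fintype V] (hG : G.Connected) (hd : ∀ v, dg G v = Fintype.card α)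
    (hC : EC G C) (h2 : 2 ≤ Fintype.card α)
    (hC4 : IsEmpty (G ≃g cycleGraph 4))
    (hK4 : IsEmpty (G ≃g (⊤ : SimpleGraph (Fin 4))))
    (hC6 : IsEmpty (G ≃g cycleGraph 6))
    (hK33 : IsEmpty (G ≃g completeBipartiteGraph (Fin 3) (Fin 3))) :
    Win G (Fintype.card α) := by
  classical
  by_contra hw
  have := fun (a : α) (v : V) => full hC v (hd v) a
  choose n hn1 hn2 using this
  have H : NS G C n := ⟨hG, hC, hn1, hn2⟩
  by_cases h3 : 2 < Fintype.card α
  · obtain ⟨a, b, c, hab, hac, hbc⟩ := Fintype.two_lt_card_iff.1 h3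
    rcases H.deg3 hw hab hac hbc with ⟨⟨h⟩⟩ | ⟨⟨h⟩⟩
    · exact hK4.false h
    · exact hK33.false h
  · obtain ⟨a, b, hab⟩ := Fintype.exists_pair_of_one_lt_card (α := α) (by omega)
    have hα : ∀ c, c = a ∨ c = b := by
      intro c
      by_contra hc
      push Not at hc
      exact h3 (Fintype.two_lt_card_iff.2 ⟨a, b, c, hab, hc.1.symm, hc.2.symm⟩)
    rcases H.deg2 hw hab hα with ⟨⟨h⟩⟩ | ⟨⟨h⟩⟩
    · exact hC4.false h
    · exact hC6.false h

end class1
end DMG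

namespace DMG
section transport
variable {V γ : Type*} {G : SimpleGraph V} {C : V → V → γ}

theorem exists_inj (T : Finset γ) (D : ℕ) (hT : T.card = D) (hD : 0 < D) :
    ∃ f : γ → Fin D, ∀ a ∈ T, ∀ b ∈ T, f a = f b → a = b := by
  classical
  subst hT
  refine ⟨fun c => if h : c ∈ T then T.equivFin ⟨c, h⟩ else ⟨0, hD⟩, ?_⟩
  intro a ha b hb h
  simp only [dif_pos ha, dif_pos hb] at h
  exact congrArg Subtype.val (T.equivFin.injective h)

theorem ec_map {δ : Type*} (hC : EC G C) (T : Finset γ) (hT : ∀ u v, G.Adj u v → C u v ∈ T) (f : γ → δ)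
    (hf : ∀ a ∈ T, ∀ b ∈ T, f a = f b → a = b) : EC G (fun u v => f (C u v)) :=
  ⟨fun u v h => congrArg f (hC.1 u v h), fun u v w h1 h2 h =>
    hC.2 u v w h1 h2 (hf _ (hT _ _ h1) _ (hT _ _ h2) h)⟩

theorem win_of (D : ℕ) (T : Finset γ) (hcard : T.card = D + 1) (hC : EC G C)
    (hT : ∀ u v, G.Adj u v → C u v ∈ T) (m : V → γ) (hmT : ∀ v, m v ∈ T)
    (hm : ∀ v, Miss G C v (m v)) (x : V)
    (hx : ∀ φ : G ≃g G, (∀ u v, G.Adj u v → C (φ u) (φ v) = C u v) →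
      (∀ v, m (φ v) = m v) → φ x = x) : Win G D := by
  obtain ⟨f, hf⟩ := exists_inj T (D+1) hcard (Nat.succ_pos _)
  refine ⟨Fin (D+1), inferInstance, fun u v => f (C u v), fun v => f (m v), Fintype.card_fin _,
    ec_map hC T hT f hf, ?_, x, ?_⟩
  · intro v w h h'
    exact hm v w h (hf _ (hT _ _ h) _ (hmT v) h')
  · intro φ h1 h2
    exact hx φ (fun u v h => hf _ (hT _ _ (φ.map_adj_iff.2 h)) _ (hT _ _ h) (h1 u v h))
      (fun v => hf _ (hmT _) _ (hmT _) (h2 v))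

theorem win_of' [Fintype V] (D : ℕ) (hD : ∀ v, dg G v ≤ D) (T : Finset γ) (hcard : T.card = D + 1)
    (hC : EC G C) (hT : ∀ u v, G.Adj u v → C u v ∈ T) (x : V)
    (hx : ∀ φ : G ≃g G, (∀ u v, G.Adj u v → C (φ u) (φ v) = C u v) → φ x = x) : Win G D := by
  obtain ⟨f, hf⟩ := exists_inj T (D+1) hcard (Nat.succ_pos _)
  have hE := ec_map hC T hT f hf
  have : ∀ v, ∃ a, Miss G (fun u v => f (C u v)) v a := fun v =>
    exists_miss hE v (by rw [Fintype.card_fin]; exact Nat.lt_succ_of_le (hD v))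
  choose m hm using this
  refine ⟨Fin (D+1), inferInstance, fun u v => f (C u v), m, Fintype.card_fin _,
    hE, hm, x, ?_⟩
  intro φ h1 _
  exact hx φ (fun u v h => hf _ (hT _ _ (φ.map_adj_iff.2 h)) _ (hT _ _ h) (h1 u v h))
end transport

section matching
variable {V : Type*} [Fintype V] {R : SimpleGraph V} {σ τ : V → V}

structure IsM (R : SimpleGraph V) (σ : V → V) : Prop where
  inv : ∀ v, σ (σ v) = v
  adj : ∀ v, σ v = v ∨ R.Adj v (σ v)

open Classical in
noncomputable def fx (σ : V → V) : ℕ := (Finset.univ.filter (fun v => σ v = v)).card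

structure MaxM (R : SimpleGraph V) (σ : V → V) : Prop extends IsM R σ where
  max : ∀ τ, IsM R τ → fx σ ≤ fx τ

theorem exists_max (R : SimpleGraph V) : ∃ σ, MaxM R σ := by
  classical
  have h : ∃ n, ∃ σ, IsM R σ ∧ fx σ = n := ⟨_, id, ⟨fun _ => rfl, fun _ => Or.inl rfl⟩, rfl⟩
  obtain ⟨σ, h1, h2⟩ := Nat.find_spec h
  exact ⟨σ, ⟨h1, fun τ hτ => by rw [h2]; exact Nat.find_min' h ⟨τ, hτ, rfl⟩⟩⟩

theorem MaxM.indep (h : MaxM R σ) {u w : V} (hu : σ u = u) (hw : σ w = w) : ¬ R.Adj u w := by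
  classical
  intro huw
  have hne := huw.ne
  let τ : V → V := fun v => if v = u then w else if v = w then u else σ v
  have tu : τ u = w := by simp [τ]
  have tw : τ w = u := by simp [τ, hne.symm]
  have tq : ∀ v, v ≠ u → v ≠ w → τ v = σ v := by intro v h1 h2; simp [τ, h1, h2]
  have hτ : IsM R τ := by
    constructor
    · intro v
      by_cases h1 : v = u
      · rw [h1, tu, tw]
      by_cases h2 : v = w
      · rw [h2, tw, tu]
      rw [tq v h1 h2, tq, h.inv]
      · intro h'; apply h1; rw [← h.inv v, h', hu]
      · intro h'; apply h2; rw [← h.inv v, h', hw]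
    · intro v
      by_cases h1 : v = u
      · rw [h1, tu]; exact Or.inr huw
      by_cases h2 : v = w
      · rw [h2, tw]; exact Or.inr huw.symm
      rw [tq v h1 h2]; exact h.adj v
  have := h.max τ hτ
  have h2 : fx τ < fx σ := by
    unfold fx
    apply Finset.card_lt_card
    refine Finset.ssubset_iff_subset_ne.2 ⟨?_, ?_⟩
    · intro v hv
      simp only [Finset.mem_filter, Finset.mem_univ, true_and] at hv ⊢
      by_cases h1 : v = u
      · rw [h1, hu]
      by_cases h2 : v = w
      · rw [h2, hw]
      rw [← tq v h1 h2]; exact hv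
    · intro he
      have : u ∈ Finset.univ.filter (fun v => σ v = v) := by simpa using hu
      rw [← he] at this
      simp only [Finset.mem_filter, Finset.mem_univ, true_and] at this
      rw [tu] at this
      exact hne this.symm
  omega

theorem MaxM.conj (h : MaxM R σ) {w q : V} (hw : σ w = w) (hq : R.Adj w (σ q)) :
    ∃ τ, MaxM R τ ∧ τ q = q ∧ ∀ u, u ≠ w → u ≠ q → σ u = u → τ u = u := by
  classical
  by_cases hwq : w = q
  · subst hwq; rw [hw] at hq; exact absurd rfl hq.ne
  have hqq : σ q ≠ q := fun h' => h.indep hw (by rw [h', h']) hq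
  let s := Equiv.swap w q
  let τ : V → V := fun v => s (σ (s v))
  have ss : ∀ v, s (s v) = v := fun v => Equiv.swap_apply_self w q v
  have sw : s w = q := Equiv.swap_apply_left w q
  have sq : s q = w := Equiv.swap_apply_right w q
  have so : ∀ v, v ≠ w → v ≠ q → s v = v := fun v h1 h2 => Equiv.swap_apply_of_ne_of_ne h1 h2
  have hτ : IsM R τ := by
    constructor
    · intro v; simp only [τ, ss, h.inv]
    · intro v
      simp only [τ]
      by_cases h1 : v = w
      · rw [h1, sw, so _ hq.ne' hqq]; exact Or.inr hq
      by_cases h2 : v = q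
      · rw [h2, sq, hw, sw]; exact Or.inl rfl
      rw [so v h1 h2]
      by_cases h3 : σ v = q
      · rw [h3, sq]
        right
        rw [← h3, h.inv] at hq; exact hq.symm
      · rw [so (σ v) _ h3]
        · exact h.adj v
        · intro h'; apply h1; rw [← h.inv v, h', hw]
  have hfx : fx τ = fx σ := by
    unfold fx
    apply Finset.card_bij (fun v _ => s v)
    · intro v hv
      simp only [Finset.mem_filter, Finset.mem_univ, true_and, τ] at hv ⊢
      apply s.injective; rw [ss]; exact hv
    · intro a _ b _ hab; exact s.injective hab
    · intro v hv
      simp only [Finset.mem_filter, Finset.mem_univ, true_and, τ] at hv ⊢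
      exact ⟨s v, by rw [ss, hv], ss v⟩
  refine ⟨τ, ⟨hτ, fun ρ hρ => by rw [hfx]; exact h.max ρ hρ⟩, ?_, ?_⟩
  · simp only [τ, sq, hw, sw]
  · intro u h1 h2 h3
    simp only [τ, so u h1 h2, h3]

/-- one fixed point per component -/
theorem one_fixed (hns : ∀ σ, MaxM R σ → ∀ w x, σ w = w → R.Adj w x → R.Adj w (σ x))
    (h : MaxM R σ) {w s : V} (hw : σ w = w) (hs : σ s = s) (hr : R.Reachable w s) : w = s := by
  have key : ∀ t, R.Reachable w t → ∃ τ, MaxM R τ ∧ τ t = t ∧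
      ∀ u, u ≠ w → σ u = u → u ≠ t ∧ τ u = u := by
    intro t ht
    rw [SimpleGraph.reachable_iff_reflTransGen] at ht
    induction ht with
    | refl => exact ⟨σ, h, hw, fun u h1 h2 => ⟨h1, h2⟩⟩
    | @tail s t _ hst ih =>
      obtain ⟨τ, hτ, h1, h2⟩ := ih
      obtain ⟨ρ, p1, p2, p3⟩ := hτ.conj h1 (hns τ hτ s t h1 hst)
      refine ⟨ρ, p1, p2, ?_⟩
      intro u hu hu'
      obtain ⟨q1, q2⟩ := h2 u hu hu'
      have : u ≠ t := by
        rintro rfl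
        exact hτ.indep h1 q2 hst
      exact ⟨this, p3 u q1 this q2⟩
  by_contra hne
  obtain ⟨τ, _, _, h3⟩ := key s hr
  exact (h3 s (Ne.symm hne) hs).1 rfl

def remM (R : SimpleGraph V) (σ : V → V) (hσ : ∀ v, σ (σ v) = v) : SimpleGraph V where
  Adj u v := R.Adj u v ∧ σ u ≠ v
  symm := ⟨fun u v h => ⟨h.1.symm, fun h' => h.2 (by rw [← h', hσ])⟩⟩
  loopless := ⟨fun u h => R.loopless.irrefl u h.1⟩

theorem remM_dg (hσ : ∀ v, σ (σ v) = v) (v : V) (h : R.Adj v (σ v)) :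
    dg (remM R σ hσ) v + 1 = dg R v := by
  classical
  unfold dg
  have : Finset.univ.filter (fun w => R.Adj v w) =
      insert (σ v) (Finset.univ.filter (fun w => (remM R σ hσ).Adj v w)) := by
    ext w
    simp only [Finset.mem_filter, Finset.mem_univ, true_and, Finset.mem_insert]
    change R.Adj v w ↔ w = σ v ∨ (R.Adj v w ∧ σ v ≠ w)
    constructor
    · intro hw
      by_cases h' : w = σ v
      · exact Or.inl h'
      · exact Or.inr ⟨hw, fun h'' => h' h''.symm⟩
    · rintro (rfl | h')
      · exact h
      · exact h'.1
  rw [this, Finset.card_insert_of_notMem]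
  intro hh
  exact (Finset.mem_filter.1 hh).2.2 rfl

end matching
end DMG

namespace DMG
section comb
variable {V : Type*} {γ β : Type*} {G R : SimpleGraph V} {C0 : V → V → γ} {C1 : V → V → β}

open Classical in
noncomputable def cb (R : SimpleGraph V) (C0 : V → V → γ) (C1 : V → V → β) (u v : V) : γ ⊕ β :=
  if R.Adj u v then Sum.inr (C1 u v) else Sum.inl (C0 u v)

theorem cb_pos {u v : V} (h : R.Adj u v) : cb R C0 C1 u v = Sum.inr (C1 u v) := by simp [cb, h]
theorem cb_neg {u v : V} (h : ¬ R.Adj u v) : cb R C0 C1 u v = Sum.inl (C0 u v) := by simp [cb, h]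

theorem cb_EC (h0 : EC (G \ R) C0) (h1 : EC R C1) : EC G (cb R C0 C1) := by
  constructor
  · intro u v h
    by_cases hR : R.Adj u v
    · rw [cb_pos hR, cb_pos hR.symm, h1.1 u v hR]
    · rw [cb_neg hR, cb_neg (fun h => hR h.symm), h0.1 u v ((SimpleGraph.sdiff_adj _ _ _ _).2 ⟨h, hR⟩)]
  · intro u v w h h' hc
    by_cases hR : R.Adj u v <;> by_cases hR' : R.Adj u w
    · rw [cb_pos hR, cb_pos hR'] at hc
      exact h1.2 u v w hR hR' (Sum.inr_injective hc)
    · rw [cb_pos hR, cb_neg hR'] at hc; cases hc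
    · rw [cb_neg hR, cb_pos hR'] at hc; cases hc
    · rw [cb_neg hR, cb_neg hR'] at hc
      exact h0.2 u v w ((SimpleGraph.sdiff_adj _ _ _ _).2 ⟨h, hR⟩)
        ((SimpleGraph.sdiff_adj _ _ _ _).2 ⟨h', hR'⟩) (Sum.inl_injective hc)

theorem cb_aut (hR : R ≤ G) (φ : G ≃g G)
    (hφ : ∀ u v, G.Adj u v → cb R C0 C1 (φ u) (φ v) = cb R C0 C1 u v) :
    (∀ u v, R.Adj (φ u) (φ v) ↔ R.Adj u v) ∧ (∀ u v, R.Adj u v → C1 (φ u) (φ v) = C1 u v) := by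
  have key : ∀ u v, G.Adj u v → (R.Adj (φ u) (φ v) ↔ R.Adj u v) := by
    intro u v h
    have := hφ u v h
    by_cases h1 : R.Adj u v <;> by_cases h2 : R.Adj (φ u) (φ v)
    · simp [h1, h2]
    · rw [cb_pos h1, cb_neg h2] at this; cases this
    · rw [cb_neg h1, cb_pos h2] at this; cases this
    · simp [h1, h2]
  have key2 : ∀ u v, R.Adj (φ u) (φ v) ↔ R.Adj u v := by
    intro u v
    by_cases h : G.Adj u v
    · exact key u v h
    · exact ⟨fun h' => absurd (φ.map_adj_iff.1 (hR h')) h, fun h' => absurd (hR h') h⟩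
  refine ⟨key2, fun u v h => ?_⟩
  have := hφ u v (hR h)
  rw [cb_pos h, cb_pos ((key2 u v).2 h)] at this
  exact Sum.inr_injective this

end comb

theorem TT_card (k : ℕ) (β : Type*) [Fintype β] :
    ((Finset.range k).disjSum (Finset.univ : Finset β)).card = k + Fintype.card β := by
  rw [Finset.card_disjSum, Finset.card_range, Finset.card_univ]

theorem cb_mem {V β : Type*} [Fintype β] {G R : SimpleGraph V} {C0 : V → V → ℕ} {C1 : V → V → β}
    {k : ℕ} (hk : ∀ u v, G.Adj u v → ¬ R.Adj u v → C0 u v < k) (u v : V) (h : G.Adj u v) :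
    cb R C0 C1 u v ∈ ((Finset.range k).disjSum (Finset.univ : Finset β)) := by
  by_cases hR : R.Adj u v
  · rw [cb_pos hR]; simp
  · rw [cb_neg hR]; simpa using hk u v h hR

section
variable {V : Type*} [Fintype V] {G R : SimpleGraph V} {σ τ : V → V}

theorem fourM (hτ : IsM R τ) (d' : ℕ) (hd' : 0 < d') (hRd : ∀ v, dg R v = d') (x : V)
    (hx : ∀ u v, R.Adj u v → τ u = u → τ v = v → u = x ∨ v = x) :
    ∃ C1 : V → V → Option (Fin d'), EC R C1 ∧ ∀ v, Miss R C1 v none ↔ τ v = v := by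
  classical
  have hle : remM R τ hτ.inv ≤ R := fun u v h => h.1
  obtain ⟨c, hc⟩ := fournier (remM R τ hτ.inv) d' hd' {v | τ v = v} x
    (fun v => (dg_mono hle v).trans (hRd v).le) (by
      intro v hv
      have := remM_dg hτ.inv v ((hτ.adj v).resolve_left hv)
      rw [hRd] at this
      omega)
    (fun u v h hu hv => hx u v (hle h) hu hv) _ le_rfl
  refine ⟨fun u v => if τ u = v then none else some (c u v), ⟨?_, ?_⟩, ?_⟩
  · intro u v h
    by_cases h1 : τ u = v
    · have : τ v = u := by rw [← h1, hτ.inv]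
      simp only [if_pos h1, if_pos this]
    · have : ¬ τ v = u := by intro h2; apply h1; rw [← h2, hτ.inv]
      simp only [if_neg h1, if_neg this]
      rw [hc.1 u v ⟨h, h1⟩]
  · intro u v w h h' he
    simp only at he
    by_cases h1 : τ u = v <;> by_cases h2 : τ u = w
    · rw [← h1, ← h2]
    · rw [if_pos h1, if_neg h2] at he; cases he
    · rw [if_neg h1, if_pos h2] at he; cases he
    · rw [if_neg h1, if_neg h2] at he
      exact hc.2 u v w ⟨h, h1⟩ ⟨h', h2⟩ (Option.some_injective _ he)
  · intro v
    constructor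
    · intro h
      by_contra h1
      exact h _ ((hτ.adj v).resolve_left h1) (if_pos rfl)
    · intro h w hw h1
      simp only [h] at h1
      rw [if_neg hw.ne] at h1
      cases h1

theorem step1 (hR : R ≤ G) {d k d' : ℕ} (hkd : k + d' = d) (hd' : 0 < d')
    (hGd : ∀ v, dg G v = d) (hRd : ∀ v, dg R v = d')
    {C0 : V → V → ℕ} (hC0 : EC (G \ R) C0) (hk : ∀ u v, G.Adj u v → ¬ R.Adj u v → C0 u v < k)
    (h : MaxM R σ) (w x : V) (hw : σ w = w) (hwx : R.Adj w x) (hn : ¬ R.Adj w (σ x)) : Win G d := by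
  classical
  have hxx : σ x ≠ x := fun h' => h.indep hw h' hwx
  have hxy : R.Adj x (σ x) := (h.adj x).resolve_left hxx
  have hwy : σ x ≠ w := fun h' => by
    have := h.inv x
    rw [h', hw] at this
    exact hwx.ne this
  have hy : ∀ z, σ z = z → ¬ R.Adj (σ x) z := by
    intro z hz hyz
    have hzw : z ≠ w := by rintro rfl; exact hn hyz.symm
    obtain ⟨ρ, p1, p2, p3⟩ := h.conj (w := w) (q := σ x) hw (by rw [h.inv]; exact hwx)
    exact p1.indep p2 (p3 z hzw hyz.ne' hz) hyz
  let τ : V → V := fun v => if v = x ∨ v = σ x then v else σ v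
  have t1 : ∀ v, (v = x ∨ v = σ x) → τ v = v := fun v hv => if_pos hv
  have t2 : ∀ v, ¬ (v = x ∨ v = σ x) → τ v = σ v := fun v hv => if_neg hv
  have hτ : IsM R τ := by
    constructor
    · intro v
      by_cases hv : v = x ∨ v = σ x
      · rw [t1 v hv, t1 v hv]
      · rw [t2 v hv, t2, h.inv]
        rintro (h' | h')
        · apply hv; right; rw [← h', h.inv]
        · apply hv; left; rw [← h.inv v, h', h.inv]
    · intro v
      by_cases hv : v = x ∨ v = σ x
      · left; exact t1 v hv
      · rw [t2 v hv]; exact h.adj v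
  have hfix : ∀ v, τ v = v → σ v = v ∨ v = x ∨ v = σ x := by
    intro v hv
    by_cases hv' : v = x ∨ v = σ x
    · exact Or.inr hv'
    · rw [t2 v hv'] at hv; exact Or.inl hv
  have hst : ∀ u v, R.Adj u v → τ u = u → τ v = v → u = x ∨ v = x := by
    intro u v huv hu hv
    rcases hfix u hu with h1 | h1 | h1 <;> rcases hfix v hv with h2 | h2 | h2
    · exact absurd huv (h.indep h1 h2)
    · exact Or.inr h2
    · subst h2; exact absurd huv.symm (hy u h1)
    · exact Or.inl h1
    · exact Or.inl h1
    · exact Or.inl h1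
    · subst h1; exact absurd huv (hy v h2)
    · exact Or.inr h2
    · rw [h1, h2] at huv; exact absurd rfl huv.ne
  obtain ⟨C1, hC1, hmiss⟩ := fourM hτ d' hd' hRd x hst
  refine win_of' d (fun v => (hGd v).le) _ (by
      rw [TT_card k (Option (Fin d')), Fintype.card_option, Fintype.card_fin]; omega)
      (cb_EC hC0 hC1) (cb_mem hk) x ?_
  intro φ hφ
  obtain ⟨a1, a2⟩ := cb_aut hR φ hφ
  have inv : ∀ v, τ v = v → τ (φ v) = φ v := by
    intro v hv
    rw [← hmiss] at hv ⊢
    intro z hz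
    obtain ⟨z, rfl⟩ := φ.surjective z
    rw [a1] at hz
    rw [a2 _ _ hz]
    exact hv z hz
  have tx := t1 x (Or.inl rfl)
  have ty := t1 (σ x) (Or.inr rfl)
  have tw : τ w = w := by
    by_cases hv' : w = x ∨ w = σ x
    · exact t1 w hv'
    · rw [t2 w hv', hw]
  by_contra hne
  have b1 := hst _ _ ((a1 x w).2 hwx.symm) (inv _ tx) (inv _ tw)
  have b2 := hst _ _ ((a1 x (σ x)).2 hxy) (inv _ tx) (inv _ ty)
  have := (b1.resolve_left hne).trans (b2.resolve_left hne).symm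
  exact hwy (φ.injective this).symm

end
end DMG

namespace DMG

structure RC {V β : Type*} [Fintype V] [Fintype β] (G R : SimpleGraph V) (C0 : V → V → ℕ)
    (C1 : V → V → β) (m : V → β) (k d' d : ℕ) : Prop where
  hR : R ≤ G
  hkd : k + d' = d
  hd' : 0 < d'
  hGd : ∀ v, dg G v = d
  hRd : ∀ v, dg R v = d'
  hC0 : EC (G \ R) C0
  hk : ∀ u v, G.Adj u v → ¬ R.Adj u v → C0 u v < k
  hC1 : EC R C1
  hm : ∀ v c, Miss R C1 v c ↔ c = m v
  hβ : Fintype.card β = d' + 1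

section
variable {V β : Type*} [Fintype V] [Fintype β] {G R : SimpleGraph V} {C0 : V → V → ℕ}
  {C1 : V → V → β} {m : V → β} {k d' d : ℕ}

theorem perm_EC (hC1 : EC R C1) (π : V → Equiv.Perm β) (hπ : ∀ u v, R.Adj u v → π u = π v) :
    EC R (fun u v => π u (C1 u v)) :=
  ⟨fun u v h => by simp only [hC1.1 u v h, hπ u v h],
    fun u v w h1 h2 h => hC1.2 u v w h1 h2 ((π u).injective h)⟩

theorem RC.card (h : RC G R C0 C1 m k d' d) :
    ((Finset.range k).disjSum (Finset.univ : Finset β)).card = d + 1 := by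
  rw [TT_card, h.hβ, ← h.hkd, add_assoc]

theorem RC.win_perm (h : RC G R C0 C1 m k d' d) (π : V → Equiv.Perm β)
    (hπ : ∀ u v, R.Adj u v → π u = π v) (x : V)
    (hx : ∀ φ : G ≃g G, (∀ u v, R.Adj (φ u) (φ v) ↔ R.Adj u v) →
      (∀ v, π (φ v) (m (φ v)) = π v (m v)) → φ x = x) : Win G d := by
  refine win_of d _ h.card (cb_EC h.hC0 (perm_EC h.hC1 π hπ)) (cb_mem h.hk)
    (fun v => Sum.inr (π v (m v))) (by simp) ?_ x ?_
  · intro v w hvw hc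
    by_cases hR : R.Adj v w
    · rw [cb_pos hR] at hc
      exact (h.hm v _).2 rfl w hR ((π v).injective (Sum.inr_injective hc))
    · rw [cb_neg hR] at hc; cases hc
  · intro φ h1 h2
    exact hx φ (cb_aut h.hR φ h1).1 (fun v => Sum.inr_injective (h2 v))

theorem RC.edge (h : RC G R C0 C1 m k d' d) (hw : ¬ Win G d) (π : V → Equiv.Perm β)
    (hπ : ∀ u v, R.Adj u v → π u = π v) (x y : V) (hxy : G.Adj x y) (hnR : ¬ R.Adj x y)
    (hm : π x (m x) = π y (m y)) :
    ∃ φ : G ≃g G, φ x = y ∧ φ y = x ∧ (∀ u v, R.Adj (φ u) (φ v) ↔ R.Adj u v) ∧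
      (∀ v, π (φ v) (m (φ v)) = π v (m v)) ∧
      ∀ u v, G.Adj u v → ¬ R.Adj u v → C0 (φ u) (φ v) = C0 u v := by
  classical
  let P : V → V → Prop := fun u v => (u = x ∧ v = y) ∨ (u = y ∧ v = x)
  have Ps : ∀ {u v}, P u v → P v u := fun h => h.elim (fun h => Or.inr ⟨h.2, h.1⟩) (fun h => Or.inl ⟨h.2, h.1⟩)
  let K := cb R C0 (fun u v => π u (C1 u v))
  have hK : EC G K := cb_EC h.hC0 (perm_EC h.hC1 π hπ)
  let Ce : V → V → ℕ ⊕ β := fun u v => if P u v then Sum.inr (π x (m x)) else K u v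
  let me : V → ℕ ⊕ β := fun v => if v = x ∨ v = y then Sum.inl (C0 x y) else Sum.inr (π v (m v))
  have Ce1 : ∀ {u v}, P u v → Ce u v = Sum.inr (π x (m x)) := fun h => if_pos h
  have Ce2 : ∀ {u v}, ¬ P u v → Ce u v = K u v := fun h => if_neg h
  have me1 : ∀ {v}, (v = x ∨ v = y) → me v = Sum.inl (C0 x y) := fun h => if_pos h
  have me2 : ∀ {v}, ¬ (v = x ∨ v = y) → me v = Sum.inr (π v (m v)) := fun h => if_neg h
  have KR : ∀ v w, K v w ≠ Sum.inr (π v (m v)) := by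
    intro v w hc
    by_cases hR : R.Adj v w
    · simp only [K, cb_pos hR] at hc
      exact (h.hm v _).2 rfl w hR ((π v).injective (Sum.inr_injective hc))
    · simp only [K, cb_neg hR] at hc; cases hc
  have hPK : ∀ {u v}, P u v → ∀ w, K u w ≠ Sum.inr (π x (m x)) := by
    rintro u v (⟨rfl, rfl⟩ | ⟨rfl, rfl⟩) w
    · exact KR _ _
    · rw [hm]; exact KR _ _
  have sym0 : C0 y x = C0 x y := (h.hC0.1 x y ((SimpleGraph.sdiff_adj _ _ _ _).2 ⟨hxy, hnR⟩)).symm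
  have hnR' : ¬ R.Adj y x := fun h => hnR h.symm
  have hEC : EC G Ce := by
    constructor
    · intro u v huv
      by_cases hP : P u v
      · rw [Ce1 hP, Ce1 (Ps hP)]
      · rw [Ce2 hP, Ce2 (fun h => hP (Ps h)), hK.1 u v huv]
    · intro u v w huv huw hc
      by_cases h1 : P u v <;> by_cases h2 : P u w
      · rcases h1 with ⟨a1, b1⟩ | ⟨a1, b1⟩ <;> rcases h2 with ⟨a2, b2⟩ | ⟨a2, b2⟩
        · rw [b1, b2]
        · rw [a1] at a2; exact absurd a2 hxy.ne
        · rw [a1] at a2; exact absurd a2.symm hxy.ne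
        · rw [b1, b2]
      · rw [Ce1 h1, Ce2 h2] at hc; exact absurd hc.symm (hPK h1 w)
      · rw [Ce2 h1, Ce1 h2] at hc; exact absurd hc (hPK h2 v)
      · rw [Ce2 h1, Ce2 h2] at hc; exact hK.2 u v w huv huw hc
  have hT : ∀ u v, G.Adj u v → Ce u v ∈ ((Finset.range k).disjSum (Finset.univ : Finset β)) := by
    intro u v huv
    by_cases hP : P u v
    · rw [Ce1 hP]; simp
    · rw [Ce2 hP]; exact cb_mem h.hk u v huv
  have hmT : ∀ v, me v ∈ ((Finset.range k).disjSum (Finset.univ : Finset β)) := by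
    intro v
    by_cases hv : v = x ∨ v = y
    · rw [me1 hv]; simpa using h.hk x y hxy hnR
    · rw [me2 hv]; simp
  have Kl : ∀ v w, G.Adj v w → K v w = Sum.inl (C0 x y) → ¬ R.Adj v w ∧ C0 v w = C0 x y := by
    intro v w _ hc
    by_cases hR : R.Adj v w
    · simp only [K, cb_pos hR] at hc; cases hc
    · simp only [K, cb_neg hR] at hc; exact ⟨hR, Sum.inl_injective hc⟩
  have hmm : ∀ v, Miss G Ce v (me v) := by
    intro v w hvw hc
    by_cases hv : v = x ∨ v = y
    · rw [me1 hv] at hc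
      by_cases hP : P v w
      · rw [Ce1 hP] at hc; cases hc
      · rw [Ce2 hP] at hc
        obtain ⟨q1, q2⟩ := Kl v w hvw hc
        apply hP
        rcases hv with rfl | rfl
        · exact Or.inl ⟨rfl, h.hC0.2 _ _ _ ((SimpleGraph.sdiff_adj _ _ _ _).2 ⟨hvw, q1⟩)
            ((SimpleGraph.sdiff_adj _ _ _ _).2 ⟨hxy, hnR⟩) q2⟩
        · exact Or.inr ⟨rfl, h.hC0.2 _ _ _ ((SimpleGraph.sdiff_adj _ _ _ _).2 ⟨hvw, q1⟩)
            ((SimpleGraph.sdiff_adj _ _ _ _).2 ⟨hxy.symm, hnR'⟩) (q2.trans sym0.symm)⟩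
    · have hP : ¬ P v w := fun h => hv (h.elim (fun h => Or.inl h.1) (fun h => Or.inr h.1))
      rw [me2 hv, Ce2 hP] at hc
      exact KR v w hc
  have key : ¬ ∀ φ : G ≃g G, (∀ u v, G.Adj u v → Ce (φ u) (φ v) = Ce u v) →
      (∀ v, me (φ v) = me v) → φ x = x := fun hx => hw (win_of d _ h.card hEC hT me hmT hmm x hx)
  push Not at key
  obtain ⟨φ, h1, h2, hne⟩ := key
  have hp : ∀ v, (φ v = x ∨ φ v = y) ↔ (v = x ∨ v = y) := by
    intro v
    have := h2 v
    by_cases c1 : φ v = x ∨ φ v = y <;> by_cases c2 : v = x ∨ v = y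
    · simp [c1, c2]
    · rw [me1 c1, me2 c2] at this; cases this
    · rw [me2 c1, me1 c2] at this; cases this
    · simp [c1, c2]
  have f1 : φ x = y := ((hp x).2 (Or.inl rfl)).resolve_left hne
  have f2 : φ y = x := ((hp y).2 (Or.inr rfl)).resolve_right
    (fun h' => hxy.ne (φ.injective (f1.trans h'.symm)))
  have hPφ : ∀ u v, P u v → P (φ u) (φ v) := by
    rintro u v (⟨rfl, rfl⟩ | ⟨rfl, rfl⟩)
    · exact Or.inr ⟨f1, f2⟩
    · exact Or.inl ⟨f2, f1⟩
  have hPφ' : ∀ u v, P (φ u) (φ v) → P u v := by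
    rintro u v (⟨a, b⟩ | ⟨a, b⟩)
    · rw [← f2] at a; rw [← f1] at b
      exact Or.inr ⟨φ.injective a, φ.injective b⟩
    · rw [← f1] at a; rw [← f2] at b
      exact Or.inl ⟨φ.injective a, φ.injective b⟩
  have hKφ : ∀ u v, G.Adj u v → ¬ P u v → K (φ u) (φ v) = K u v := by
    intro u v huv hP
    have := h1 u v huv
    rwa [Ce2 hP, Ce2 (fun h => hP (hPφ' _ _ h))] at this
  have PR : ∀ u v, P u v → ¬ R.Adj u v := by
    rintro u v (⟨rfl, rfl⟩ | ⟨rfl, rfl⟩)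
    · exact hnR
    · exact hnR'
  have hRR : ∀ u v, R.Adj (φ u) (φ v) ↔ R.Adj u v := by
    intro u v
    by_cases hP : P u v
    · exact ⟨fun h => absurd h (PR _ _ (hPφ _ _ hP)), fun h => absurd h (PR _ _ hP)⟩
    by_cases huv : G.Adj u v
    · have := hKφ u v huv hP
      by_cases h1 : R.Adj u v <;> by_cases h2 : R.Adj (φ u) (φ v)
      · simp [h1, h2]
      · simp only [K, cb_pos h1, cb_neg h2] at this; cases this
      · simp only [K, cb_neg h1, cb_pos h2] at this; cases this
      · simp [h1, h2]
    · exact ⟨fun h' => absurd (φ.map_adj_iff.1 (h.hR h')) huv, fun h' => absurd (h.hR h') huv⟩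
  refine ⟨φ, f1, f2, hRR, ?_, ?_⟩
  · intro v
    by_cases hv : v = x ∨ v = y
    · rcases hv with rfl | rfl
      · rw [f1, hm]
      · rw [f2, hm]
    · have := h2 v
      rw [me2 hv, me2 (fun h => hv ((hp v).1 h))] at this
      exact Sum.inr_injective this
  · intro u v huv hR
    by_cases hP : P u v
    · rcases hP with ⟨rfl, rfl⟩ | ⟨rfl, rfl⟩
      · rw [f1, f2, sym0]
      · rw [f1, f2, sym0]
    · have := hKφ u v huv hP
      have hR' : ¬ R.Adj (φ u) (φ v) := fun h => hR ((hRR u v).1 h)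
      simp only [K, cb_neg hR, cb_neg hR'] at this
      exact Sum.inl_injective this

end
end DMG

namespace DMG

section
variable {V β : Type*} [Fintype V] [Fintype β] {G R : SimpleGraph V} {C0 : V → V → ℕ}
  {C1 : V → V → β} {m : V → β} {k d' d : ℕ}

def cc (R : SimpleGraph V) (v : V) : R.ConnectedComponent := R.connectedComponentMk v

theorem cc_adj {u v : V} (h : R.Adj u v) : cc R u = cc R v :=
  ConnectedComponent.eq.2 h.reachable

theorem cc_map (φ : G ≃g G) (h : ∀ u v, R.Adj (φ u) (φ v) ↔ R.Adj u v) (u v : V) :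
    cc R (φ u) = cc R (φ v) ↔ cc R u = cc R v := by
  let ψ : R ≃g R := ⟨φ.toEquiv, fun {a b} => h a b⟩
  unfold cc
  rw [ConnectedComponent.eq, ConnectedComponent.eq]
  exact ψ.reachable_iff (u := u) (v := v)

theorem RC.miss_ne (h : RC G R C0 C1 m k d' d) {u v : V} : R.Adj u v → C1 u v ≠ m u :=
  fun h' => (h.hm u (m u)).2 rfl v h'

theorem RC.caseA (h : RC G R C0 C1 m k d' d) (z0 : β)
    (hz : ∀ u v, m u = z0 → m v = z0 → cc R u = cc R v → u = v) (w a b : V) (hw : m w = z0)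
    (hab : a ≠ b) (ha : cc R a = cc R w) (hb : cc R b = cc R w) (hm : m a = m b) : Win G d := by
  classical
  let P : R.ConnectedComponent → β → Prop := fun c z => ∃ p q, p ≠ q ∧ cc R p = c ∧ cc R q = c ∧
    m p = z ∧ m q = z
  let col : R.ConnectedComponent → β := fun c => if hc : ∃ z, P c z then hc.choose else z0
  have hcol : ∀ c, (∃ z, P c z) → P c (col c) := by
    intro c hc
    simp only [col, dif_pos hc]
    exact hc.choose_spec
  let π : V → Equiv.Perm β := fun v => if cc R v = cc R w then 1 else Equiv.swap z0 (col (cc R v))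
  have π1 : ∀ v, cc R v = cc R w → π v = 1 := fun v h => if_pos h
  have π2 : ∀ v, cc R v ≠ cc R w → π v = Equiv.swap z0 (col (cc R v)) := fun v h => if_neg h
  refine h.win_perm π ?_ w ?_
  · intro u v huv
    simp only [π, cc_adj huv]
  · intro φ hφ hl
    have hcm := cc_map φ hφ
    have hlw := hl w
    rw [π1 w rfl] at hlw
    by_cases hc : cc R (φ w) = cc R w
    · rw [π1 _ hc] at hlw
      exact hz _ _ (hlw.trans hw) hw hc
    · exfalso
      have lab : ∀ v, cc R v = cc R w → Equiv.swap z0 (col (cc R (φ w))) (m (φ v)) = m v := by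
        intro v hv
        have h1 : cc R (φ v) = cc R (φ w) := (hcm v w).2 hv
        have h2 := hl v
        rw [π1 v hv, π2 _ (by rw [h1]; exact hc), h1] at h2
        exact h2
      have hmab : m (φ a) = m (φ b) := (Equiv.swap _ _).injective ((lab a ha).trans (hm.trans (lab b hb).symm))
      obtain ⟨p, q, hpq, hp, hq, mp, mq⟩ := hcol (cc R (φ w))
        ⟨_, φ a, φ b, fun h => hab (φ.injective h), (hcm _ _).2 ha, (hcm _ _).2 hb, rfl, hmab.symm⟩
      obtain ⟨p, rfl⟩ := φ.surjective p
      obtain ⟨q, rfl⟩ := φ.surjective q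
      have hp' := (hcm _ _).1 hp
      have hq' := (hcm _ _).1 hq
      have e1 := lab p hp'
      have e2 := lab q hq'
      rw [mp, Equiv.swap_apply_right] at e1
      rw [mq, Equiv.swap_apply_right] at e2
      exact hpq (congrArg φ (hz p q e1.symm e2.symm (hp'.trans hq'.symm)))

def Rb (R : SimpleGraph V) (m : V → β) (v : V) : Prop :=
  ∀ a b, cc R a = cc R v → cc R b = cc R v → m a = m b → a = b

theorem RC.rb1 (h : RC G R C0 C1 m k d' d) {v : V} (hv : Rb R m v) :
    (∀ c, ∃ a, cc R a = cc R v ∧ m a = c) ∧ ∀ a, cc R a = cc R v → a = v ∨ R.Adj v a := by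
  classical
  let N := insert v (Finset.univ.filter (fun w => R.Adj v w))
  have hN : ∀ a ∈ N, cc R a = cc R v := by
    intro a ha
    simp only [N, Finset.mem_insert, Finset.mem_filter, Finset.mem_univ, true_and] at ha
    rcases ha with rfl | ha
    · rfl
    · exact (cc_adj ha).symm
  have hc : N.card = d' + 1 := by
    rw [Finset.card_insert_of_notMem (by simp), ← h.hRd v, dg]
  have hi : (N.image m) = Finset.univ := by
    rw [← Finset.card_eq_iff_eq_univ, Finset.card_image_of_injOn, hc, h.hβ]
    intro a ha b hb hab
    exact hv a b (hN a ha) (hN b hb) hab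
  have h1 : ∀ c, ∃ a ∈ N, m a = c := by
    intro c
    have : c ∈ N.image m := by rw [hi]; exact Finset.mem_univ c
    simpa using this
  refine ⟨fun c => ?_, fun a ha => ?_⟩
  · obtain ⟨a, ha, hac⟩ := h1 c
    exact ⟨a, hN a ha, hac⟩
  · obtain ⟨a', ha', e⟩ := h1 (m a)
    rw [hv a a' ha (hN a' ha') e.symm]
    simpa [N] using ha'

theorem RC.rb2 (h : RC G R C0 C1 m k d' d) {a b : V} (hv : Rb R m a) (hab : cc R a = cc R b)
    (hne : a ≠ b) : R.Adj a b :=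
  ((h.rb1 hv).2 b hab.symm).resolve_left (fun h => hne h.symm)

theorem RC.rbStep (h : RC G R C0 C1 m k d' d) (hw : ¬ Win G d) {x y : V} (hx : Rb R m x)
    (hxy : G.Adj x y) : Rb R m y := by
  classical
  by_cases hc : cc R x = cc R y
  · intro a b ha hb; exact hx a b (ha.trans hc.symm) (hb.trans hc.symm)
  have hnR : ¬ R.Adj x y := fun h => hc (cc_adj h)
  let π : V → Equiv.Perm β := fun v => if cc R v = cc R x then Equiv.swap (m x) (m y) else 1
  have π1 : ∀ v, cc R v = cc R x → π v = Equiv.swap (m x) (m y) := fun v h => if_pos h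
  have π2 : ∀ v, cc R v ≠ cc R x → π v = 1 := fun v h => if_neg h
  obtain ⟨φ, f1, f2, hφ, hl, -⟩ := h.edge hw π (by intro u v huv; simp only [π, cc_adj huv]) x y hxy hnR
    (by rw [π1 x rfl, π2 y (fun h => hc h.symm), Equiv.swap_apply_left]; rfl)
  intro a b ha hb hab
  have la := hl a
  have lb := hl b
  have ca : cc R (φ a) = cc R x := by rw [← f2]; exact (cc_map φ hφ _ _).2 ha
  have cb : cc R (φ b) = cc R x := by rw [← f2]; exact (cc_map φ hφ _ _).2 hb
  rw [π1 _ ca, π2 _ (by rw [ha]; exact fun h => hc h.symm)] at la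
  rw [π1 _ cb, π2 _ (by rw [hb]; exact fun h => hc h.symm)] at lb
  have : m (φ a) = m (φ b) := (Equiv.swap _ _).injective (la.trans (Eq.trans hab lb.symm))
  exact φ.injective (hx _ _ ca cb this)

theorem RC.rbAll (h : RC G R C0 C1 m k d' d) (hG : G.Connected) (hw : ¬ Win G d) {x : V} (hx : Rb R m x)
    (y : V) : Rb R m y := by
  obtain ⟨p⟩ := hG.preconnected x y
  induction p with
  | nil => exact hx
  | cons hadj _ ih => exact ih (h.rbStep hw hx hadj)

theorem RC.nbr (h : RC G R C0 C1 m k d' d) {l : ℕ} (hl : l < k) (v : V) :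
    ∃ w, (G \ R).Adj v w ∧ C0 v w = l := by
  classical
  have h1 : dg (G \ R) v + d' = d := by
    rw [← h.hRd v, ← h.hGd v, dg, dg, dg, ← Finset.card_union_of_disjoint]
    · congr 1
      ext w
      simp only [Finset.mem_union, Finset.mem_filter, Finset.mem_univ, true_and, sdiff_adj]
      constructor
      · rintro (h' | h')
        · exact h'.1
        · exact h.hR h'
      · intro h'
        by_cases hR : R.Adj v w
        · exact Or.inr hR
        · exact Or.inl ⟨h', hR⟩
    · rw [Finset.disjoint_left]
      intro w h1 h2
      simp only [Finset.mem_filter, Finset.mem_univ, true_and, sdiff_adj] at h1 h2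
      exact h1.2 h2
  have h2 : dg (G \ R) v = k := by have := h.hkd; omega
  have h3 : ((Finset.univ.filter (fun w => (G \ R).Adj v w)).image (C0 v)) = Finset.range k := by
    apply Finset.eq_of_subset_of_card_le
    · intro c hc
      simp only [Finset.mem_image, Finset.mem_filter, Finset.mem_univ, true_and, sdiff_adj] at hc
      obtain ⟨w, hw, rfl⟩ := hc
      exact Finset.mem_range.2 (h.hk v w hw.1 hw.2)
    · rw [Finset.card_range, Finset.card_image_of_injOn]
      · rw [← h2, dg]; exact le_of_eq (by congr)
      · intro a ha b hb hab
        simp only [Finset.coe_filter, Finset.mem_univ, true_and, Set.mem_setOf_eq] at ha hb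
        exact h.hC0.2 v a b ha hb hab
  have : l ∈ Finset.range k := Finset.mem_range.2 hl
  rw [← h3] at this
  simpa using this

theorem RC.fourb (h : RC G R C0 C1 m k d' d) (hw : ¬ Win G d) (hrb : ∀ v, Rb R m v) {l : ℕ} (hl : l < k)
    (ν : V → V) (hν : ∀ v, (G \ R).Adj v (ν v)) (hνl : ∀ v, C0 v (ν v) = l)
    (hinv : ∀ v, ν (ν v) = v) (hcc : ∀ v, cc R (ν v) ≠ cc R v) (hu : ∀ v w, (G \ R).Adj v w → C0 v w = l → w = ν v)
    {x b : V} (hxb : cc R x = cc R b) : cc R (ν x) = cc R (ν b) := by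
  classical
  by_contra hne
  obtain ⟨b', cb', mb'⟩ := (h.rb1 (hrb (ν x))).1 (Equiv.swap (m x) (m (ν x)) (m b))
  let π0 : V → Equiv.Perm β := fun v => if cc R v = cc R x then Equiv.swap (m x) (m (ν x)) else 1
  obtain ⟨c0, hc0⟩ : ∃ c0, c0 ≠ π0 (ν b') (m (ν b')) := by
    have : Nontrivial β := Fintype.one_lt_card_iff_nontrivial.1 (by have := h.hβ; have := h.hd'; omega)
    exact exists_ne _
  let ρ : Equiv.Perm β := if cc R (ν b') = cc R (ν b) then 1 else Equiv.swap (m (ν b)) c0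
  let π : V → Equiv.Perm β := fun v => if cc R v = cc R (ν b) then ρ else π0 v
  have π1 : ∀ v, cc R v = cc R x → π v = Equiv.swap (m x) (m (ν x)) := by
    intro v hv
    have : cc R v ≠ cc R (ν b) := by rw [hv, hxb]; exact (hcc b).symm
    simp only [π, π0, if_neg this, if_pos hv]
  have π2 : ∀ v, cc R v = cc R (ν x) → π v = 1 := by
    intro v hv
    have h1 : cc R v ≠ cc R (ν b) := by rw [hv]; exact hne
    have h2 : cc R v ≠ cc R x := by rw [hv]; exact hcc x
    simp only [π, π0, if_neg h1, if_neg h2]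
  obtain ⟨φ, f1, f2, hφ, hl, hC⟩ := h.edge hw π (by intro u v huv; simp only [π, π0, cc_adj huv]) x (ν x)
    ((sdiff_adj _ _ _ _).1 (hν x)).1 ((sdiff_adj _ _ _ _).1 (hν x)).2
    (by rw [π1 x rfl, π2 _ rfl, Equiv.swap_apply_left]; rfl)
  have cb : cc R (φ b) = cc R (ν x) := by rw [← f1]; exact (cc_map φ hφ _ _).2 hxb.symm
  have fb : φ b = b' := by
    apply hrb (ν x) _ _ cb cb'
    have := hl b
    rw [π2 _ cb, π1 b hxb.symm] at this
    rw [mb']; exact this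
  have fq : φ (ν b) = ν b' := by
    apply hu
    · rw [← fb, sdiff_adj, φ.map_adj_iff, hφ, ← sdiff_adj]; exact hν b
    · rw [← fb]
      have := (sdiff_adj _ _ _ _).1 (hν b)
      rw [hC _ _ this.1 this.2, hνl]
  have fin := hl (ν b)
  rw [fq] at fin
  by_cases hq : cc R (ν b') = cc R (ν b)
  · have hr : ρ = 1 := if_pos hq
    simp only [π, if_pos hq, if_true, hr] at fin
    have h1 := hrb (ν b) _ _ hq rfl fin
    have h2 : b' = b := by rw [← hinv b', h1, hinv]
    rw [h2, ← hxb] at cb'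
    exact hcc x cb'.symm
  · have hr : ρ = Equiv.swap (m (ν b)) c0 := if_neg hq
    simp only [π, if_neg hq, if_true, hr, Equiv.swap_apply_left] at fin
    exact hc0 fin.symm

theorem RC.fourc (h : RC G R C0 C1 m k d' d) (hrb : ∀ v, Rb R m v) {l : ℕ} (hl : l < k)
    (ν : V → V) (hνl : ∀ v, C0 v (ν v) = l)
    (hinv : ∀ v, ν (ν v) = v) (hcc : ∀ v, cc R (ν v) ≠ cc R v) (hu : ∀ v w, (G \ R).Adj v w → C0 v w = l → w = ν v)
    (hcomp : ∀ x b, cc R x = cc R b → cc R (ν x) = cc R (ν b)) :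
    ∃ C : V → V → Fin d, EC G C := by
  classical
  have : Finite R.ConnectedComponent := Quot.finite _
  obtain ⟨ι, hι⟩ := exists_injective_nat R.ConnectedComponent
  let rep : V → Prop := fun v => ι (cc R v) < ι (cc R (ν v))
  let ρ : V → V := fun v => if rep v then v else ν v
  have hρν : ∀ v, ρ (ν v) = ρ v := by
    intro v
    have hne : ι (cc R (ν v)) ≠ ι (cc R v) := fun h => hcc v (hι h)
    by_cases hr : rep v
    · have : ¬ rep (ν v) := by simp only [rep, hinv] at hr ⊢; omega
      simp only [ρ, if_pos hr, if_neg this, hinv]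
    · have : rep (ν v) := by simp only [rep, hinv] at hr ⊢; omega
      simp only [ρ, if_neg hr, if_pos this]
  have hrep : ∀ u v, cc R u = cc R v → (rep u ↔ rep v) := by
    intro u v huv; simp only [rep, huv, hcomp u v huv]
  have νinj : ∀ u v, ν u = ν v → u = v := fun u v h => by rw [← hinv u, h, hinv]
  have hρR : ∀ u v, R.Adj u v → R.Adj (ρ u) (ρ v) := by
    intro u v huv
    have hc := cc_adj huv
    by_cases hr : rep u
    · simp only [ρ, if_pos hr, if_pos ((hrep u v hc).1 hr)]; exact huv
    · simp only [ρ, if_neg hr, if_neg (fun h' => hr ((hrep u v hc).2 h'))]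
      exact h.rb2 (hrb _) (hcomp u v hc) (fun h' => huv.ne (νinj _ _ h'))
  have hρi : ∀ u v, cc R u = cc R v → ρ u = ρ v → u = v := by
    intro u v hc he
    by_cases hr : rep u
    · simpa only [ρ, if_pos hr, if_pos ((hrep u v hc).1 hr)] using he
    · simp only [ρ, if_neg hr, if_neg (fun h' => hr ((hrep u v hc).2 h'))] at he
      exact νinj _ _ he
  let C : V → V → ℕ ⊕ β := fun u v => if R.Adj u v then Sum.inr (C1 (ρ u) (ρ v)) else
    if C0 u v = l then Sum.inr (m (ρ u)) else Sum.inl (C0 u v)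
  have c1 : ∀ {u v}, R.Adj u v → C u v = Sum.inr (C1 (ρ u) (ρ v)) := fun h => if_pos h
  have c2 : ∀ {u v}, ¬ R.Adj u v → C0 u v = l → C u v = Sum.inr (m (ρ u)) := fun h h' => by
    simp only [C, if_neg h, if_pos h']
  have c3 : ∀ {u v}, ¬ R.Adj u v → C0 u v ≠ l → C u v = Sum.inl (C0 u v) := fun h h' => by
    simp only [C, if_neg h, if_neg h']
  have sd : ∀ {u v}, G.Adj u v → ¬ R.Adj u v → (G \ R).Adj u v := fun h h' => (sdiff_adj _ _ _ _).2 ⟨h, h'⟩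
  have hC : EC G C := by
    constructor
    · intro u v huv
      by_cases hR : R.Adj u v
      · rw [c1 hR, c1 hR.symm, h.hC1.1 _ _ (hρR u v hR)]
      have hR' : ¬ R.Adj v u := fun h => hR h.symm
      have e := h.hC0.1 u v (sd huv hR)
      by_cases h0 : C0 u v = l
      · rw [c2 hR h0, c2 hR' (e ▸ h0), hu u v (sd huv hR) h0, hρν]
      · rw [c3 hR h0, c3 hR' (e ▸ h0), e]
    · intro u v w huv huw he
      by_cases h1 : R.Adj u v <;> by_cases h2 : R.Adj u w
      · rw [c1 h1, c1 h2] at he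
        have := h.hC1.2 _ _ _ (hρR u v h1) (hρR u w h2) (Sum.inr_injective he)
        exact hρi v w ((cc_adj h1).symm.trans (cc_adj h2)) this
      · by_cases h0 : C0 u w = l
        · rw [c1 h1, c2 h2 h0] at he
          exact absurd (Sum.inr_injective he) (h.miss_ne (hρR u v h1))
        · rw [c1 h1, c3 h2 h0] at he; cases he
      · by_cases h0 : C0 u v = l
        · rw [c1 h2, c2 h1 h0] at he
          exact absurd (Sum.inr_injective he).symm (h.miss_ne (hρR u w h2))
        · rw [c1 h2, c3 h1 h0] at he; cases he
      · by_cases h0 : C0 u v = l <;> by_cases h0' : C0 u w = l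
        · rw [hu u v (sd huv h1) h0, hu u w (sd huw h2) h0']
        · rw [c2 h1 h0, c3 h2 h0'] at he; cases he
        · rw [c3 h1 h0, c2 h2 h0'] at he; cases he
        · rw [c3 h1 h0, c3 h2 h0'] at he
          exact h.hC0.2 u v w (sd huv h1) (sd huw h2) (Sum.inl_injective he)
  have hcard : (((Finset.range k).erase l).disjSum (Finset.univ : Finset β)).card = d := by
    rw [Finset.card_disjSum, Finset.card_erase_of_mem (Finset.mem_range.2 hl), Finset.card_range,
      Finset.card_univ, h.hβ]
    have := h.hkd; omega
  obtain ⟨f, hf⟩ := exists_inj _ d hcard (by have := h.hkd; omega)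
  refine ⟨_, ec_map hC _ ?_ f hf⟩
  intro u v huv
  by_cases hR : R.Adj u v
  · rw [c1 hR]; simp
  by_cases h0 : C0 u v = l
  · rw [c2 hR h0]; simp
  · rw [c3 hR h0]; simpa [h0] using h.hk u v huv hR

theorem RC.stage (h : RC G R C0 C1 m k d' d) (hG : G.Connected) (z0 : β)
    (hz : ∀ u v, m u = z0 → m v = z0 → cc R u = cc R v → u = v) (w : V) (hw : m w = z0) :
    Win G d ∨ ∃ C : V → V → Fin d, EC G C := by
  classical
  by_cases hW : Win G d
  · exact Or.inl hW
  right
  have hrw : Rb R m w := by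
    intro a b ha hb hab
    by_contra hne
    exact hW (h.caseA z0 hz w a b hw hne ha hb hab)
  have hrb := h.rbAll hG hW hrw
  by_cases hE : ∃ x y, G.Adj x y ∧ ¬ R.Adj x y
  · obtain ⟨x, y, hxy, hnR⟩ := hE
    have hl := h.hk x y hxy hnR
    choose ν hν hνl using fun v => h.nbr hl v
    have hu : ∀ v w, (G \ R).Adj v w → C0 v w = C0 x y → w = ν v := fun v w h1 h2 =>
      h.hC0.2 v _ _ h1 (hν v) (h2.trans (hνl v).symm)
    have hinv : ∀ v, ν (ν v) = v := fun v =>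
      (hu (ν v) v (hν v).symm ((h.hC0.1 _ _ (hν v)).symm.trans (hνl v))).symm
    have hcc : ∀ v, cc R (ν v) ≠ cc R v := fun v hc =>
      ((sdiff_adj _ _ _ _).1 (hν v)).2 (h.rb2 (hrb v) hc.symm (hν v).ne)
    exact h.fourc hrb hl ν hνl hinv hcc hu
      (fun x b hxb => h.fourb hW hrb hl ν hν hνl hinv hcc hu hxb)
  · push Not at hE
    exfalso
    apply hW
    have hall : ∀ v, cc R v = cc R w := by
      intro v
      apply ConnectedComponent.eq.2
      exact (hG.preconnected v w).mono (fun a b h => hE a b h)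
    refine h.win_perm (fun _ => 1) (fun _ _ _ => rfl) w ?_
    intro φ _ hl
    exact hrw _ _ (hall _) (hall _) (hl w)

end
end DMG

namespace DMG

section
variable {V : Type*} [Fintype V] {G : SimpleGraph V}

theorem regular (hG : G.Connected) (d : ℕ) (hd : 0 < d) (hGd : ∀ v, dg G v = d) :
    ∀ d' k (R : SimpleGraph V) (C0 : V → V → ℕ), R ≤ G → (∀ v, dg R v = d') → EC (G \ R) C0 →
      (∀ u v, G.Adj u v → ¬ R.Adj u v → C0 u v < k) → k + d' = d →
      Win G d ∨ ∃ C : V → V → Fin d, EC G C := by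
  classical
  intro d'
  induction d' with
  | zero =>
    intro k R C0 hR hRd hC0 hk hkd
    right
    have hno : ∀ u v, ¬ R.Adj u v := by
      intro u v huv
      have := hRd u
      rw [dg, Finset.card_eq_zero] at this
      have h2 : v ∈ Finset.univ.filter (fun w => R.Adj u w) := by simpa using huv
      have h3 : v ∈ (∅ : Finset V) := by rw [← this]; convert h2
      simp at h3
    have hE : EC G C0 := ⟨fun u v h => hC0.1 u v ((sdiff_adj _ _ _ _).2 ⟨h, hno _ _⟩),
      fun u v w h h' => hC0.2 u v w ((sdiff_adj _ _ _ _).2 ⟨h, hno _ _⟩)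
        ((sdiff_adj _ _ _ _).2 ⟨h', hno _ _⟩)⟩
    obtain ⟨f, hf⟩ := exists_inj (Finset.range k) d (by rw [Finset.card_range]; omega) hd
    exact ⟨_, ec_map hE _ (fun u v h => Finset.mem_range.2 (hk u v h (hno _ _))) f hf⟩
  | succ e ih =>
    intro k R C0 hR hRd hC0 hk hkd
    obtain ⟨σ, hσ⟩ := exists_max R
    by_cases hfix : ∃ w, σ w = w
    · obtain ⟨w, hw⟩ := hfix
      by_cases hs : ∃ σ', MaxM R σ' ∧ ∃ w x, σ' w = w ∧ R.Adj w x ∧ ¬ R.Adj w (σ' x)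
      · obtain ⟨σ', hσ', w', x, h1, h2, h3⟩ := hs
        exact Or.inl (step1 hR hkd (Nat.succ_pos e) hGd hRd hC0 hk hσ' w' x h1 h2 h3)
      have hns : ∀ σ, MaxM R σ → ∀ w x, σ w = w → R.Adj w x → R.Adj w (σ x) := by
        intro σ' h' w' x h1 h2
        by_contra h3
        exact hs ⟨σ', h', w', x, h1, h2, h3⟩
      obtain ⟨C1, hC1, hnone⟩ := fourM hσ.toIsM (e+1) (Nat.succ_pos e) hRd w
        (fun u v huv h1 h2 => absurd huv (hσ.indep h1 h2))
      have hcard : Fintype.card (Option (Fin (e+1))) = (e+1) + 1 := by simp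
      choose m hm using fun v => exists_miss hC1 v (by rw [hcard, hRd]; omega)
      have hmu : ∀ v c, Miss R C1 v c ↔ c = m v := fun v c =>
        ⟨fun h => miss_unique hC1 v (by rw [hcard, hRd]) h (hm v), fun h => h ▸ hm v⟩
      have hmn : ∀ v, m v = none ↔ σ v = v := fun v => by
        rw [← hnone v, hmu v none, eq_comm]
      have hrc : RC G R C0 C1 m k (e+1) d := ⟨hR, hkd, Nat.succ_pos e, hGd, hRd, hC0, hk, hC1, hmu, hcard⟩
      exact hrc.stage hG none (fun u v hu hv hc =>
        one_fixed hns hσ ((hmn u).1 hu) ((hmn v).1 hv) (ConnectedComponent.eq.1 hc)) w ((hmn w).2 hw)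
    · push Not at hfix
      have hadj : ∀ v, R.Adj v (σ v) := fun v => (hσ.adj v).resolve_left (hfix v)
      have hsy : ∀ u v, σ u = v ↔ σ v = u := fun u v =>
        ⟨fun h => by rw [← h, hσ.inv], fun h => by rw [← h, hσ.inv]⟩
      have hlt : ∀ u v, G.Adj u v → ¬ (remM R σ hσ.inv).Adj u v → σ u ≠ v → ¬ R.Adj u v :=
        fun u v _ h2 h3 h4 => h2 ⟨h4, h3⟩
      refine ih (k+1) (remM R σ hσ.inv) (fun u v => if σ u = v then k else C0 u v)
        (fun u v h => hR h.1) (fun v => ?_) ⟨?_, ?_⟩ ?_ (by omega)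
      · have := remM_dg hσ.inv v (hadj v); rw [hRd] at this; omega
      · intro u v h
        rw [sdiff_adj] at h
        by_cases hs : σ u = v
        · simp only [if_pos hs, if_pos ((hsy u v).1 hs)]
        · simp only [if_neg hs, if_neg (fun h' => hs ((hsy u v).2 h'))]
          exact hC0.1 u v ((sdiff_adj _ _ _ _).2 ⟨h.1, hlt u v h.1 h.2 hs⟩)
      · intro u v w h h' he
        rw [sdiff_adj] at h h'
        by_cases h1 : σ u = v <;> by_cases h2 : σ u = w
        · rw [← h1, h2]
        · simp only [if_pos h1, if_neg h2] at he
          have := hk u w h'.1 (hlt u w h'.1 h'.2 h2); omega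
        · simp only [if_neg h1, if_pos h2] at he
          have := hk u v h.1 (hlt u v h.1 h.2 h1); omega
        · simp only [if_neg h1, if_neg h2] at he
          exact hC0.2 u v w ((sdiff_adj _ _ _ _).2 ⟨h.1, hlt u v h.1 h.2 h1⟩)
            ((sdiff_adj _ _ _ _).2 ⟨h'.1, hlt u w h'.1 h'.2 h2⟩) he
      · intro u v h h'
        by_cases hs : σ u = v
        · simp only [if_pos hs]; omega
        · simp only [if_neg hs]
          have := hk u v h (hlt u v h h' hs); omega

theorem deg_two (hG : G.Connected) (hcard : 3 ≤ Fintype.card V) (d : ℕ) (hGd : ∀ v, dg G v = d) :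
    2 ≤ d := by
  classical
  have h1 := hG.card_vert_le_card_edgeSet_add_one
  have h2 := G.sum_degrees_eq_twice_card_edges
  have h3 : ∀ v, G.degree v = d := by
    intro v
    rw [← hGd v, dg, ← card_neighborFinset_eq_degree]
    congr 1
    ext w; simp
  simp only [h3, Finset.sum_const, Finset.card_univ, smul_eq_mul] at h2
  rw [Nat.card_eq_fintype_card, Nat.card_eq_fintype_card, ← edgeFinset_card] at h1
  by_contra hd
  have : d ≤ 1 := by omega
  have : Fintype.card V * d ≤ Fintype.card V * 1 := Nat.mul_le_mul_left _ this
  omega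

theorem main [DecidableRel G.Adj]
    (hconn : G.Connected) (hcard : 3 ≤ Fintype.card V)
    (hC4 : IsEmpty (G ≃g cycleGraph 4))
    (hK4 : IsEmpty (G ≃g (⊤ : SimpleGraph (Fin 4))))
    (hC6 : IsEmpty (G ≃g cycleGraph 6))
    (hK33 : IsEmpty (G ≃g completeBipartiteGraph (Fin 3) (Fin 3))) :
    distinguishingChromaticNumber (middleGraph G) = G.maxDegree + 1 := by
  classical
  have hdeg : ∀ v, dg G v = G.degree v := by
    intro v
    rw [dg, ← card_neighborFinset_eq_degree]
    congr 1
    ext w; simp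
  have hle : ∀ v, dg G v ≤ G.maxDegree := fun v => by rw [hdeg]; exact G.degree_le_maxDegree v
  apply win_final hconn
  by_cases hlt : ∃ w, dg G w < G.maxDegree
  · obtain ⟨w, hw⟩ := hlt
    exact nonregular _ hle w hw
  · push Not at hlt
    have hreg : ∀ v, dg G v = G.maxDegree := fun v => le_antisymm (hle v) (hlt v)
    have h2 := deg_two hconn hcard _ hreg
    rcases regular hconn G.maxDegree (by omega) hreg G.maxDegree 0 G (fun _ _ => 0) le_rfl hreg
      ⟨fun u v h => rfl, fun u v w h => by simp at h⟩ (fun u v h h' => absurd h h') (by omega) with h | ⟨C, hC⟩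
    · exact h
    · have := class1 hconn (by simpa using hreg) hC (by simpa using h2) hC4 hK4 hC6 hK33
      simpa using this

end
end DMG

/-- For a finite simple connected graph `G` of order `≥ 3` not isomorphic
to any of `C₄`, `K₄`, `C₆`, `K₃,₃`, we have `χ_D(M(G)) = Δ(G) + 1`. -/
theorem chromaticDistinguishing_middleGraph_eq_maxDegree_add_one
    {V : Type*} [Fintype V] [DecidableEq V] (G : SimpleGraph V) [DecidableRel G.Adj]
    (hconn : G.Connected) (hcard : 3 ≤ Fintype.card V)
    (hC4 : IsEmpty (G ≃g cycleGraph 4))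
    (hK4 : IsEmpty (G ≃g (⊤ : SimpleGraph (Fin 4))))
    (hC6 : IsEmpty (G ≃g cycleGraph 6))
    (hK33 : IsEmpty (G ≃g completeBipartiteGraph (Fin 3) (Fin 3))) :
    distinguishingChromaticNumber (middleGraph G) = G.maxDegree + 1 := by
  exact DMG.main hconn hcard hC4 hK4 hC6 hK33
end

section
/- Let G be a finite simple connected graph of order n ≥ 3 with maximum degree Δ(G). If G is isomorphic to one of the four graphs C₄, K₄, C₆, K₃,₃, then the distinguishing chromatic number of the middle graph of G satisfies χ_D(M(G)) = Δ(G) + 2. -/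
open SimpleGraph

/-- `a` is a symmetric function giving a proper edge coloring of `G`. -/
def MGProper {V α : Type*} (G : SimpleGraph V) (a : V → V → α) : Prop :=
  (∀ u v, a u v = a v u) ∧ ∀ u v w, G.Adj u v → G.Adj u w → v ≠ w → a u v ≠ a u w

/-- Every proper edge coloring with `k` colors is preserved by a nontrivial automorphism. -/
def MGSym {V : Type*} (G : SimpleGraph V) (k : ℕ) : Prop :=
  ∀ a : V → V → Fin k, MGProper G a →
    ∃ σ : G ≃g G, (∃ v, σ v ≠ v) ∧ ∀ u v, G.Adj u v → a (σ u) (σ v) = a u v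

lemma mg_adj_vv {V : Type*} (G : SimpleGraph V) (u v : V) :
    ¬ (middleGraph G).Adj (Sum.inl u) (Sum.inl v) := by
  simp [middleGraph]

lemma mg_adj_ve {V : Type*} (G : SimpleGraph V) (u : V) (e : G.edgeSet) :
    (middleGraph G).Adj (Sum.inl u) (Sum.inr e) ↔ u ∈ (e : Sym2 V) := by
  simp [middleGraph]

lemma mg_adj_ev {V : Type*} (G : SimpleGraph V) (u : V) (e : G.edgeSet) :
    (middleGraph G).Adj (Sum.inr e) (Sum.inl u) ↔ u ∈ (e : Sym2 V) := by
  simp [middleGraph]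

lemma mg_adj_ee {V : Type*} (G : SimpleGraph V) (e f : G.edgeSet) :
    (middleGraph G).Adj (Sum.inr e) (Sum.inr f) ↔
      e ≠ f ∧ ∃ v, v ∈ (e : Sym2 V) ∧ v ∈ (f : Sym2 V) := by
  simp only [middleGraph, SimpleGraph.fromRel_adj]
  constructor
  · rintro ⟨-, h | ⟨h, v, h1, h2⟩⟩
    · exact h
    · exact ⟨h.symm, v, h2, h1⟩
  · intro h
    exact ⟨fun h' => h.1 (Sum.inr_injective h'), Or.inl h⟩

lemma mg_sym_transport {V W : Type*} {G : SimpleGraph V} {H : SimpleGraph W} (e : G ≃g H)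
    {k : ℕ} (h : MGSym H k) : MGSym G k := by
  intro a ha
  obtain ⟨σ, ⟨v, hv⟩, hσ⟩ := h (fun x y => a (e.symm x) (e.symm y))
    ⟨fun u v => ha.1 _ _, fun u v w h1 h2 h3 => ha.2 _ _ _ (e.symm.map_adj_iff.2 h1)
      (e.symm.map_adj_iff.2 h2) (fun h => h3 (e.symm.injective h))⟩
  refine ⟨(e.trans σ).trans e.symm, ⟨e.symm v, ?_⟩, ?_⟩
  · intro h
    apply hv
    have h' : e.symm (σ (e (e.symm v))) = e.symm v := h
    rw [e.apply_symm_apply] at h'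
    exact e.symm.injective h'
  · intro u v huv
    have := hσ (e u) (e v) (e.map_adj_iff.2 huv)
    simp only [e.symm_apply_apply] at this
    exact this

lemma mg_proper_transport {V W α : Type*} {G : SimpleGraph V} {H : SimpleGraph W} (e : G ≃g H)
    (h : ∃ a : W → W → α, MGProper H a) : ∃ a : V → V → α, MGProper G a := by
  obtain ⟨a, ha⟩ := h
  exact ⟨fun x y => a (e x) (e y), fun u v => ha.1 _ _, fun u v w h1 h2 h3 =>
    ha.2 _ _ _ (e.map_adj_iff.2 h1) (e.map_adj_iff.2 h2) (fun h => h3 (e.injective h))⟩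

/-- An automorphism of `G` induces one of the middle graph. -/
def mgLift {V : Type*} {G : SimpleGraph V} (σ : G ≃g G) : middleGraph G ≃g middleGraph G where
  toEquiv := Equiv.sumCongr σ.toEquiv σ.mapEdgeSet
  map_rel_iff' := by
    have key : ∀ (u : V) (e : G.edgeSet), σ u ∈ ((σ.mapEdgeSet e : G.edgeSet) : Sym2 V) ↔
        u ∈ (e : Sym2 V) := by
      intro u e
      change σ u ∈ Sym2.map σ (e : Sym2 V) ↔ _
      rw [Sym2.mem_map]
      constructor
      · rintro ⟨w, hw, h⟩
        rwa [← σ.injective h]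
      · intro h
        exact ⟨u, h, rfl⟩
    rintro (u | e) (v | f)
    · change (middleGraph G).Adj (Sum.inl (σ u)) (Sum.inl (σ v)) ↔ _
      simp only [mg_adj_vv]
    · change (middleGraph G).Adj (Sum.inl (σ u)) (Sum.inr (σ.mapEdgeSet f)) ↔ _
      rw [mg_adj_ve, mg_adj_ve, key]
    · change (middleGraph G).Adj (Sum.inr (σ.mapEdgeSet e)) (Sum.inl (σ v)) ↔ _
      rw [mg_adj_ev, mg_adj_ev, key]
    · change (middleGraph G).Adj (Sum.inr (σ.mapEdgeSet e)) (Sum.inr (σ.mapEdgeSet f)) ↔ _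
      rw [mg_adj_ee, mg_adj_ee]
      refine and_congr ?_ ?_
      · exact σ.mapEdgeSet.injective.ne_iff
      · constructor
        · rintro ⟨v, h1, h2⟩
          obtain ⟨w, rfl⟩ := σ.surjective v
          exact ⟨w, (key _ _).1 h1, (key _ _).1 h2⟩
        · rintro ⟨v, h1, h2⟩
          exact ⟨σ v, (key _ _).2 h1, (key _ _).2 h2⟩

lemma mg_lower {V : Type*} [Fintype V] [DecidableEq V] (G : SimpleGraph V) [DecidableRel G.Adj]
    (d : ℕ) (hreg : ∀ v, G.degree v = d) (hs : MGSym G (d + 1))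
    (c : V ⊕ G.edgeSet → Fin (d + 1)) (hp : IsProperVertexColoring (middleGraph G) c)
    (hd : IsDistinguishingVertexColoring (middleGraph G) c) : False := by
  classical
  let a : V → V → Fin (d + 1) := fun u v =>
    if h : s(u, v) ∈ G.edgeSet then c (Sum.inr ⟨s(u, v), h⟩) else 0
  have ha : ∀ u v (h : G.Adj u v), a u v = c (Sum.inr ⟨s(u, v), h⟩) := fun u v h =>
    dif_pos (show s(u, v) ∈ G.edgeSet from h)
  have hap : MGProper G a := by
    constructor
    · intro u v
      simp only [a, Sym2.eq_swap (a := u) (b := v)]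
    · intro u v w huv huw hvw
      rw [ha u v huv, ha u w huw]
      apply hp
      rw [mg_adj_ee]
      refine ⟨?_, u, by simp, by simp⟩
      intro h
      have := congrArg Subtype.val h
      simp only [Sym2.congr_right] at this
      exact hvw this
  obtain ⟨σ, ⟨v, hv⟩, hσ⟩ := hs a hap
  have hne : ∀ u w, G.Adj u w → c (Sum.inl u) ≠ a u w := by
    intro u w h
    rw [ha u w h]
    apply hp
    rw [mg_adj_ve]
    simp
  have := hd (mgLift σ) ?_ (Sum.inl v)
  · exact hv (Sum.inl_injective this)
  rintro (u | ⟨e, he⟩)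
  · change c (Sum.inl (σ u)) = c (Sum.inl u)
    by_contra hc
    let S := (G.neighborFinset u).image (a u)
    have hS : S.card = d := by
      rw [Finset.card_image_of_injOn, SimpleGraph.card_neighborFinset_eq_degree, hreg]
      intro x hx y hy hxy
      by_contra hxy'
      exact hap.2 u x y (by simpa using hx) (by simpa using hy) hxy' hxy
    have h1 : c (Sum.inl u) ∉ S := by
      intro h
      obtain ⟨w, hw, h⟩ := Finset.mem_image.1 h
      exact hne u w (by simpa using hw) h.symm
    have h2 : c (Sum.inl (σ u)) ∉ insert (c (Sum.inl u)) S := by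
      intro h
      rcases Finset.mem_insert.1 h with h | h
      · exact hc h
      obtain ⟨w, hw, h⟩ := Finset.mem_image.1 h
      have hw : G.Adj u w := by simpa using hw
      exact hne (σ u) (σ w) (σ.map_adj_iff.2 hw) (by rw [hσ u w hw, h])
    have h3 := Finset.card_le_univ (insert (c (Sum.inl (σ u))) (insert (c (Sum.inl u)) S))
    rw [Finset.card_insert_of_notMem h2, Finset.card_insert_of_notMem h1, hS,
      Fintype.card_fin] at h3
    omega
  · induction e using Sym2.ind with
    | _ x y =>
      have h1 := hσ x y he
      rw [ha x y he, ha _ _ (σ.map_adj_iff.2 he)] at h1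
      exact h1

lemma mg_upper {V : Type*} (G : SimpleGraph V) (hconn : G.Connected)
    (d : ℕ) (h : ∃ a : V → V → Fin d, MGProper G a) :
    ∃ c : V ⊕ G.edgeSet → Fin (d + 2),
      IsProperVertexColoring (middleGraph G) c ∧
        IsDistinguishingVertexColoring (middleGraph G) c := by
  classical
  obtain ⟨a, ha⟩ := h
  obtain ⟨v0⟩ := hconn.nonempty
  let ce : Sym2 V → Fin d := Sym2.lift ⟨a, ha.1⟩
  let c : V ⊕ G.edgeSet → Fin (d + 2) := fun x => match x with
    | Sum.inl v => if v = v0 then ⟨d + 1, by omega⟩ else ⟨d, by omega⟩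
    | Sum.inr e => ⟨(ce e).1, by omega⟩
  have cv : ∀ v, d ≤ (c (Sum.inl v)).1 := by
    intro v
    simp only [c]
    split_ifs <;> simp
  have cedge : ∀ e, (c (Sum.inr e)).1 = (ce e).1 := fun e => rfl
  have celt : ∀ e, (c (Sum.inr e)).1 < d := fun e => (ce e).2
  have hce : ∀ e f : G.edgeSet, e ≠ f → (∃ v, v ∈ (e : Sym2 V) ∧ v ∈ (f : Sym2 V)) →
      ce e ≠ ce f := by
    rintro ⟨e, he⟩ ⟨f, hf⟩ hef ⟨v, h1, h2⟩
    obtain ⟨x, rfl⟩ := Sym2.mem_iff_exists.1 h1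
    obtain ⟨y, rfl⟩ := Sym2.mem_iff_exists.1 h2
    refine ha.2 v x y he hf ?_
    rintro rfl
    exact hef rfl
  refine ⟨c, ?_, ?_⟩
  · rintro (u | e) (v | f) huv heq
    · exact mg_adj_vv _ _ _ huv
    · have := cv u
      have := celt f
      rw [heq] at *
      omega
    · have := cv v
      have := celt e
      rw [heq] at *
      omega
    · rw [mg_adj_ee] at huv
      refine hce e f huv.1 huv.2 (Fin.ext ?_)
      rw [← cedge, ← cedge, heq]
  · intro φ hφ
    have hV : ∀ v, ∃ w, φ (Sum.inl v) = Sum.inl w := by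
      intro v
      rcases h : φ (Sum.inl v) with w | e
      · exact ⟨w, rfl⟩
      · have h1 := hφ (Sum.inl v)
        have h2 := cv v
        have h3 := celt e
        rw [h] at h1
        rw [h1] at h3
        omega
    have hE : ∀ e, ∃ f, φ (Sum.inr e) = Sum.inr f ∧ ce f = ce e := by
      intro e
      have h1 := hφ (Sum.inr e)
      rcases h : φ (Sum.inr e) with w | f
      · have h2 := cv w
        have h3 := celt e
        rw [h] at h1
        rw [h1] at h2
        omega
      · refine ⟨f, rfl, Fin.ext ?_⟩
        rw [h] at h1
        rw [← cedge, ← cedge, h1]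
    have h0 : φ (Sum.inl v0) = Sum.inl v0 := by
      obtain ⟨w, hw⟩ := hV v0
      have h1 := hφ (Sum.inl v0)
      rw [hw] at h1 ⊢
      by_cases h : w = v0
      · rw [h]
      · simp [c, h] at h1
    have hinc : ∀ v, φ (Sum.inl v) = Sum.inl v → ∀ e : G.edgeSet, v ∈ (e : Sym2 V) →
        φ (Sum.inr e) = Sum.inr e := by
      intro v hv e hve
      obtain ⟨f, hf, hfe⟩ := hE e
      have h1 := φ.map_adj_iff.2 ((mg_adj_ve G v e).2 hve)
      rw [hv, hf, mg_adj_ve] at h1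
      rw [hf]
      by_contra hne
      exact hce f e (fun h => hne (by rw [h])) ⟨v, h1, hve⟩ hfe
    have hstep : ∀ u v, G.Adj u v → φ (Sum.inl u) = Sum.inl u → φ (Sum.inl v) = Sum.inl v := by
      intro u v huv hu
      have he := hinc u hu ⟨s(u, v), huv⟩ (by simp)
      obtain ⟨w, hw⟩ := hV v
      have h1 := φ.map_adj_iff.2 ((mg_adj_ve G v ⟨s(u, v), huv⟩).2 (by simp))
      rw [he, hw, mg_adj_ve] at h1
      rcases Sym2.mem_iff.1 h1 with h | h
      · subst h
        have := φ.injective (hw.trans hu.symm)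
        exact absurd (Sum.inl_injective this).symm huv.ne
      · rw [hw, h]
    have hall : ∀ v, φ (Sum.inl v) = Sum.inl v := by
      intro v
      obtain ⟨p⟩ := hconn.preconnected v0 v
      have : ∀ x y (p : G.Walk x y), φ (Sum.inl x) = Sum.inl x → φ (Sum.inl y) = Sum.inl y := by
        intro x y p
        induction p with
        | nil => exact id
        | cons h p ih => exact fun hx => ih (hstep _ _ h hx)
      exact this _ _ p h0
    rintro (v | ⟨e, he⟩)
    · exact hall v
    · induction e using Sym2.ind with
      | _ x y => exact hinc x (hall x) _ (by simp)

/-- Automorphism from an involution preserving adjacency. -/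
def mgInv {V : Type*} (G : SimpleGraph V) (f : V → V) (hf : ∀ v, f (f v) = v)
    (h : ∀ u v, G.Adj u v → G.Adj (f u) (f v)) : G ≃g G where
  toEquiv := Function.Involutive.toPerm f hf
  map_rel_iff' := by
    intro u v
    change G.Adj (f u) (f v) ↔ _
    constructor
    · intro h'
      have := h _ _ h'
      rwa [hf, hf] at this
    · exact h u v

lemma mg_final {V W : Type*} [Fintype V] [DecidableEq V] (G : SimpleGraph V) [DecidableRel G.Adj]
    (hconn : G.Connected) (H : SimpleGraph W) [Fintype W] [DecidableRel H.Adj] (e : G ≃g H)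
    (d : ℕ) (hreg : ∀ v, H.degree v = d) (hcol : ∃ a : W → W → Fin d, MGProper H a)
    (hs : MGSym H (d + 1)) :
    distinguishingChromaticNumber (middleGraph G) = G.maxDegree + 2 := by
  have hregG : ∀ v, G.degree v = d := fun v => by rw [← hreg (e v), e.degree_eq]
  have hmax : G.maxDegree = d := by
    have := hconn.nonempty
    obtain ⟨v, hv⟩ := G.exists_maximal_degree_vertex
    rw [hv, hregG]
  rw [hmax]
  unfold distinguishingChromaticNumber
  have hmem := mg_upper G hconn d (mg_proper_transport e hcol)
  apply le_antisymm
  · exact Nat.sInf_le hmem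
  · refine le_csInf ⟨_, hmem⟩ ?_
    rintro r ⟨c, hp, hd⟩
    by_contra hr
    have hr' : r ≤ d + 1 := by omega
    refine mg_lower G d hregG (mg_sym_transport e hs) (fun x => Fin.castLE hr' (c x)) ?_ ?_
    · intro u v huv h
      exact hp u v huv (Fin.castLE_injective hr' h)
    · intro φ hφ
      exact hd φ (fun v => Fin.castLE_injective hr' (hφ v))

set_option synthInstance.maxSize 10000 in
set_option synthInstance.maxHeartbeats 400000 in
set_option maxRecDepth 100000 in
set_option maxHeartbeats 4000000 in
lemma mg_dec_c4 : ∀ x0 : Fin 3, ∀ x1 : Fin 3, x0 ≠ x1 → 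
    ∀ x2 : Fin 3, x1 ≠ x2 → ∀ x3 : Fin 3, x0 ≠ x3 → x2 ≠ x3 → 
    
    (x1 = x3) ∨ (x0 = x2) := by
  decide

lemma mg_sym_c4 : MGSym (cycleGraph 4) 3 := by
  intro a ha
  have hsym := ha.1
  have h0_1 : a 0 1 ≠ a 1 2 := by
    rw [hsym 0 1]
    exact ha.2 1 0 2 (by decide) (by decide) (by decide)
  have h1_2 : a 1 2 ≠ a 2 3 := by
    rw [hsym 1 2]
    exact ha.2 2 1 3 (by decide) (by decide) (by decide)
  have h0_3 : a 0 1 ≠ a 0 3 := by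
    exact ha.2 0 1 3 (by decide) (by decide) (by decide)
  have h2_3 : a 2 3 ≠ a 0 3 := by
    rw [hsym 2 3, hsym 0 3]
    exact ha.2 3 2 0 (by decide) (by decide) (by decide)
  have key := mg_dec_c4 (a 0 1) (a 1 2) h0_1 (a 2 3) h1_2 (a 0 3) h0_3 h2_3
  rcases key with h | h
  · refine ⟨mgInv _ ![1, 0, 3, 2] (by decide) (by decide), ⟨0, by decide⟩, ?_⟩
    intro u v huv
    change a (![1, 0, 3, 2] u) (![1, 0, 3, 2] v) = a u v
    fin_cases u <;> fin_cases v <;> first | exact absurd huv (by decide) | skip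
    all_goals simp
    all_goals grind
  · refine ⟨mgInv _ ![3, 2, 1, 0] (by decide) (by decide), ⟨0, by decide⟩, ?_⟩
    intro u v huv
    change a (![3, 2, 1, 0] u) (![3, 2, 1, 0] v) = a u v
    fin_cases u <;> fin_cases v <;> first | exact absurd huv (by decide) | skip
    all_goals simp
    all_goals grind

lemma mg_col_c4 : ∃ a : Fin 4 → Fin 4 → Fin 2, MGProper (cycleGraph 4) a :=
  ⟨![![0, 0, 0, 1], ![0, 0, 1, 0], ![0, 1, 0, 0], ![1, 0, 0, 0]], by
    constructor <;> decide⟩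

set_option synthInstance.maxSize 10000 in
set_option synthInstance.maxHeartbeats 400000 in
set_option maxRecDepth 100000 in
set_option maxHeartbeats 4000000 in
lemma mg_dec_k4 : ∀ x0 : Fin 4, ∀ x1 : Fin 4, x0 ≠ x1 → 
    ∀ x2 : Fin 4, x0 ≠ x2 → x1 ≠ x2 → ∀ x3 : Fin 4, x0 ≠ x3 → x1 ≠ x3 → 
    ∀ x4 : Fin 4, x0 ≠ x4 → x2 ≠ x4 → x3 ≠ x4 → ∀ x5 : Fin 4, x1 ≠ x5 → x2 ≠ x5 → x3 ≠ x5 → x4 ≠ x5 → 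
    
    (x1 = x4 ∧ x2 = x3) ∨ (x0 = x5 ∧ x2 = x3) ∨ (x0 = x5 ∧ x1 = x4) := by
  decide

lemma mg_sym_k4 : MGSym (⊤ : SimpleGraph (Fin 4)) 4 := by
  intro a ha
  have hsym := ha.1
  have h0_1 : a 0 1 ≠ a 0 2 := by
    exact ha.2 0 1 2 (by decide) (by decide) (by decide)
  have h0_2 : a 0 1 ≠ a 0 3 := by
    exact ha.2 0 1 3 (by decide) (by decide) (by decide)
  have h1_2 : a 0 2 ≠ a 0 3 := by
    exact ha.2 0 2 3 (by decide) (by decide) (by decide)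
  have h0_3 : a 0 1 ≠ a 1 2 := by
    rw [hsym 0 1]
    exact ha.2 1 0 2 (by decide) (by decide) (by decide)
  have h1_3 : a 0 2 ≠ a 1 2 := by
    rw [hsym 0 2, hsym 1 2]
    exact ha.2 2 0 1 (by decide) (by decide) (by decide)
  have h0_4 : a 0 1 ≠ a 1 3 := by
    rw [hsym 0 1]
    exact ha.2 1 0 3 (by decide) (by decide) (by decide)
  have h2_4 : a 0 3 ≠ a 1 3 := by
    rw [hsym 0 3, hsym 1 3]
    exact ha.2 3 0 1 (by decide) (by decide) (by decide)
  have h3_4 : a 1 2 ≠ a 1 3 := by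
    exact ha.2 1 2 3 (by decide) (by decide) (by decide)
  have h1_5 : a 0 2 ≠ a 2 3 := by
    rw [hsym 0 2]
    exact ha.2 2 0 3 (by decide) (by decide) (by decide)
  have h2_5 : a 0 3 ≠ a 2 3 := by
    rw [hsym 0 3, hsym 2 3]
    exact ha.2 3 0 2 (by decide) (by decide) (by decide)
  have h3_5 : a 1 2 ≠ a 2 3 := by
    rw [hsym 1 2]
    exact ha.2 2 1 3 (by decide) (by decide) (by decide)
  have h4_5 : a 1 3 ≠ a 2 3 := by
    rw [hsym 1 3, hsym 2 3]
    exact ha.2 3 1 2 (by decide) (by decide) (by decide)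
  have key := mg_dec_k4 (a 0 1) (a 0 2) h0_1 (a 0 3) h0_2 h1_2 (a 1 2) h0_3 h1_3 (a 1 3) h0_4 h2_4 h3_4 (a 2 3) h1_5 h2_5 h3_5 h4_5
  rcases key with h | h | h
  · refine ⟨mgInv _ ![1, 0, 3, 2] (by decide) (by decide), ⟨0, by decide⟩, ?_⟩
    intro u v huv
    change a (![1, 0, 3, 2] u) (![1, 0, 3, 2] v) = a u v
    fin_cases u <;> fin_cases v <;> first | exact absurd huv (by decide) | skip
    all_goals simp
    all_goals grind
  · refine ⟨mgInv _ ![2, 3, 0, 1] (by decide) (by decide), ⟨0, by decide⟩, ?_⟩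
    intro u v huv
    change a (![2, 3, 0, 1] u) (![2, 3, 0, 1] v) = a u v
    fin_cases u <;> fin_cases v <;> first | exact absurd huv (by decide) | skip
    all_goals simp
    all_goals grind
  · refine ⟨mgInv _ ![3, 2, 1, 0] (by decide) (by decide), ⟨0, by decide⟩, ?_⟩
    intro u v huv
    change a (![3, 2, 1, 0] u) (![3, 2, 1, 0] v) = a u v
    fin_cases u <;> fin_cases v <;> first | exact absurd huv (by decide) | skip
    all_goals simp
    all_goals grind

lemma mg_col_k4 : ∃ a : Fin 4 → Fin 4 → Fin 3, MGProper (⊤ : SimpleGraph (Fin 4)) a :=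
  ⟨![![0, 0, 1, 2], ![0, 0, 2, 1], ![1, 2, 0, 0], ![2, 1, 0, 0]], by
    constructor <;> decide⟩

set_option synthInstance.maxSize 10000 in
set_option synthInstance.maxHeartbeats 400000 in
set_option maxRecDepth 100000 in
set_option maxHeartbeats 4000000 in
lemma mg_dec_c6 : ∀ x0 : Fin 3, ∀ x1 : Fin 3, x0 ≠ x1 → 
    ∀ x2 : Fin 3, x1 ≠ x2 → ∀ x3 : Fin 3, x2 ≠ x3 → 
    ∀ x4 : Fin 3, x3 ≠ x4 → ∀ x5 : Fin 3, x0 ≠ x5 → x4 ≠ x5 → 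
    
    (x1 = x5 ∧ x2 = x4) ∨ (x0 = x2 ∧ x3 = x5) ∨ (x0 = x4 ∧ x1 = x3) ∨ (x0 = x3 ∧ x1 = x4 ∧ x2 = x5) := by
  decide

lemma mg_sym_c6 : MGSym (cycleGraph 6) 3 := by
  intro a ha
  have hsym := ha.1
  have h0_1 : a 0 1 ≠ a 1 2 := by
    rw [hsym 0 1]
    exact ha.2 1 0 2 (by decide) (by decide) (by decide)
  have h1_2 : a 1 2 ≠ a 2 3 := by
    rw [hsym 1 2]
    exact ha.2 2 1 3 (by decide) (by decide) (by decide)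
  have h2_3 : a 2 3 ≠ a 3 4 := by
    rw [hsym 2 3]
    exact ha.2 3 2 4 (by decide) (by decide) (by decide)
  have h3_4 : a 3 4 ≠ a 4 5 := by
    rw [hsym 3 4]
    exact ha.2 4 3 5 (by decide) (by decide) (by decide)
  have h0_5 : a 0 1 ≠ a 0 5 := by
    exact ha.2 0 1 5 (by decide) (by decide) (by decide)
  have h4_5 : a 4 5 ≠ a 0 5 := by
    rw [hsym 4 5, hsym 0 5]
    exact ha.2 5 4 0 (by decide) (by decide) (by decide)
  have key := mg_dec_c6 (a 0 1) (a 1 2) h0_1 (a 2 3) h1_2 (a 3 4) h2_3 (a 4 5) h3_4 (a 0 5) h0_5 h4_5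
  rcases key with h | h | h | h
  · refine ⟨mgInv _ ![1, 0, 5, 4, 3, 2] (by decide) (by decide), ⟨0, by decide⟩, ?_⟩
    intro u v huv
    change a (![1, 0, 5, 4, 3, 2] u) (![1, 0, 5, 4, 3, 2] v) = a u v
    fin_cases u <;> fin_cases v <;> first | exact absurd huv (by decide) | skip
    all_goals simp
    all_goals grind
  · refine ⟨mgInv _ ![3, 2, 1, 0, 5, 4] (by decide) (by decide), ⟨0, by decide⟩, ?_⟩
    intro u v huv
    change a (![3, 2, 1, 0, 5, 4] u) (![3, 2, 1, 0, 5, 4] v) = a u v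
    fin_cases u <;> fin_cases v <;> first | exact absurd huv (by decide) | skip
    all_goals simp
    all_goals grind
  · refine ⟨mgInv _ ![5, 4, 3, 2, 1, 0] (by decide) (by decide), ⟨0, by decide⟩, ?_⟩
    intro u v huv
    change a (![5, 4, 3, 2, 1, 0] u) (![5, 4, 3, 2, 1, 0] v) = a u v
    fin_cases u <;> fin_cases v <;> first | exact absurd huv (by decide) | skip
    all_goals simp
    all_goals grind
  · refine ⟨mgInv _ ![3, 4, 5, 0, 1, 2] (by decide) (by decide), ⟨0, by decide⟩, ?_⟩
    intro u v huv
    change a (![3, 4, 5, 0, 1, 2] u) (![3, 4, 5, 0, 1, 2] v) = a u v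
    fin_cases u <;> fin_cases v <;> first | exact absurd huv (by decide) | skip
    all_goals simp
    all_goals grind

lemma mg_col_c6 : ∃ a : Fin 6 → Fin 6 → Fin 2, MGProper (cycleGraph 6) a :=
  ⟨![![0, 0, 0, 0, 0, 1], ![0, 0, 1, 0, 0, 0], ![0, 1, 0, 0, 0, 0], ![0, 0, 0, 0, 1, 0], ![0, 0, 0, 1, 0, 0], ![1, 0, 0, 0, 0, 0]], by
    constructor <;> decide⟩

set_option synthInstance.maxSize 10000 in
set_option synthInstance.maxHeartbeats 400000 in
set_option maxRecDepth 100000 in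
set_option maxHeartbeats 4000000 in
lemma mg_dec_k33 : ∀ x00 : Fin 4, ∀ x01 : Fin 4, x00 ≠ x01 → ∀ x02 : Fin 4, x00 ≠ x02 → x01 ≠ x02 → 
    ∀ x10 : Fin 4, x00 ≠ x10 → ∀ x11 : Fin 4, x10 ≠ x11 → x01 ≠ x11 → ∀ x12 : Fin 4, x10 ≠ x12 → x11 ≠ x12 → x02 ≠ x12 → 
    ∀ x20 : Fin 4, x00 ≠ x20 → x10 ≠ x20 → ∀ x21 : Fin 4, x20 ≠ x21 → x01 ≠ x21 → x11 ≠ x21 → ∀ x22 : Fin 4, x20 ≠ x22 → x21 ≠ x22 → x02 ≠ x22 → x12 ≠ x22 → 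
    (x01 = x10 ∧ x02 = x20 ∧ x12 = x21) ∨
    (x01 = x20 ∧ x02 = x10 ∧ x11 = x22) ∨
    (x00 = x11 ∧ x02 = x21 ∧ x12 = x20) ∨
    (x00 = x21 ∧ x02 = x11 ∧ x10 = x22) ∨
    (x00 = x12 ∧ x01 = x22 ∧ x11 = x20) ∨
    (x00 = x22 ∧ x01 = x12 ∧ x10 = x21) := by
  decide

lemma mg_sym_k33 : MGSym (completeBipartiteGraph (Fin 3) (Fin 3)) 4 := by
  intro a ha
  have hsym := ha.1
  have hr : ∀ i j k : Fin 3, j ≠ k → a (Sum.inl i) (Sum.inr j) ≠ a (Sum.inl i) (Sum.inr k) := by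
    intro i j k hjk
    exact ha.2 _ _ _ (by simp) (by simp) (by simpa using hjk)
  have hc : ∀ i j k : Fin 3, j ≠ k → a (Sum.inl j) (Sum.inr i) ≠ a (Sum.inl k) (Sum.inr i) := by
    intro i j k hjk
    rw [hsym (Sum.inl j), hsym (Sum.inl k)]
    exact ha.2 _ _ _ (by simp) (by simp) (by simpa using hjk)
  suffices h : ∃ p q : Fin 3 → Fin 3, (∀ i, q (p i) = i) ∧ (∀ i, p (q i) = i) ∧
      ∀ i j, a (Sum.inl (q j)) (Sum.inr (p i)) = a (Sum.inl i) (Sum.inr j) by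
    obtain ⟨p, q, hqp, hpq, h⟩ := h
    refine ⟨mgInv _ (Sum.elim (fun i => Sum.inr (p i)) (fun j => Sum.inl (q j))) ?_ ?_,
      ⟨Sum.inl 0, Sum.inr_ne_inl⟩, ?_⟩
    · rintro (i | j) <;> simp [hqp, hpq]
    · rintro (i | j) (k | l) <;> simp
    · rintro (i | j) (k | l) huv
      · simp at huv
      · change a (Sum.inr (p i)) (Sum.inl (q l)) = _
        rw [hsym, h]
      · change a (Sum.inl (q j)) (Sum.inr (p k)) = _
        rw [h, hsym]
      · simp at huv
  have key := mg_dec_k33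
    (a (Sum.inl 0) (Sum.inr 0))
    (a (Sum.inl 0) (Sum.inr 1)) (hr 0 0 1 (by decide))
    (a (Sum.inl 0) (Sum.inr 2)) (hr 0 0 2 (by decide)) (hr 0 1 2 (by decide))
    (a (Sum.inl 1) (Sum.inr 0)) (hc 0 0 1 (by decide))
    (a (Sum.inl 1) (Sum.inr 1)) (hr 1 0 1 (by decide)) (hc 1 0 1 (by decide))
    (a (Sum.inl 1) (Sum.inr 2)) (hr 1 0 2 (by decide)) (hr 1 1 2 (by decide)) (hc 2 0 1 (by decide))
    (a (Sum.inl 2) (Sum.inr 0)) (hc 0 0 2 (by decide)) (hc 0 1 2 (by decide))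
    (a (Sum.inl 2) (Sum.inr 1)) (hr 2 0 1 (by decide)) (hc 1 0 2 (by decide)) (hc 1 1 2 (by decide))
    (a (Sum.inl 2) (Sum.inr 2)) (hr 2 0 2 (by decide)) (hr 2 1 2 (by decide)) (hc 2 0 2 (by decide)) (hc 2 1 2 (by decide))
  rcases key with h | h | h | h | h | h
  · refine ⟨![0, 1, 2], ![0, 1, 2], by decide, by decide, ?_⟩
    intro i j
    fin_cases i <;> fin_cases j <;> (try simp) <;> grind
  · refine ⟨![0, 2, 1], ![0, 2, 1], by decide, by decide, ?_⟩
    intro i j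
    fin_cases i <;> fin_cases j <;> (try simp) <;> grind
  · refine ⟨![1, 0, 2], ![1, 0, 2], by decide, by decide, ?_⟩
    intro i j
    fin_cases i <;> fin_cases j <;> (try simp) <;> grind
  · refine ⟨![1, 2, 0], ![2, 0, 1], by decide, by decide, ?_⟩
    intro i j
    fin_cases i <;> fin_cases j <;> (try simp) <;> grind
  · refine ⟨![2, 0, 1], ![1, 2, 0], by decide, by decide, ?_⟩
    intro i j
    fin_cases i <;> fin_cases j <;> (try simp) <;> grind
  · refine ⟨![2, 1, 0], ![2, 1, 0], by decide, by decide, ?_⟩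
    intro i j
    fin_cases i <;> fin_cases j <;> (try simp) <;> grind

lemma mg_col_k33 : ∃ a : Fin 3 ⊕ Fin 3 → Fin 3 ⊕ Fin 3 → Fin 3,
    MGProper (completeBipartiteGraph (Fin 3) (Fin 3)) a := by
  refine ⟨fun x y => Sum.elim id id x + Sum.elim id id y, ?_, ?_⟩
  · intro u v
    exact add_comm _ _
  · rintro (i | i) (j | j) (k | k) h1 h2 h3 h4
    all_goals first | (simp at h1; done) | (simp at h2; done) | skip
    all_goals exact h3 (congrArg _ (add_left_cancel h4))

/-- For a finite simple connected graph `G` of order `≥ 3` isomorphic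
to one of `C₄`, `K₄`, `C₆`, `K₃,₃`, we have `χ_D(M(G)) = Δ(G) + 2`. -/
theorem chromaticDistinguishing_middleGraph_eq_maxDegree_add_two
    {V : Type*} [Fintype V] [DecidableEq V] (G : SimpleGraph V) [DecidableRel G.Adj]
    (hconn : G.Connected) (hcard : 3 ≤ Fintype.card V)
    (hexc : Nonempty (G ≃g cycleGraph 4) ∨ Nonempty (G ≃g (⊤ : SimpleGraph (Fin 4))) ∨
      Nonempty (G ≃g cycleGraph 6) ∨ Nonempty (G ≃g completeBipartiteGraph (Fin 3) (Fin 3))) :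
    distinguishingChromaticNumber (middleGraph G) = G.maxDegree + 2 := by
  rcases hexc with ⟨⟨e⟩⟩ | ⟨⟨e⟩⟩ | ⟨⟨e⟩⟩ | ⟨⟨e⟩⟩
  · exact mg_final G hconn _ e 2 (by decide) mg_col_c4 mg_sym_c4
  · exact mg_final G hconn _ e 3 (by decide) mg_col_k4 mg_sym_k4
  · exact mg_final G hconn _ e 2 (by decide) mg_col_c6 mg_sym_c6
  · letI : DecidableRel (completeBipartiteGraph (Fin 3) (Fin 3)).Adj := fun v w =>
      inferInstanceAs (Decidable (v.isLeft ∧ w.isRight ∨ v.isRight ∧ w.isLeft))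
    exact mg_final G hconn _ e 3 (by
      decide) mg_col_k33 mg_sym_k33
end

section
/- If G is one of the four graphs C₄, C₆, K₄, K₃,₃, then the distinguishing chromatic index of its endline graph satisfies χ'_D(G⁺) = Δ(G) + 2, where Δ(G) is the maximum degree of G. -/
open SimpleGraph

/-- Combinatorial data used for the exceptional graphs. -/
structure ExcData {V : Type*} (H : SimpleGraph V) (k : ℕ) : Prop where
  pos : 0 < k
  conn : H.Connected
  reg : ∀ v, (H.neighborSet v).ncard = k
  up : ∃ d : V → V → Fin k, (∀ u v, d u v = d v u) ∧
    (∀ u v w, H.Adj u v → H.Adj u w → v ≠ w → d u v ≠ d u w)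
  low : ∀ d : V → V → Fin (k+1), (∀ u v, d u v = d v u) →
    (∀ u v w, H.Adj u v → H.Adj u w → v ≠ w → d u v ≠ d u w) →
    ∃ σ : H ≃g H, (∀ u v, H.Adj u v → d (σ u) (σ v) = d u v) ∧ ∃ v, σ v ≠ v

theorem ExcData.transport {V W : Type*} {G : SimpleGraph V} {H : SimpleGraph W} {k : ℕ}
    (e : G ≃g H) (h : ExcData H k) : ExcData G k where
  pos := h.pos
  conn := e.connected_iff.2 h.conn
  reg v := by
    rw [← h.reg (e v), ← Set.ncard_image_of_injective _ e.injective]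
    congr 1
    ext w
    simp only [Set.mem_image, mem_neighborSet]
    constructor
    · rintro ⟨x, hx, rfl⟩
      exact e.map_adj_iff.2 hx
    · intro hw
      refine ⟨e.symm w, ?_, by simp⟩
      rw [← e.map_adj_iff]; simpa using hw
  up := by
    obtain ⟨d, h1, h2⟩ := h.up
    refine ⟨fun u v => d (e u) (e v), fun u v => h1 _ _, fun u v w a b c => ?_⟩
    exact h2 _ _ _ (e.map_adj_iff.2 a) (e.map_adj_iff.2 b) (fun q => c (e.injective q))
  low := by
    intro d h1 h2
    obtain ⟨σ, h3, v, hv⟩ := h.low (fun u v => d (e.symm u) (e.symm v)) (fun u v => h1 _ _)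
      (fun u v w a b c => h2 _ _ _ (e.symm.map_adj_iff.2 a) (e.symm.map_adj_iff.2 b)
        (fun q => c (e.symm.injective q)))
    refine ⟨(e.trans σ).trans e.symm, fun u v a => ?_, e.symm v, fun q => hv ?_⟩
    · simpa using h3 _ _ (e.map_adj_iff.2 a)
    · have := congrArg e q
      simpa using this

section EL
variable {V : Type*} {G : SimpleGraph V}

theorem el_ll (u v : V) : (endlineGraph G).Adj (Sum.inl u) (Sum.inl v) ↔ G.Adj u v := by
  simp only [endlineGraph, fromRel_adj]
  constructor
  · rintro ⟨_, h | h⟩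
    · exact h
    · exact h.symm
  · intro h
    exact ⟨fun q => h.ne (Sum.inl_injective q), Or.inl h⟩

theorem el_lr (u v : V) : (endlineGraph G).Adj (Sum.inl u) (Sum.inr v) ↔ u = v := by
  simp [endlineGraph, fromRel_adj]

theorem el_rl (u v : V) : (endlineGraph G).Adj (Sum.inr u) (Sum.inl v) ↔ u = v := by
  rw [adj_comm, el_lr]; exact eq_comm

theorem el_rr (u v : V) : ¬ (endlineGraph G).Adj (Sum.inr u) (Sum.inr v) := by
  simp [endlineGraph, fromRel_adj]

/-- Extension of an automorphism to the endline graph. -/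
def elIso (σ : G ≃g G) : endlineGraph G ≃g endlineGraph G where
  toEquiv := Equiv.sumCongr σ.toEquiv σ.toEquiv
  map_rel_iff' := by
    rintro (a | a) (b | b)
    · simp only [el_ll, Equiv.sumCongr_apply, Sum.map_inl]
      exact σ.map_adj_iff
    · simp [el_lr]
    · simp [el_rl]
    · simp [el_rr]

/-- Symmetric-function form of the proper distinguishing colorings. -/
theorem exists_coloring_iff {W : Type*} (H : SimpleGraph W) {r : ℕ} (hr : 0 < r) :
    (∃ c : H.edgeSet → Fin r, IsProperEdgeColoring H c ∧ IsDistinguishingEdgeColoring H c) ↔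
    ∃ d : W → W → Fin r, (∀ u v, d u v = d v u) ∧
      (∀ u v w, H.Adj u v → H.Adj u w → v ≠ w → d u v ≠ d u w) ∧
      (∀ φ : H ≃g H, (∀ u v, H.Adj u v → d (φ u) (φ v) = d u v) → ∀ v, φ v = v) := by
  classical
  constructor
  · rintro ⟨c, hp, hd⟩
    let C : Sym2 W → Fin r := fun e => if h : e ∈ H.edgeSet then c ⟨e, h⟩ else ⟨0, hr⟩
    have hC : ∀ u v (h : H.Adj u v), C s(u, v) = c ⟨s(u, v), h⟩ := by
      intro u v h
      exact dif_pos (H.mem_edgeSet.2 h)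
    refine ⟨fun u v => C s(u, v), fun u v => congrArg C Sym2.eq_swap, ?_, ?_⟩
    · intro u v w a b n
      simp only [hC _ _ a, hC _ _ b]
      apply hp
      · intro q
        have := congrArg Subtype.val q
        simp only [Sym2.congr_right] at this
        exact n this
      · exact ⟨u, Sym2.mem_mk_left _ _, Sym2.mem_mk_left _ _⟩
    · intro φ hφ
      apply hd φ
      rintro ⟨e, he⟩
      induction e using Sym2.ind with
      | _ u v =>
        have h1 : C s(φ u, φ v) = C s(u, v) := hφ u v he
        rw [hC _ _ he, hC _ _ (φ.map_adj_iff.2 he)] at h1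
        exact h1
  · rintro ⟨d, hs, hp, hd⟩
    let C : Sym2 W → Fin r := Sym2.lift ⟨d, hs⟩
    refine ⟨fun e => C e.1, ?_, ?_⟩
    · rintro ⟨e, he⟩ ⟨f, hf⟩ n ⟨u, hu, hv⟩
      obtain ⟨a, rfl⟩ := hu
      obtain ⟨b, rfl⟩ := hv
      exact hp u a b he hf (fun q => n (by subst q; rfl))
    · intro φ hφ
      apply hd φ
      intro u v a
      exact hφ ⟨s(u, v), a⟩

theorem not_small {k : ℕ} (h : ExcData G k) {r : ℕ} (hr : r < k + 2) :
    ¬ ∃ c : (endlineGraph G).edgeSet → Fin r,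
      IsProperEdgeColoring (endlineGraph G) c ∧ IsDistinguishingEdgeColoring (endlineGraph G) c := by
  classical
  rintro ⟨c, hp, hd⟩
  have h0 : ∃ c : (endlineGraph G).edgeSet → Fin (k+1),
      IsProperEdgeColoring (endlineGraph G) c ∧
        IsDistinguishingEdgeColoring (endlineGraph G) c := by
    have hle : r ≤ k + 1 := by omega
    have hi : Function.Injective (Fin.castLE hle) := Fin.castLE_injective hle
    exact ⟨fun e => Fin.castLE hle (c e), fun e f n q w => hp e f n q (hi w),
      fun φ hφ => hd φ (fun e => hi (hφ e))⟩
  rw [exists_coloring_iff _ (Nat.succ_pos k)] at h0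
  obtain ⟨d, hs, hp, hd⟩ := h0
  obtain ⟨σ, hσ, v, hv⟩ := h.low (fun u v => d (Sum.inl u) (Sum.inl v)) (fun u v => hs _ _)
    (fun u v w a b n => hp _ _ _ ((el_ll _ _).2 a) ((el_ll _ _).2 b)
      (fun q => n (Sum.inl_injective q)))
  have key : ∀ v, d (Sum.inl (σ v)) (Sum.inr (σ v)) = d (Sum.inl v) (Sum.inr v) := by
    intro v
    let S : Set (Fin (k+1)) := (fun w => d (Sum.inl v) (Sum.inl w)) '' G.neighborSet v
    have hS : S.ncard = k := by
      refine (Set.InjOn.ncard_image ?_).trans (h.reg v)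
      intro a ha b hb hab
      by_contra n
      exact hp _ _ _ ((el_ll _ _).2 ha) ((el_ll _ _).2 hb) (fun q => n (Sum.inl_injective q)) hab
    have h1 : d (Sum.inl v) (Sum.inr v) ∉ S := by
      rintro ⟨w, hw, q⟩
      exact hp _ _ _ ((el_ll _ _).2 hw) ((el_lr v v).2 rfl) (by simp) q
    have h2 : d (Sum.inl (σ v)) (Sum.inr (σ v)) ∉ S := by
      rintro ⟨w, hw, q⟩
      have hw' : G.Adj v w := hw
      refine hp _ _ _ ((el_ll _ _).2 (σ.map_adj_iff.2 hw')) ((el_lr (σ v) (σ v)).2 rfl)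
        (by simp) ?_
      rw [← q]
      exact hσ _ _ hw'
    have h3 : Sᶜ.ncard = 1 := by
      have := Set.ncard_add_ncard_compl S
      rw [hS, Nat.card_fin] at this
      omega
    obtain ⟨a, ha⟩ := Set.ncard_eq_one.1 h3
    have h1' : d (Sum.inl v) (Sum.inr v) ∈ Sᶜ := h1
    have h2' : d (Sum.inl (σ v)) (Sum.inr (σ v)) ∈ Sᶜ := h2
    rw [ha] at h1' h2'
    rw [Set.mem_singleton_iff] at h1' h2'
    rw [h1', h2']
  have := hd (elIso σ) (by
    rintro (a | a) (b | b) hab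
    · exact hσ _ _ ((el_ll _ _).1 hab)
    · obtain rfl := (el_lr _ _).1 hab
      exact key a
    · obtain rfl := (el_rl _ _).1 hab
      rw [hs, hs (Sum.inr a)]
      exact key a
    · exact absurd hab (el_rr _ _)) (Sum.inl v)
  exact hv (Sum.inl_injective this)

theorem fix_all {W : Type*} {α : Type*} {H : SimpleGraph W} {d : W → W → α}
    (hp : ∀ u v w, H.Adj u v → H.Adj u w → v ≠ w → d u v ≠ d u w)
    (φ : H ≃g H) (hφ : ∀ u v, H.Adj u v → d (φ u) (φ v) = d u v)
    {u v : W} (hu : φ u = u) (a : H.Adj u v) : φ v = v := by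
  by_contra n
  have h1 : H.Adj u (φ v) := by
    have := φ.map_adj_iff.2 a
    rwa [hu] at this
  refine hp u (φ v) v h1 a n ?_
  have := hφ u v a
  rwa [hu] at this

theorem is_ok {k : ℕ} (h : ExcData G k) :
    ∃ c : (endlineGraph G).edgeSet → Fin (k+2),
      IsProperEdgeColoring (endlineGraph G) c ∧ IsDistinguishingEdgeColoring (endlineGraph G) c := by
  classical
  rw [exists_coloring_iff _ (by omega)]
  obtain ⟨d, hs, hp⟩ := h.up
  obtain ⟨v0⟩ := h.conn.nonempty
  let p : V → Fin (k+2) := fun v => if v = v0 then ⟨k+1, by omega⟩ else ⟨k, by omega⟩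
  have hpk : ∀ v, k ≤ (p v).1 := by
    intro v; simp only [p]; split_ifs <;> simp
  have hp0 : ∀ v, (p v).1 = k+1 → v = v0 := by
    intro v hv
    by_contra n
    simp [p, n] at hv
  let D : V ⊕ V → V ⊕ V → Fin (k+2) := fun x y =>
    match x, y with
    | Sum.inl u, Sum.inl v => Fin.castLE (by omega) (d u v)
    | Sum.inl u, Sum.inr _ => p u
    | Sum.inr _, Sum.inl u => p u
    | Sum.inr _, Sum.inr _ => ⟨0, by omega⟩
  have hlt : ∀ u v, (D (Sum.inl u) (Sum.inl v)).1 < k := fun u v => (d u v).2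
  have hDp : ∀ u v w, (endlineGraph G).Adj u v → (endlineGraph G).Adj u w → v ≠ w →
      D u v ≠ D u w := by
    rintro (u | u) (v | v) (w | w) a b n
    · intro q
      exact hp _ _ _ ((el_ll _ _).1 a) ((el_ll _ _).1 b) (fun q => n (by rw [q]))
        (Fin.castLE_injective (by omega) q)
    · intro q
      have h1 := hlt u v
      rw [q] at h1
      have h2 : k ≤ (D (Sum.inl u) (Sum.inr w)).1 := hpk u
      omega
    · intro q
      have h1 := hlt u w
      rw [← q] at h1
      have h2 : k ≤ (D (Sum.inl u) (Sum.inr v)).1 := hpk u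
      omega
    · rw [el_lr] at a b
      exact absurd (by rw [← a, ← b]) n
    · rw [el_rl] at a b
      exact absurd (by rw [← a, ← b]) n
    · exact absurd b (el_rr _ _)
    · exact absurd a (el_rr _ _)
    · exact absurd a (el_rr _ _)
  refine ⟨D, ?_, hDp, ?_⟩
  · rintro (u | u) (v | v)
    · simp only [D]; rw [hs]
    · rfl
    · rfl
    · rfl
  · intro φ hφ
    have base : φ (Sum.inl v0) = Sum.inl v0 := by
      have a0 : (endlineGraph G).Adj (Sum.inl v0) (Sum.inr v0) := (el_lr _ _).2 rfl
      have hc := hφ _ _ a0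
      have hv : (D (Sum.inl v0) (Sum.inr v0)).1 = k+1 := by simp [D, p]
      rw [← hc] at hv
      have a1 := φ.map_adj_iff.2 a0
      obtain ⟨w, hw⟩ : (G.neighborSet v0).Nonempty := by
        apply Set.nonempty_of_ncard_ne_zero
        rw [h.reg]; exact h.pos.ne'
      have b0 : (endlineGraph G).Adj (Sum.inl v0) (Sum.inl w) := (el_ll _ _).2 hw
      have b1 := φ.map_adj_iff.2 b0
      have nn : φ (Sum.inl w) ≠ φ (Sum.inr v0) := fun q => by simpa using φ.injective q
      generalize φ (Sum.inl v0) = x at *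
      generalize φ (Sum.inr v0) = y at *
      generalize φ (Sum.inl w) = z at *
      rcases x with x | x
      · rcases y with y | y
        · have := hlt x y
          omega
        · rw [hp0 x hv]
      · exfalso
        rcases y with y | y
        · rcases z with z | z
          · rw [el_rl] at a1 b1
            exact nn (by rw [← a1, ← b1])
          · exact el_rr _ _ b1
        · exact el_rr _ _ a1
    have hl : ∀ v, φ (Sum.inl v) = Sum.inl v := by
      intro v
      have walk : ∀ x y, G.Walk x y → φ (Sum.inl y) = Sum.inl y → φ (Sum.inl x) = Sum.inl x := by
        intro x y w
        induction w with
        | nil => exact id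
        | cons a _ ih => exact fun q => fix_all hDp φ hφ (ih q) ((el_ll _ _).2 a.symm)
      obtain ⟨w⟩ := h.conn.preconnected v v0
      exact walk _ _ w base
    rintro (v | v)
    · exact hl v
    · exact fix_all hDp φ hφ (hl v) ((el_lr _ _).2 rfl)

theorem main_of_data [Fintype V] [DecidableRel G.Adj] {k : ℕ} (h : ExcData G k) :
    distinguishingChromaticIndex (endlineGraph G) = G.maxDegree + 2 := by
  have hne := h.conn.nonempty
  have hk : G.maxDegree = k := by
    apply IsRegularOfDegree.maxDegree_eq
    intro v
    rw [← h.reg v, Set.ncard_eq_toFinset_card', ← SimpleGraph.card_neighborFinset_eq_degree]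
    rfl
  rw [hk]
  unfold distinguishingChromaticIndex
  apply le_antisymm
  · exact Nat.sInf_le (is_ok h)
  · refine le_csInf ⟨k + 2, is_ok h⟩ ?_
    intro r hr
    by_contra n
    exact not_small h (by omega) hr
end EL

set_option synthInstance.maxHeartbeats 2000000 in
set_option synthInstance.maxSize 100000 in
set_option maxRecDepth 100000 in
set_option maxHeartbeats 4000000 in
theorem exc_C4 : ExcData (cycleGraph 4) 2 where
  pos := by norm_num
  conn := cycleGraph_connected
  reg v := by
    rw [Set.ncard_eq_toFinset_card']
    revert v; decide
  up := ⟨fun u v => if (u.1 = 0 ∧ v.1 = 1) ∨ (u.1 = 1 ∧ v.1 = 0) ∨ (u.1 = 2 ∧ v.1 = 3) ∨ (u.1 = 3 ∧ v.1 = 2)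
    then 0 else 1, by decide, by decide⟩
  low d hs hp := by
    have key : ∀ x0 x1 : Fin 3, x0 ≠ x1 → ∀ x2 : Fin 3, x1 ≠ x2 → ∀ x3 : Fin 3, x2 ≠ x3 → x3 ≠ x0 →
      (x1 = x3) ∨ (x0 = x2) := by decide +kernel
    have step : ∀ i : Fin 4, d i (i + 1) ≠ d (i + 1) (i + 1 + 1) := by
      intro i
      rw [hs i]
      apply hp <;> revert i <;> decide
    have fin : ∀ σ : cycleGraph 4 ≃g cycleGraph 4, (∀ i, d (σ i) (σ (i + 1)) = d i (i + 1)) →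
        ∀ u v, (cycleGraph 4).Adj u v → d (σ u) (σ v) = d u v := by
      intro σ h u v a
      have : ∀ u v, (cycleGraph 4).Adj u v → v = u + 1 ∨ u = v + 1 := by decide
      rcases this u v a with rfl | rfl
      · exact h u
      · rw [hs, hs _ v]; exact h v
    have K := key (d 0 1) (d 1 2) (step 0) (d 2 3) (step 1) (d 3 0) (step 2) (step 3)
    rcases K with h0 | h0
    · refine ⟨⟨Equiv.subLeft (1 : Fin 4), @(by decide)⟩, fin _ ?_, 0, by decide⟩
      intro i
      fin_cases i
      · exact hs 1 0
      · exact (hs 0 3).trans h0.symm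
      · exact hs 3 2
      · exact (hs 2 1).trans h0
    · refine ⟨⟨Equiv.subLeft (3 : Fin 4), @(by decide)⟩, fin _ ?_, 0, by decide⟩
      intro i
      fin_cases i
      · exact (hs 3 2).trans h0.symm
      · exact hs 2 1
      · exact (hs 1 0).trans h0
      · exact hs 0 3

set_option synthInstance.maxHeartbeats 2000000 in
set_option synthInstance.maxSize 100000 in
set_option maxRecDepth 100000 in
set_option maxHeartbeats 4000000 in
theorem exc_C6 : ExcData (cycleGraph 6) 2 where
  pos := by norm_num
  conn := cycleGraph_connected
  reg v := by
    rw [Set.ncard_eq_toFinset_card']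
    revert v; decide
  up := ⟨fun u v => if (u.1 = 0 ∧ v.1 = 1) ∨ (u.1 = 1 ∧ v.1 = 0) ∨ (u.1 = 2 ∧ v.1 = 3) ∨ (u.1 = 3 ∧ v.1 = 2) ∨ (u.1 = 4 ∧ v.1 = 5) ∨ (u.1 = 5 ∧ v.1 = 4)
    then 0 else 1, by decide, by decide⟩
  low d hs hp := by
    have key : ∀ x0 x1 : Fin 3, x0 ≠ x1 → ∀ x2 : Fin 3, x1 ≠ x2 → ∀ x3 : Fin 3, x2 ≠ x3 → ∀ x4 : Fin 3, x3 ≠ x4 → ∀ x5 : Fin 3, x4 ≠ x5 → x5 ≠ x0 →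
      (x1 = x5 ∧ x2 = x4) ∨ (x0 = x2 ∧ x3 = x5) ∨ (x0 = x4 ∧ x1 = x3) ∨ (x0 = x3 ∧ x1 = x4 ∧ x2 = x5) := by decide +kernel
    have step : ∀ i : Fin 6, d i (i + 1) ≠ d (i + 1) (i + 1 + 1) := by
      intro i
      rw [hs i]
      apply hp <;> revert i <;> decide
    have fin : ∀ σ : cycleGraph 6 ≃g cycleGraph 6, (∀ i, d (σ i) (σ (i + 1)) = d i (i + 1)) →
        ∀ u v, (cycleGraph 6).Adj u v → d (σ u) (σ v) = d u v := by
      intro σ h u v a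
      have : ∀ u v, (cycleGraph 6).Adj u v → v = u + 1 ∨ u = v + 1 := by decide
      rcases this u v a with rfl | rfl
      · exact h u
      · rw [hs, hs _ v]; exact h v
    have K := key (d 0 1) (d 1 2) (step 0) (d 2 3) (step 1) (d 3 4) (step 2) (d 4 5) (step 3) (d 5 0) (step 4) (step 5)
    rcases K with ⟨h0, h1⟩ | ⟨h0, h1⟩ | ⟨h0, h1⟩ | ⟨h0, h1, h2⟩
    · refine ⟨⟨Equiv.subLeft (1 : Fin 6), @(by decide)⟩, fin _ ?_, 0, by decide⟩
      intro i
      fin_cases i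
      · exact hs 1 0
      · exact (hs 0 5).trans h0.symm
      · exact (hs 5 4).trans h1.symm
      · exact hs 4 3
      · exact (hs 3 2).trans h1
      · exact (hs 2 1).trans h0
    · refine ⟨⟨Equiv.subLeft (3 : Fin 6), @(by decide)⟩, fin _ ?_, 0, by decide⟩
      intro i
      fin_cases i
      · exact (hs 3 2).trans h0.symm
      · exact hs 2 1
      · exact (hs 1 0).trans h0
      · exact (hs 0 5).trans h1.symm
      · exact hs 5 4
      · exact (hs 4 3).trans h1
    · refine ⟨⟨Equiv.subLeft (5 : Fin 6), @(by decide)⟩, fin _ ?_, 0, by decide⟩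
      intro i
      fin_cases i
      · exact (hs 5 4).trans h0.symm
      · exact (hs 4 3).trans h1.symm
      · exact hs 3 2
      · exact (hs 2 1).trans h1
      · exact (hs 1 0).trans h0
      · exact hs 0 5
    · refine ⟨⟨Equiv.addRight (3 : Fin 6), @(by decide)⟩, fin _ ?_, 0, by decide⟩
      intro i
      fin_cases i
      · exact h0.symm
      · exact h1.symm
      · exact h2.symm
      · exact h0
      · exact h1
      · exact h2

theorem exc_K4 : ExcData (⊤ : SimpleGraph (Fin 4)) 3 where
  pos := by norm_num
  conn := connected_top
  reg v := by
    rw [Set.ncard_eq_toFinset_card']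
    revert v; decide
  up := ⟨fun u v => if u.1 + v.1 = 1 ∨ u.1 + v.1 = 5 then 0 else
    if u.1 + v.1 = 2 ∨ u.1 + v.1 = 4 then 1 else 2, by decide, by decide⟩
  low d hs hp := by
    have key : ∀ x01 x02 : Fin 4, x01 ≠ x02 → ∀ x03, x01 ≠ x03 → x02 ≠ x03 →
        ∀ x12, x01 ≠ x12 → x02 ≠ x12 → ∀ x13, x01 ≠ x13 → x03 ≠ x13 → x12 ≠ x13 →
        ∀ x23, x02 ≠ x23 → x03 ≠ x23 → x12 ≠ x23 → x13 ≠ x23 →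
        (x02 = x13 ∧ x03 = x12) ∨ (x01 = x23 ∧ x03 = x12) ∨ (x01 = x23 ∧ x02 = x13) := by
      decide +kernel
    have P : ∀ u v w : Fin 4, u ≠ v → u ≠ w → v ≠ w → d u v ≠ d u w := hp
    have K := key (d 0 1) (d 0 2) (P 0 1 2 (by decide) (by decide) (by decide))
      (d 0 3) (P 0 1 3 (by decide) (by decide) (by decide)) (P 0 2 3 (by decide) (by decide) (by decide))
      (d 1 2) (hs 1 0 ▸ P 1 0 2 (by decide) (by decide) (by decide))
      (hs 2 0 ▸ hs 2 1 ▸ P 2 0 1 (by decide) (by decide) (by decide))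
      (d 1 3) (hs 1 0 ▸ P 1 0 3 (by decide) (by decide) (by decide))
      (hs 3 0 ▸ hs 3 1 ▸ P 3 0 1 (by decide) (by decide) (by decide))
      (P 1 2 3 (by decide) (by decide) (by decide))
      (d 2 3) (hs 2 0 ▸ P 2 0 3 (by decide) (by decide) (by decide))
      (hs 3 0 ▸ hs 3 2 ▸ P 3 0 2 (by decide) (by decide) (by decide))
      (hs 2 1 ▸ P 2 1 3 (by decide) (by decide) (by decide))
      (hs 3 1 ▸ hs 3 2 ▸ P 3 1 2 (by decide) (by decide) (by decide))
    have fin : ∀ σ : (⊤ : SimpleGraph (Fin 4)) ≃g (⊤ : SimpleGraph (Fin 4)),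
        d (σ 0) (σ 1) = d 0 1 → d (σ 0) (σ 2) = d 0 2 → d (σ 0) (σ 3) = d 0 3 →
        d (σ 1) (σ 2) = d 1 2 → d (σ 1) (σ 3) = d 1 3 → d (σ 2) (σ 3) = d 2 3 →
        ∀ u v, (⊤ : SimpleGraph (Fin 4)).Adj u v → d (σ u) (σ v) = d u v := by
      intro σ a b c e f g u v n
      have n' : u ≠ v := n
      fin_cases u <;> fin_cases v <;>
        first
        | exact absurd rfl n'
        | assumption
        | (refine (hs _ _).trans (Eq.trans ?_ (hs _ _)); assumption)
    rcases K with ⟨h, h'⟩ | ⟨h, h'⟩ | ⟨h, h'⟩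
    · refine ⟨⟨(Equiv.swap 0 1).trans (Equiv.swap 2 3), @(by decide)⟩, fin _ ?_ ?_ ?_ ?_ ?_ ?_, 0, by decide⟩
      · have : d 1 0 = d 0 1 := by grind
        exact this
      · have : d 1 3 = d 0 2 := by grind
        exact this
      · have : d 1 2 = d 0 3 := by grind
        exact this
      · have : d 0 3 = d 1 2 := by grind
        exact this
      · have : d 0 2 = d 1 3 := by grind
        exact this
      · have : d 3 2 = d 2 3 := by grind
        exact this
    · refine ⟨⟨(Equiv.swap 0 2).trans (Equiv.swap 1 3), @(by decide)⟩, fin _ ?_ ?_ ?_ ?_ ?_ ?_, 0, by decide⟩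
      · have : d 2 3 = d 0 1 := by grind
        exact this
      · have : d 2 0 = d 0 2 := by grind
        exact this
      · have : d 2 1 = d 0 3 := by grind
        exact this
      · have : d 3 0 = d 1 2 := by grind
        exact this
      · have : d 3 1 = d 1 3 := by grind
        exact this
      · have : d 0 1 = d 2 3 := by grind
        exact this
    · refine ⟨⟨(Equiv.swap 0 3).trans (Equiv.swap 1 2), @(by decide)⟩, fin _ ?_ ?_ ?_ ?_ ?_ ?_, 0, by decide⟩
      · have : d 3 2 = d 0 1 := by grind
        exact this
      · have : d 3 1 = d 0 2 := by grind
        exact this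
      · have : d 3 0 = d 0 3 := by grind
        exact this
      · have : d 2 1 = d 1 2 := by grind
        exact this
      · have : d 2 0 = d 1 3 := by grind
        exact this
      · have : d 1 0 = d 2 3 := by grind
        exact this

/-- Automorphism of `K₃,₃` exchanging the two sides. -/
def k33iso (π : Equiv.Perm (Fin 3)) :
    completeBipartiteGraph (Fin 3) (Fin 3) ≃g completeBipartiteGraph (Fin 3) (Fin 3) where
  toEquiv := (Equiv.sumCongr π π.symm).trans (Equiv.sumComm _ _)
  map_rel_iff' := by
    rintro (a | a) (b | b) <;> simp

set_option synthInstance.maxHeartbeats 2000000 in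
set_option synthInstance.maxSize 100000 in
set_option maxRecDepth 100000 in
set_option maxHeartbeats 4000000 in
theorem k33key : ∀ x00 : Fin 4, 
        ∀ x01 : Fin 4, x00 ≠ x01 → 
        ∀ x02 : Fin 4, x00 ≠ x02 → x01 ≠ x02 → 
        ∀ x10 : Fin 4, x00 ≠ x10 → 
        ∀ x11 : Fin 4, x10 ≠ x11 → x01 ≠ x11 → 
        ∀ x12 : Fin 4, x10 ≠ x12 → x11 ≠ x12 → x02 ≠ x12 → 
        ∀ x20 : Fin 4, x00 ≠ x20 → x10 ≠ x20 → 
        ∀ x21 : Fin 4, x20 ≠ x21 → x01 ≠ x21 → x11 ≠ x21 → 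
        ∀ x22 : Fin 4, x20 ≠ x22 → x21 ≠ x22 → x02 ≠ x22 → x12 ≠ x22 → 
        (x01 = x10 ∧ x02 = x20 ∧ x12 = x21)
      ∨ (x01 = x20 ∧ x02 = x10 ∧ x11 = x22)
      ∨ (x00 = x11 ∧ x02 = x21 ∧ x12 = x20)
      ∨ (x00 = x22 ∧ x01 = x12 ∧ x10 = x21)
      ∨ (x00 = x21 ∧ x02 = x11 ∧ x10 = x22)
      ∨ (x00 = x12 ∧ x01 = x22 ∧ x11 = x20) := by
  decide +kernel

instance k33dec : DecidableRel (completeBipartiteGraph (Fin 3) (Fin 3)).Adj := fun a b =>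
  decidable_of_iff (a.isLeft ≠ b.isLeft) (by
    rcases a with a | a <;> rcases b with b | b <;> simp)

theorem exc_K33 : ExcData (completeBipartiteGraph (Fin 3) (Fin 3)) 3 where
  pos := by norm_num
  conn := by
    have : Nonempty (Fin 3 ⊕ Fin 3) := ⟨Sum.inl 0⟩
    refine ⟨fun u v => ?_⟩
    have hlr : ∀ a b : Fin 3, (completeBipartiteGraph (Fin 3) (Fin 3)).Reachable
        (Sum.inl a) (Sum.inr b) := fun a b => Adj.reachable (by simp)
    rcases u with u | u <;> rcases v with v | v
    · exact (hlr u 0).trans (hlr v 0).symm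
    · exact hlr u v
    · exact (hlr v u).symm
    · exact (hlr 0 u).symm.trans (hlr 0 v)
  reg v := by
    rw [Set.ncard_eq_toFinset_card']
    revert v; decide
  up := ⟨fun u v => u.elim id id + v.elim id id, by decide, by decide⟩
  low d hs hp := by
    have R : ∀ i j j' : Fin 3, j ≠ j' → d (Sum.inl i) (Sum.inr j) ≠ d (Sum.inl i) (Sum.inr j') :=
      fun i j j' n => hp _ _ _ (by simp) (by simp) (by simpa using n)
    have C : ∀ i i' j : Fin 3, i ≠ i' → d (Sum.inl i) (Sum.inr j) ≠ d (Sum.inl i') (Sum.inr j) := by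
      intro i i' j n
      rw [hs, hs (Sum.inl i')]
      exact hp _ _ _ (by simp) (by simp) (by simpa using n)
    have fin : ∀ π : Equiv.Perm (Fin 3), (∀ i j, d (Sum.inl (π.symm j)) (Sum.inr (π i)) =
        d (Sum.inl i) (Sum.inr j)) →
        ∃ σ : completeBipartiteGraph (Fin 3) (Fin 3) ≃g completeBipartiteGraph (Fin 3) (Fin 3),
        (∀ u v, (completeBipartiteGraph (Fin 3) (Fin 3)).Adj u v → d (σ u) (σ v) = d u v) ∧
          ∃ v, σ v ≠ v := by
      intro π h
      refine ⟨k33iso π, ?_, Sum.inl 0, by simp [k33iso]⟩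
      rintro (u | u) (v | v) a
      · simp at a
      · exact (hs _ _).trans (h u v)
      · exact (h v u).trans (hs _ _)
      · simp at a
    have K := k33key (d (Sum.inl 0) (Sum.inr 0))
      (d (Sum.inl 0) (Sum.inr 1)) (R 0 0 1 (by decide))
      (d (Sum.inl 0) (Sum.inr 2)) (R 0 0 2 (by decide)) (R 0 1 2 (by decide))
      (d (Sum.inl 1) (Sum.inr 0)) (C 0 1 0 (by decide))
      (d (Sum.inl 1) (Sum.inr 1)) (R 1 0 1 (by decide)) (C 0 1 1 (by decide))
      (d (Sum.inl 1) (Sum.inr 2)) (R 1 0 2 (by decide)) (R 1 1 2 (by decide)) (C 0 1 2 (by decide))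
      (d (Sum.inl 2) (Sum.inr 0)) (C 0 2 0 (by decide)) (C 1 2 0 (by decide))
      (d (Sum.inl 2) (Sum.inr 1)) (R 2 0 1 (by decide)) (C 0 2 1 (by decide)) (C 1 2 1 (by decide))
      (d (Sum.inl 2) (Sum.inr 2)) (R 2 0 2 (by decide)) (R 2 1 2 (by decide)) (C 0 2 2 (by decide)) (C 1 2 2 (by decide))
    rcases K with ⟨h0, h1, h2⟩ | ⟨h0, h1, h2⟩ | ⟨h0, h1, h2⟩ | ⟨h0, h1, h2⟩ | ⟨h0, h1, h2⟩ | ⟨h0, h1, h2⟩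
    · refine fin (Equiv.refl _) ?_
      intro i j
      fin_cases i <;> fin_cases j
      · exact rfl
      · exact h0.symm
      · exact h1.symm
      · exact h0
      · exact rfl
      · exact h2.symm
      · exact h1
      · exact h2
      · exact rfl
    · refine fin (Equiv.swap 1 2) ?_
      intro i j
      fin_cases i <;> fin_cases j
      · exact rfl
      · exact h0.symm
      · exact h1.symm
      · exact h1
      · exact h2.symm
      · exact rfl
      · exact h0
      · exact rfl
      · exact h2
    · refine fin (Equiv.swap 0 1) ?_
      intro i j
      fin_cases i <;> fin_cases j
      · exact h0.symm
      · exact rfl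
      · exact h1.symm
      · exact rfl
      · exact h0
      · exact h2.symm
      · exact h2
      · exact h1
      · exact rfl
    · refine fin (Equiv.swap 0 2) ?_
      intro i j
      fin_cases i <;> fin_cases j
      · exact h0.symm
      · exact h1.symm
      · exact rfl
      · exact h2.symm
      · exact rfl
      · exact h1
      · exact rfl
      · exact h2
      · exact h0
    · refine fin (finRotate 3) ?_
      intro i j
      fin_cases i <;> fin_cases j
      · exact h0.symm
      · exact rfl
      · exact h1.symm
      · exact h2.symm
      · exact h1
      · exact rfl
      · exact rfl
      · exact h0
      · exact h2
    · refine fin ((finRotate 3).symm) ?_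
      intro i j
      fin_cases i <;> fin_cases j
      · exact h0.symm
      · exact h1.symm
      · exact rfl
      · exact rfl
      · exact h2.symm
      · exact h0
      · exact h2
      · exact rfl
      · exact h1

/-- If `G` is one of `C₄`, `C₆`, `K₄`, `K₃,₃`, then
`χ'_D(G⁺) = Δ(G) + 2`. -/
theorem chromaticDistinguishingIndex_endlineGraph_of_exceptional
    {V : Type*} [Fintype V] [DecidableEq V] (G : SimpleGraph V) [DecidableRel G.Adj]
    (hexc : Nonempty (G ≃g cycleGraph 4) ∨ Nonempty (G ≃g cycleGraph 6) ∨
      Nonempty (G ≃g (⊤ : SimpleGraph (Fin 4))) ∨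
      Nonempty (G ≃g completeBipartiteGraph (Fin 3) (Fin 3))) :
    distinguishingChromaticIndex (endlineGraph G) = G.maxDegree + 2 := by
  rcases hexc with ⟨⟨e⟩⟩ | ⟨⟨e⟩⟩ | ⟨⟨e⟩⟩ | ⟨⟨e⟩⟩
  · exact main_of_data (exc_C4.transport e)
  · exact main_of_data (exc_C6.transport e)
  · exact main_of_data (exc_K4.transport e)
  · exact main_of_data (exc_K33.transport e)
end
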